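/- arXiv:2212.07974 — 2 statements merged into one kernel-verified Lean document; each statement's English description precedes it below -/
import Mathlib

section
/- For every α ∈ (0,1), one has lim_{z → −∞} z^6 · (2·E_α'(z)² − E_α(z)·E_α''(z)) = 2·(1/Γ(1−2α)² − 1/(Γ(1−α)·Γ(1−3α))), where reciprocals of Gamma at its poles are interpreted as 0. -/
/-- The two-parameter Mittag-Leffler function `E_{α,β}(z) = ∑ z^n / Γ(β + αn)`;
the classical Mittag-Leffler function is `E_α = E_{α,1}`. -/
noncomputable def mittagLeffler (α β z : ℝ) : ℝ :=
  ∑' n : ℕ, z ^ n / Real.Gamma (β + α * n)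

/-!
For `β > 1` the inverse Laplace transform of `w ^ (-s)` turns the series of `E_{α,β}` into the
integral of `e^w w^(-β) / (1 - z w^(-α))` over the line `Re w = 1`, first for `|z| < 1` and then, by
the identity theorem, on every sector around the negative real axis on which `1 - z w^(-α)` stays
away from zero. Hence `E_{α,β}` is bounded near the negative real axis. The Euler relation
`α z E_{α,β}' = E_{α,β-1} - (β-1) E_{α,β}` and Cauchy's estimate, which bounds `z f'` on a thinner
sector when `f` is bounded, extend this to all real `β`.

Splitting off the first three terms of the series gives the exact expansion
`E_{α,1-3α}(z) = 1/Γ(1-3α) + z/Γ(1-2α) + z²/Γ(1-α) + z³ E_{α,1}(z)`, and `e = E_{α,1-3α}`, `z e'`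
and `z² e''` all tend to `0` as `z → -∞`. In the resulting expansion of `2 E'² - E E''` the terms of
order `z⁻⁴` and `z⁻⁵` cancel.
-/

open Filter MeasureTheory Set Topology

theorem aestronglyMeasurable_deriv_of_differentiableAt {X 𝕜 E : Type*} [MeasurableSpace X]
    {μ : Measure X} [NontriviallyNormedField 𝕜] [NormedAddCommGroup E] [NormedSpace 𝕜 E]
    {U : Set 𝕜} {z₀ : 𝕜} (hU : U ∈ 𝓝 z₀) {F : 𝕜 → X → E}
    (hF_meas : ∀ z ∈ U, AEStronglyMeasurable (F z) μ)
    (h_diff : ∀ᵐ x ∂μ, DifferentiableAt 𝕜 (F · x) z₀) :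
    AEStronglyMeasurable (fun x ↦ deriv (F · x) z₀) μ := by
  have hclosure : z₀ ∈ closure (U \ {z₀}) := by
    rw [mem_closure_iff_nhdsWithin_neBot, sdiff_eq,
      nhdsWithin_inter_of_mem (mem_nhdsWithin_of_mem_nhds hU)]
    infer_instance
  obtain ⟨u, hu_mem, hu⟩ := mem_closure_iff_seq_limit.1 hclosure
  refine aestronglyMeasurable_of_tendsto_ae atTop (f := fun n x ↦ slope (F · x) z₀ (u n))
    (fun n ↦ ?_) ?_
  · simp only [slope_def_module]
    exact ((hF_meas _ (hu_mem n).1).sub (hF_meas _ (mem_of_mem_nhds hU))).const_smul _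
  · filter_upwards [h_diff] with x hx
    exact hx.hasDerivAt.tendsto_slope.comp
      (tendsto_nhdsWithin_iff.2 ⟨hu, .of_forall fun n ↦ (hu_mem n).2⟩)

theorem differentiableOn_integral_of_norm_le {X E : Type*} [MeasurableSpace X]
    {μ : Measure X} [NormedAddCommGroup E] [NormedSpace ℂ E] {U : Set ℂ} (hU : IsOpen U)
    {F : ℂ → X → E} {bound : X → ℝ} (hF_meas : ∀ z ∈ U, AEStronglyMeasurable (F z) μ)
    (h_bound : ∀ᵐ x ∂μ, ∀ z ∈ U, ‖F z x‖ ≤ bound x) (h_int : Integrable bound μ)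
    (h_diff : ∀ᵐ x ∂μ, DifferentiableOn ℂ (F · x) U) :
    DifferentiableOn ℂ (fun z ↦ ∫ x, F z x ∂μ) U := by
  intro z₀ hz₀
  obtain ⟨R, hR, hRU⟩ : ∃ R > 0, Metric.ball z₀ (R + R) ⊆ U := by
    obtain ⟨ε, hε, h⟩ := Metric.isOpen_iff.1 hU z₀ hz₀
    exact ⟨ε / 2, half_pos hε, by rwa [add_halves]⟩
  have hsubset {z : ℂ} (hz : z ∈ Metric.ball z₀ R) : Metric.closedBall z R ⊆ U :=
    (Metric.closedBall_subset_ball' (by gcongr; exact hz)).trans hRU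
  have hballU : Metric.ball z₀ R ⊆ U := fun z hz ↦ hsubset hz (Metric.mem_closedBall_self hR.le)
  have hderiv : ∀ᵐ x ∂μ, ∀ z ∈ U, HasDerivAt (F · x) (deriv (F · x) z) z := by
    filter_upwards [h_diff] with x hx z hz
    exact (hx.differentiableAt (hU.mem_nhds hz)).hasDerivAt
  have hderiv_meas : AEStronglyMeasurable (fun x ↦ deriv (F · x) z₀) μ :=
    aestronglyMeasurable_deriv_of_differentiableAt (hU.mem_nhds hz₀) hF_meas
      (hderiv.mono fun x hx ↦ (hx z₀ hz₀).differentiableAt)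
  refine (hasDerivAt_integral_of_dominated_loc_of_deriv_le
    (F' := fun z x ↦ deriv (F · x) z) (Metric.ball_mem_nhds z₀ hR)
    (eventually_of_mem (hU.mem_nhds hz₀) hF_meas) ?_ hderiv_meas ?_ (h_int.div_const R)
    ?_).2.differentiableAt.differentiableWithinAt
  · exact h_int.mono' (hF_meas z₀ hz₀) (h_bound.mono fun x hx ↦ hx z₀ hz₀)
  · -- Cauchy's estimate dominates the derivative.
    filter_upwards [h_bound, h_diff] with x hbx hdx z hz
    exact Complex.norm_deriv_le_of_forall_mem_sphere_norm_le hR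
      (hdx.diffContOnCl_ball (hsubset hz))
      fun w hw ↦ hbx w (hsubset hz (Metric.sphere_subset_closedBall hw))
  · exact hderiv.mono fun x hx z hz ↦ hx z (hballU hz)

section Laplace

variable {a r : ℂ}

theorem norm_cpow_mul_exp_neg_mul {t : ℝ} (ht : 0 < t) :
    ‖(t : ℂ) ^ a * Complex.exp (-(r * t))‖ = t ^ a.re * Real.exp (-(r.re * t)) := by
  simp [Complex.norm_exp, Complex.norm_cpow_eq_rpow_re_of_pos ht]

theorem aestronglyMeasurable_cpow_mul_exp_neg_mul :
    AEStronglyMeasurable (fun t : ℝ ↦ (t : ℂ) ^ a * Complex.exp (-(r * t)))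
      (volume.restrict (Ioi 0)) := by
  apply Measurable.aestronglyMeasurable
  fun_prop

theorem integrableOn_rpow_mul_exp_neg_mul {σ b : ℝ} (hσ : -1 < σ) (hb : 0 < b) :
    IntegrableOn (fun t : ℝ ↦ t ^ σ * Real.exp (-(b * t))) (Ioi 0) := by
  simpa using integrableOn_rpow_mul_exp_neg_mul_rpow hσ one_pos hb

theorem integrableOn_cpow_mul_exp_neg_mul (ha : -1 < a.re) (hr : 0 < r.re) :
    IntegrableOn (fun t : ℝ ↦ (t : ℂ) ^ a * Complex.exp (-(r * t))) (Ioi 0) := by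
  refine (integrableOn_rpow_mul_exp_neg_mul ha hr).mono'
    aestronglyMeasurable_cpow_mul_exp_neg_mul ?_
  filter_upwards [ae_restrict_mem measurableSet_Ioi] with t ht
  exact (norm_cpow_mul_exp_neg_mul ht).le

theorem differentiableOn_integral_cpow_mul_exp_neg_mul (ha : -1 < a.re) :
    DifferentiableOn ℂ (fun r : ℂ ↦ ∫ t : ℝ in Ioi 0, (t : ℂ) ^ a * Complex.exp (-(r * t)))
      {r | 0 < r.re} := by
  intro r (hr : 0 < r.re)
  have hopen : IsOpen {w : ℂ | r.re / 2 < w.re} :=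
    isOpen_lt continuous_const Complex.continuous_re
  refine ((differentiableOn_integral_of_norm_le hopen
    (fun w _ ↦ aestronglyMeasurable_cpow_mul_exp_neg_mul) ?_
    (integrableOn_rpow_mul_exp_neg_mul ha (half_pos hr)) ?_).differentiableAt
    (hopen.mem_nhds (half_lt_self hr))).differentiableWithinAt
  · filter_upwards [ae_restrict_mem measurableSet_Ioi] with t (ht : 0 < t) w (hw : _ < w.re)
    rw [norm_cpow_mul_exp_neg_mul ht]
    gcongr
  · exact .of_forall fun t ↦ by fun_prop

theorem integral_cpow_mul_exp_neg_mul_Ioi_of_re_pos (ha : 0 < a.re) (hr : 0 < r.re) :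
    ∫ t : ℝ in Ioi 0, (t : ℂ) ^ (a - 1) * Complex.exp (-(r * t)) =
      r ^ (-a) * Complex.Gamma a := by
  have hopen : IsOpen {r : ℂ | 0 < r.re} := isOpen_lt continuous_const Complex.continuous_re
  have hleft := (differentiableOn_integral_cpow_mul_exp_neg_mul
    (a := a - 1) (by simpa)).analyticOnNhd hopen
  have hright : AnalyticOnNhd ℂ (fun r : ℂ ↦ r ^ (-a) * Complex.Gamma a) {r | 0 < r.re} :=
    DifferentiableOn.analyticOnNhd (fun r hr ↦ ((differentiableAt_id.cpow_const
      (Or.inl hr)).mul_const _).differentiableWithinAt) hopen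
  have hreal {x : ℝ} (hx : 0 < x) :
      ∫ t : ℝ in Ioi 0, (t : ℂ) ^ (a - 1) * Complex.exp (-(x * t)) =
        (x : ℂ) ^ (-a) * Complex.Gamma a := by
    rw [Complex.integral_cpow_mul_exp_neg_mul_Ioi ha hx, one_div,
      Complex.inv_cpow _ _ (by simp [Complex.arg_ofReal_of_nonneg hx.le, Real.pi_ne_zero.symm]),
      Complex.cpow_neg]
  refine hleft.eqOn_of_preconnected_of_frequently_eq hright
    (convex_halfSpace_re_gt 0).isPreconnected (z₀ := 1) (by simp) ?_ hr
  have hto : Tendsto ((↑) : ℝ → ℂ) (𝓝[≠] 1) (𝓝[≠] 1) := by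
    simpa using (hasDerivAt_id (1 : ℝ)).ofReal_comp.tendsto_nhdsNE one_ne_zero
  exact hto.frequently (eventually_nhdsWithin_of_eventually_nhds
    ((lt_mem_nhds one_pos).mono fun x hx ↦ hreal hx)).frequently

end Laplace

/-- The parametrization `ξ ↦ 1 + 2πiξ` of the line `Re w = 1`; with this scaling the integral of
the Laplace inversion formula is an inverse Fourier transform. -/
noncomputable def verticalLine (ξ : ℝ) : ℂ := 1 + 2 * Real.pi * ξ * Complex.I

section verticalLine

variable (ξ : ℝ) {s : ℂ}

@[simp]
theorem verticalLine_re : (verticalLine ξ).re = 1 := by simp [verticalLine]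

theorem verticalLine_mem_slitPlane : verticalLine ξ ∈ Complex.slitPlane :=
  Or.inl (by simp)

theorem verticalLine_ne_zero : verticalLine ξ ≠ 0 :=
  Complex.slitPlane_ne_zero (verticalLine_mem_slitPlane ξ)

@[fun_prop]
theorem continuous_verticalLine : Continuous verticalLine := by
  unfold verticalLine
  fun_prop

theorem continuous_verticalLine_cpow (s : ℂ) : Continuous fun ξ ↦ verticalLine ξ ^ s :=
  continuous_verticalLine.cpow continuous_const verticalLine_mem_slitPlane

theorem one_le_norm_verticalLine : 1 ≤ ‖verticalLine ξ‖ := by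
  simpa using Complex.re_le_norm (verticalLine ξ)

theorem one_add_sq_le_norm_verticalLine_sq : 1 + ξ ^ 2 ≤ ‖verticalLine ξ‖ ^ 2 := by
  have hpi : 1 ≤ (2 * Real.pi) ^ 2 := one_le_pow₀ (by linarith [Real.pi_gt_three])
  have h : ‖verticalLine ξ‖ ^ 2 = 1 + (2 * Real.pi) ^ 2 * ξ ^ 2 := by
    rw [Complex.sq_norm, Complex.normSq_apply]
    simp [verticalLine]
    ring
  rw [h]
  gcongr
  exact le_mul_of_one_le_left (sq_nonneg ξ) hpi

theorem norm_exp_verticalLine : ‖Complex.exp (verticalLine ξ)‖ = Real.exp 1 := by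
  simp [Complex.norm_exp]

theorem integrable_verticalLine_cpow_neg (hs : 1 < s.re) :
    Integrable fun ξ ↦ verticalLine ξ ^ (-s) := by
  have hJ : Integrable fun ξ : ℝ ↦ (1 + ‖ξ‖ ^ 2) ^ (-s.re / 2) :=
    integrable_rpow_neg_one_add_norm_sq (by simpa)
  refine (hJ.mul_const (Real.exp (Real.pi * |s.im|))).mono'
    (continuous_verticalLine_cpow _).aestronglyMeasurable (.of_forall fun ξ ↦ ?_)
  have harg : |(verticalLine ξ).arg * s.im| ≤ Real.pi * |s.im| := by
    rw [abs_mul]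
    gcongr
    exact Complex.abs_arg_le_pi _
  calc ‖verticalLine ξ ^ (-s)‖
      = ‖verticalLine ξ‖ ^ (-s.re) * Real.exp ((verticalLine ξ).arg * s.im) := by
        rw [Complex.norm_cpow_of_ne_zero (verticalLine_ne_zero ξ), div_eq_mul_inv, ← Real.exp_neg]
        simp
    _ = (‖verticalLine ξ‖ ^ 2) ^ (-s.re / 2) * Real.exp ((verticalLine ξ).arg * s.im) := by
        rw [← Real.rpow_natCast, ← Real.rpow_mul (norm_nonneg _)]
        congr 2
        push_cast
        ring
    _ ≤ (1 + ‖ξ‖ ^ 2) ^ (-s.re / 2) * Real.exp (Real.pi * |s.im|) := by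
        gcongr ?_ * Real.exp ?_
        · refine Real.rpow_le_rpow_of_nonpos (by positivity) ?_ (by linarith)
          simpa using one_add_sq_le_norm_verticalLine_sq ξ
        · exact (le_abs_self _).trans harg

open scoped FourierTransform in
theorem fourier_indicator_cpow_mul_exp_neg (hs : 0 < s.re) :
    𝓕 ((Ioi 0).indicator fun t : ℝ ↦ (t : ℂ) ^ (s - 1) * Complex.exp (-t)) =
      fun ξ ↦ verticalLine ξ ^ (-s) * Complex.Gamma s := by
  funext ξ
  rw [Real.fourier_real_eq_integral_exp_smul,
    ← integral_cpow_mul_exp_neg_mul_Ioi_of_re_pos hs (by simp : 0 < (verticalLine ξ).re),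
    ← integral_indicator measurableSet_Ioi]
  congr 1 with t
  by_cases ht : t ∈ Ioi 0
  · simp only [indicator_of_mem ht, smul_eq_mul]
    rw [mul_left_comm, ← Complex.exp_add]
    congr 2
    simp only [verticalLine]
    push_cast
    ring
  · simp only [indicator_of_notMem ht, smul_zero]

theorem continuousAt_indicator_cpow_mul_exp_neg {x : ℝ} (hx : 0 < x) :
    ContinuousAt ((Ioi 0).indicator fun t : ℝ ↦ (t : ℂ) ^ (s - 1) * Complex.exp (-t)) x := by
  have hcont : ContinuousAt (fun t : ℝ ↦ (t : ℂ) ^ (s - 1) * Complex.exp (-t)) x :=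
    (Complex.continuousAt_ofReal_cpow_const _ _ (Or.inr hx.ne')).mul (by fun_prop)
  exact hcont.congr (eventuallyEq_of_mem (Ioi_mem_nhds hx) (eqOn_indicator.symm))

open scoped FourierTransform in
theorem integral_exp_mul_cpow_neg_verticalLine (hs : 1 < s.re) :
    ∫ ξ, Complex.exp (verticalLine ξ) * verticalLine ξ ^ (-s) = (Complex.Gamma s)⁻¹ := by
  have hs₀ : 0 < s.re := one_pos.trans hs
  set f : ℝ → ℂ := (Ioi 0).indicator fun t : ℝ ↦ (t : ℂ) ^ (s - 1) * Complex.exp (-t)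
  have hf_int : Integrable f := by
    rw [integrable_indicator_iff measurableSet_Ioi]
    simpa using integrableOn_cpow_mul_exp_neg_mul (a := s - 1) (r := 1) (by simpa) (by simp)
  have hf_fourier : 𝓕 f = fun ξ ↦ verticalLine ξ ^ (-s) * Complex.Gamma s :=
    fourier_indicator_cpow_mul_exp_neg hs₀
  have hf_fourier_int : Integrable (𝓕 f) :=
    hf_fourier ▸ (integrable_verticalLine_cpow_neg hs).mul_const _
  have hinv : 𝓕⁻ (𝓕 f) 1 = Complex.exp (-1) := by
    rw [hf_int.fourierInv_fourier_eq hf_fourier_int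
      (continuousAt_indicator_cpow_mul_exp_neg one_pos)]
    simp [f]
  have hline (ξ : ℝ) : Complex.exp (verticalLine ξ) * verticalLine ξ ^ (-s) =
      Complex.exp 1 * (Complex.Gamma s)⁻¹ *
        (Complex.exp (↑(2 * Real.pi * inner ℝ ξ 1) * Complex.I) •
          (verticalLine ξ ^ (-s) * Complex.Gamma s)) := by
    have hexp : Complex.exp (verticalLine ξ) =
        Complex.exp 1 * Complex.exp (↑(2 * Real.pi * inner ℝ ξ 1) * Complex.I) := by
      rw [← Complex.exp_add]
      simp [verticalLine]
    have hGamma := Complex.Gamma_ne_zero_of_re_pos hs₀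
    rw [hexp, smul_eq_mul]
    field
  rw [hf_fourier, Real.fourierInv_eq'] at hinv
  simp_rw [hline]
  rw [integral_const_mul, hinv, mul_right_comm, ← Complex.exp_add]
  simp

end verticalLine

theorem exp_neg_mul_rpow_le_Gamma {M s : ℝ} (hM : 0 ≤ M) (hs : 1 ≤ s) :
    Real.exp (-(M + 1)) * M ^ (s - 1) ≤ Real.Gamma s := by
  have hint := Real.GammaIntegral_convergent (one_pos.trans_le hs)
  have hsub : Ioc M (M + 1) ⊆ Ioi 0 := fun t ht ↦ hM.trans_lt ht.1
  rw [Real.Gamma_eq_integral (one_pos.trans_le hs)]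
  calc Real.exp (-(M + 1)) * M ^ (s - 1)
      = ∫ _ in Ioc M (M + 1), Real.exp (-(M + 1)) * M ^ (s - 1) := by simp
    _ ≤ ∫ t in Ioc M (M + 1), Real.exp (-t) * t ^ (s - 1) := by
        refine setIntegral_mono_on (integrableOn_const (by simp)) (hint.mono_set hsub)
          measurableSet_Ioc fun t ht ↦ ?_
        gcongr
        exacts [ht.2, ht.1.le]
    _ ≤ ∫ t in Ioi 0, Real.exp (-t) * t ^ (s - 1) := by
        refine setIntegral_mono_set hint ?_ hsub.eventuallyLE
        filter_upwards [ae_restrict_mem measurableSet_Ioi] with t (ht : 0 < t)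
        positivity

theorem pow_isBigO_Gamma_add_mul {α q : ℝ} (hα : 0 < α) (hq : 0 < q) (β : ℝ) :
    (fun n : ℕ ↦ q ^ n) =O[atTop] fun n ↦ Real.Gamma (β + α * n) := by
  set M := q ^ α⁻¹
  have hM : 0 < M := by positivity
  have hargs : ∀ᶠ n : ℕ in atTop, 1 ≤ β + α * n :=
    (tendsto_atTop_add_const_left _ _
      (tendsto_natCast_atTop_atTop.const_mul_atTop hα)).eventually_ge_atTop 1
  refine .of_bound (M ^ (1 - β) * Real.exp (M + 1)) (hargs.mono fun n hn ↦ ?_)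
  have hpow : q ^ n = M ^ (1 - β) * M ^ (β + α * n - 1) := by
    rw [← Real.rpow_add hM, ← Real.rpow_mul hq.le, ← Real.rpow_natCast]
    congr 1
    field
  have hGamma := exp_neg_mul_rpow_le_Gamma hM.le hn
  calc ‖q ^ n‖ = M ^ (1 - β) * M ^ (β + α * n - 1) := by
        rw [Real.norm_of_nonneg (by positivity), hpow]
    _ = M ^ (1 - β) * Real.exp (M + 1) *
          (Real.exp (-(M + 1)) * M ^ (β + α * n - 1)) := by
        rw [Real.exp_neg]
        field
    _ ≤ M ^ (1 - β) * Real.exp (M + 1) * ‖Real.Gamma (β + α * n)‖ := by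
        gcongr
        exact hGamma.trans (le_abs_self _)

theorem inv_Gamma_sub_one (s : ℝ) : (Real.Gamma (s - 1))⁻¹ = (s - 1) * (Real.Gamma s)⁻¹ := by
  rcases eq_or_ne (s - 1) 0 with h | h
  · simp [h]
  · have hrec : Real.Gamma s = (s - 1) * Real.Gamma (s - 1) := by
      simpa using Real.Gamma_add_one h
    rw [hrec]
    field

/-- The entire extension of the two-parameter Mittag-Leffler function `E_{α,β}` to complex
arguments; the parameters stay real. -/
noncomputable def complexMittagLeffler (α β : ℝ) (z : ℂ) : ℂ :=
  ∑' n : ℕ, z ^ n / (Real.Gamma (β + α * n) : ℂ)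

theorem ofReal_mittagLeffler (α β x : ℝ) :
    (mittagLeffler α β x : ℂ) = complexMittagLeffler α β x := by
  simp [mittagLeffler, complexMittagLeffler, Complex.ofReal_tsum]

section Series

variable {α : ℝ}

theorem summable_pow_div_Gamma (hα : 0 < α) (β x : ℝ) :
    Summable fun n : ℕ ↦ x ^ n / Real.Gamma (β + α * n) := by
  have hgeom : Summable fun n : ℕ ↦ (x / (2 * |x| + 1)) ^ n := by
    refine summable_geometric_of_abs_lt_one ?_
    rw [abs_div, abs_of_pos (a := 2 * |x| + 1) (by positivity), div_lt_one (by positivity)]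
    linarith [abs_nonneg x]
  refine summable_of_isBigO_nat hgeom ?_
  simp only [div_eq_mul_inv, mul_pow, inv_pow]
  refine (Asymptotics.isBigO_refl _ _).mul
    ((pow_isBigO_Gamma_add_mul hα (by positivity) β).inv_rev (.of_forall fun n hn ↦ ?_))
  exact absurd hn (by positivity)

theorem norm_pow_div_Gamma_le {z : ℂ} {R : ℝ} (hz : ‖z‖ ≤ R) (β : ℝ) (n : ℕ) :
    ‖z ^ n / (Real.Gamma (β + α * n) : ℂ)‖ ≤ ‖R ^ n / Real.Gamma (β + α * n)‖ := by
  simp only [norm_div, norm_pow, Complex.norm_real]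
  gcongr
  exact hz.trans (le_abs_self R)

theorem hasSum_complexMittagLeffler (hα : 0 < α) (β : ℝ) (z : ℂ) :
    HasSum (fun n : ℕ ↦ z ^ n / (Real.Gamma (β + α * n) : ℂ)) (complexMittagLeffler α β z) :=
  (Summable.of_norm_bounded (summable_pow_div_Gamma hα β ‖z‖).norm
    (norm_pow_div_Gamma_le le_rfl β)).hasSum

theorem differentiable_complexMittagLeffler (hα : 0 < α) (β : ℝ) :
    Differentiable ℂ (complexMittagLeffler α β) := by
  intro z
  have hz : z ∈ Metric.ball (0 : ℂ) (‖z‖ + 1) := by simp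
  exact (Complex.differentiableOn_tsum_of_summable_norm
    (summable_pow_div_Gamma hα β (‖z‖ + 1)).norm (fun n ↦ by fun_prop) Metric.isOpen_ball
    fun n w hw ↦ norm_pow_div_Gamma_le (mem_ball_zero_iff.1 hw).le β n).differentiableAt
    (Metric.isOpen_ball.mem_nhds hz)

theorem hasSum_mul_deriv_complexMittagLeffler (hα : 0 < α) (β : ℝ) (z : ℂ) :
    HasSum (fun n : ℕ ↦ n * (z ^ n / (Real.Gamma (β + α * n) : ℂ)))
      (z * deriv (complexMittagLeffler α β) z) := by
  have hz : z ∈ Metric.ball (0 : ℂ) (‖z‖ + 1) := by simp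
  refine ((Complex.hasSum_deriv_of_summable_norm
    (F := fun (n : ℕ) z ↦ z ^ n / (Real.Gamma (β + α * n) : ℂ))
    (summable_pow_div_Gamma hα β (‖z‖ + 1)).norm
    (fun n ↦ by fun_prop) Metric.isOpen_ball
    (fun n w hw ↦ norm_pow_div_Gamma_le (mem_ball_zero_iff.1 hw).le β n) hz).mul_left
    z).congr_fun fun n ↦ ?_
  rcases n with _ | n
  · simp
  · simp only [deriv_div_const, deriv_pow_field, Nat.add_sub_cancel]
    ring

theorem mul_deriv_complexMittagLeffler (hα : 0 < α) (β : ℝ) (z : ℂ) :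
    α * (z * deriv (complexMittagLeffler α β) z) =
      complexMittagLeffler α (β - 1) z - (β - 1) * complexMittagLeffler α β z := by
  refine ((hasSum_mul_deriv_complexMittagLeffler hα β z).mul_left (α : ℂ)).unique
    (((hasSum_complexMittagLeffler hα (β - 1) z).sub
      ((hasSum_complexMittagLeffler hα β z).mul_left (β - 1 : ℂ))).congr_fun fun n ↦ ?_)
  have hrec : ((Real.Gamma (β - 1 + α * n) : ℂ))⁻¹ =
      (β - 1 + α * n) * (Real.Gamma (β + α * n) : ℂ)⁻¹ := by
    rw [sub_add_eq_add_sub, sub_add_eq_add_sub]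
    exact_mod_cast inv_Gamma_sub_one (β + α * n)
  rw [div_eq_mul_inv, div_eq_mul_inv, hrec]
  ring

theorem mittagLeffler_eq_sum_range_add (hα : 0 < α) (β x : ℝ) (N : ℕ) :
    mittagLeffler α β x = ∑ n ∈ Finset.range N, x ^ n / Real.Gamma (β + α * n) +
      x ^ N * mittagLeffler α (β + α * N) x := by
  rw [mittagLeffler, ← (summable_pow_div_Gamma hα β x).sum_add_tsum_nat_add N, mittagLeffler,
    ← tsum_mul_left]
  congr 2 with n
  rw [pow_add, mul_comm (x ^ n), mul_div_assoc]
  congr 3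
  push_cast
  ring

end Series

/-- The integrand of the contour integral representation
`E_{α,β}(z) = (2πi)⁻¹ ∫ e^w w^(-β) / (1 - z w^(-α)) dw` along `verticalLine`. -/
noncomputable def mittagLefflerKernel (α β : ℝ) (z : ℂ) (ξ : ℝ) : ℂ :=
  Complex.exp (verticalLine ξ) * verticalLine ξ ^ (-(β : ℂ)) /
    (1 - z * verticalLine ξ ^ (-(α : ℂ)))

section Kernel

variable {α β : ℝ} {z : ℂ}

theorem measurable_mittagLefflerKernel (α β : ℝ) (z : ℂ) :
    Measurable (mittagLefflerKernel α β z) := by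
  unfold mittagLefflerKernel
  fun_prop

theorem norm_mittagLefflerKernel_le {ξ δ : ℝ} (hδ : 0 < δ)
    (hz : δ ≤ ‖1 - z * verticalLine ξ ^ (-(α : ℂ))‖) :
    ‖mittagLefflerKernel α β z ξ‖ ≤ Real.exp 1 * ‖verticalLine ξ ^ (-(β : ℂ))‖ / δ := by
  rw [mittagLefflerKernel, norm_div, norm_mul, norm_exp_verticalLine]
  gcongr

theorem norm_verticalLine_cpow_neg_le_one (hα : 0 ≤ α) (ξ : ℝ) :
    ‖verticalLine ξ ^ (-(α : ℂ))‖ ≤ 1 := by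
  rw [← Complex.ofReal_neg, Complex.norm_cpow_real]
  exact Real.rpow_le_one_of_one_le_of_nonpos (one_le_norm_verticalLine ξ) (neg_nonpos.2 hα)

theorem verticalLine_cpow_neg_add_mul (ξ : ℝ) (n : ℕ) :
    verticalLine ξ ^ (-((β + α * n : ℝ) : ℂ)) =
      verticalLine ξ ^ (-(β : ℂ)) * (verticalLine ξ ^ (-(α : ℂ))) ^ n := by
  rw [← Complex.cpow_nat_mul, ← Complex.cpow_add _ _ (verticalLine_ne_zero ξ)]
  congr 1
  push_cast
  ring

theorem hasSum_mittagLefflerKernel (hα : 0 ≤ α) (hz : ‖z‖ < 1) (ξ : ℝ) :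
    HasSum (fun n : ℕ ↦ z ^ n *
        (Complex.exp (verticalLine ξ) * verticalLine ξ ^ (-((β + α * n : ℝ) : ℂ))))
      (mittagLefflerKernel α β z ξ) := by
  have hratio : ‖z * verticalLine ξ ^ (-(α : ℂ))‖ < 1 := by
    rw [norm_mul]
    exact mul_lt_one_of_nonneg_of_lt_one_left (norm_nonneg z) hz
      (norm_verticalLine_cpow_neg_le_one hα ξ)
  refine ((hasSum_geometric_of_norm_lt_one hratio).mul_left
    (Complex.exp (verticalLine ξ) * verticalLine ξ ^ (-(β : ℂ)))).congr_fun fun n ↦ ?_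
  rw [verticalLine_cpow_neg_add_mul]
  ring

theorem norm_exp_mul_cpow_verticalLine_le (hα : 0 ≤ α) (β ξ : ℝ) (n : ℕ) :
    ‖Complex.exp (verticalLine ξ) * verticalLine ξ ^ (-((β + α * n : ℝ) : ℂ))‖ ≤
      Real.exp 1 * ‖verticalLine ξ ^ (-(β : ℂ))‖ := by
  rw [verticalLine_cpow_neg_add_mul, norm_mul, norm_mul, norm_pow, norm_exp_verticalLine]
  gcongr
  exact mul_le_of_le_one_right (norm_nonneg _)
    (pow_le_one₀ (norm_nonneg _) (norm_verticalLine_cpow_neg_le_one hα ξ))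

theorem complexMittagLeffler_eq_integral_of_norm_lt_one (hα : 0 < α) (hβ : 1 < β)
    (hz : ‖z‖ < 1) :
    complexMittagLeffler α β z = ∫ ξ, mittagLefflerKernel α β z ξ := by
  set F : ℕ → ℝ → ℂ := fun n ξ ↦ z ^ n *
    (Complex.exp (verticalLine ξ) * verticalLine ξ ^ (-((β + α * n : ℝ) : ℂ)))
  have hF_norm (n : ℕ) (ξ : ℝ) :
      ‖F n ξ‖ ≤ ‖z‖ ^ n * (Real.exp 1 * ‖verticalLine ξ ^ (-(β : ℂ))‖) := by
    rw [norm_mul, norm_pow]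
    gcongr
    exact norm_exp_mul_cpow_verticalLine_le hα.le β ξ n
  have hbound (n : ℕ) :
      Integrable fun ξ ↦ ‖z‖ ^ n * (Real.exp 1 * ‖verticalLine ξ ^ (-(β : ℂ))‖) :=
    ((integrable_verticalLine_cpow_neg (by simpa)).norm.const_mul _).const_mul _
  have hF_int (n : ℕ) : Integrable (F n) := by
    refine (hbound n).mono' ?_ (.of_forall (hF_norm n))
    exact Measurable.aestronglyMeasurable (by fun_prop)
  have hF_sum : Summable fun n ↦ ∫ ξ, ‖F n ξ‖ := by
    refine .of_nonneg_of_le (fun n ↦ by positivity) (fun n ↦ ?_)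
      ((summable_geometric_of_lt_one (norm_nonneg z) hz).mul_right
        (∫ ξ, Real.exp 1 * ‖verticalLine ξ ^ (-(β : ℂ))‖))
    rw [← integral_const_mul]
    exact integral_mono (hF_int n).norm (hbound n) (hF_norm n)
  have hF_integral (n : ℕ) : ∫ ξ, F n ξ = z ^ n / (Real.Gamma (β + α * n) : ℂ) := by
    have hs : 1 < ((β + α * n : ℝ) : ℂ).re := by
      rw [Complex.ofReal_re]
      exact lt_add_of_lt_of_nonneg hβ (by positivity)
    rw [integral_const_mul, integral_exp_mul_cpow_neg_verticalLine hs, Complex.Gamma_ofReal,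
      div_eq_mul_inv]
  have hsum := hasSum_integral_of_summable_integral_norm hF_int hF_sum
  have hF_tsum (ξ : ℝ) : ∑' n, F n ξ = mittagLefflerKernel α β z ξ :=
    (hasSum_mittagLefflerKernel hα.le hz ξ).tsum_eq
  simp_rw [hF_integral, hF_tsum] at hsum
  exact (hasSum_complexMittagLeffler hα β z).unique hsum

end Kernel

/-- The open sector around the negative real axis with half-opening angle `arctan k`. -/
def negSector (k : ℝ) : Set ℂ := {z | |z.im| < k * -z.re}

/-- The filter generated by the sectors `negSector k`, `k > 0`: a property holds eventually if it
holds on some, possibly thin, sector around the negative real axis. -/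
def negSectors : Filter ℂ := ⨅ k ∈ Ioi (0 : ℝ), 𝓟 (negSector k)

section negSector

variable {k : ℝ} {z : ℂ}

theorem re_neg_of_mem_negSector (hk : 0 ≤ k) (hz : z ∈ negSector k) : z.re < 0 := by
  have h : 0 < k * -z.re := (abs_nonneg z.im).trans_lt hz
  exact neg_pos.1 (pos_of_mul_pos_right h hk)

theorem ofReal_mem_negSector (hk : 0 < k) {x : ℝ} (hx : x < 0) : (x : ℂ) ∈ negSector k := by
  simpa [negSector] using mul_neg_of_pos_of_neg hk hx

theorem isOpen_negSector (k : ℝ) : IsOpen (negSector k) :=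
  isOpen_lt (by fun_prop) (by fun_prop)

theorem convex_negSector (k : ℝ) : Convex ℝ (negSector k) := by
  have h : negSector k =
      {z | (k • Complex.reLm + Complex.imLm) z < 0} ∩
        {z | (k • Complex.reLm - Complex.imLm) z < 0} := by
    ext z
    simp only [negSector, mem_ofPred_eq, mem_inter_iff, abs_lt, LinearMap.add_apply,
      LinearMap.sub_apply, LinearMap.smul_apply, Complex.reLm_coe, Complex.imLm_coe, smul_eq_mul]
    constructor <;> rintro ⟨h₁, h₂⟩ <;> constructor <;> linarith
  rw [h]
  exact (convex_halfSpace_lt (LinearMap.isLinear _) 0).inter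
    (convex_halfSpace_lt (LinearMap.isLinear _) 0)

theorem negSector_mono {k' : ℝ} (hk : 0 ≤ k) (h : k ≤ k') : negSector k ⊆ negSector k' :=
  fun _z hz ↦ hz.trans_le (mul_le_mul_of_nonneg_right h
    (neg_nonneg.2 (re_neg_of_mem_negSector hk hz).le))

theorem hasBasis_negSectors : negSectors.HasBasis (fun k : ℝ ↦ 0 < k) negSector :=
  hasBasis_biInf_principal
    (fun k (hk : 0 < k) k' (hk' : 0 < k') ↦
      ⟨min k k', mem_Ioi.2 (lt_min hk hk'), negSector_mono (lt_min hk hk').le (min_le_left k k'),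
        negSector_mono (lt_min hk hk').le (min_le_right k k')⟩)
    ⟨1, mem_Ioi.2 one_pos⟩

theorem tendsto_ofReal_atBot_negSectors :
    Tendsto ((↑) : ℝ → ℂ) atBot negSectors :=
  hasBasis_negSectors.tendsto_right_iff.2 fun _k hk ↦
    (eventually_lt_atBot 0).mono fun _x hx ↦ ofReal_mem_negSector hk hx

theorem norm_le_of_mem_negSector (hk : 0 ≤ k) (hz : z ∈ negSector k) :
    ‖z‖ ≤ (1 + k) * -z.re := by
  have hre := re_neg_of_mem_negSector hk hz
  calc ‖z‖ ≤ |z.re| + |z.im| := Complex.norm_le_abs_re_add_abs_im z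
    _ ≤ -z.re + k * -z.re := by
        rw [abs_of_neg hre]
        gcongr
        exact hz.le
    _ = (1 + k) * -z.re := by ring

theorem closedBall_subset_negSector (hk : 0 < k) (hz : z ∈ negSector (k / 2)) :
    Metric.closedBall z (k / (2 * (1 + k)) * -z.re) ⊆ negSector k := by
  intro w hw
  set r := k / (2 * (1 + k)) * -z.re with hr
  have hball : ‖w - z‖ ≤ r := mem_closedBall_iff_norm.1 hw
  have hre : w.re - z.re ≤ r := (Complex.re_le_norm (w - z)).trans hball
  have him : |w.im| - |z.im| ≤ r :=
    (abs_sub_abs_le_abs_sub _ _).trans ((Complex.abs_im_le_norm (w - z)).trans hball)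
  have hz' : |z.im| < k / 2 * -z.re := hz
  calc |w.im| < k / 2 * -z.re + r := by linarith
    _ = k * (-z.re - r) := by
        rw [hr]
        field
    _ ≤ k * -w.re := by
        gcongr
        linarith

theorem isBigO_smul_deriv_negSectors {E : Type*} [NormedAddCommGroup E] [NormedSpace ℂ E]
    {f : ℂ → E} (hf : f =O[negSectors] fun _ ↦ (1 : ℝ))
    (hd : ∀ᶠ z in negSectors, DifferentiableAt ℂ f z) :
    (fun z ↦ z • deriv f z) =O[negSectors] fun _ ↦ (1 : ℝ) := by
  obtain ⟨C, hC⟩ := hf.bound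
  obtain ⟨k, hk, hsector⟩ := hasBasis_negSectors.eventually_iff.1 (hC.and hd)
  simp only [norm_one, mul_one] at hsector
  set ρ := k / (2 * (1 + k))
  have : 0 < ρ := by positivity
  refine .of_bound ((1 + k / 2) * (C / ρ))
    (hasBasis_negSectors.eventually_iff.2 ⟨k / 2, half_pos hk, fun z hz ↦ ?_⟩)
  have hre : 0 < -z.re := neg_pos.2 (re_neg_of_mem_negSector (half_pos hk).le hz)
  have hball := closedBall_subset_negSector hk hz
  have : 0 ≤ C := (norm_nonneg _).trans
    (hsector (hball (Metric.mem_closedBall_self (by positivity)))).1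
  have hdiff : DifferentiableOn ℂ f (negSector k) :=
    fun w hw ↦ (hsector hw).2.differentiableWithinAt
  have hderiv : ‖deriv f z‖ ≤ C / (ρ * -z.re) :=
    Complex.norm_deriv_le_of_forall_mem_sphere_norm_le (by positivity)
      (hdiff.diffContOnCl_ball hball)
      fun w hw ↦ (hsector (hball (Metric.sphere_subset_closedBall hw))).1
  calc ‖z • deriv f z‖ = ‖z‖ * ‖deriv f z‖ := norm_smul _ _
    _ ≤ (1 + k / 2) * -z.re * (C / (ρ * -z.re)) := by
        gcongr
        exact norm_le_of_mem_negSector (half_pos hk).le hz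
    _ = (1 + k / 2) * (C / ρ) * ‖(1 : ℝ)‖ := by
        have hne : z.re ≠ 0 := (neg_pos.1 hre).ne
        rw [norm_one]
        field

end negSector

section SectorBound

theorem cos_mul_norm_cpow_le_re_cpow {α : ℝ} {w : ℂ} (hw : 0 ≤ w.re) (hα : |α| ≤ 2) :
    Real.cos (Real.pi / 2 * α) * ‖w ^ (α : ℂ)‖ ≤ (w ^ (α : ℂ)).re := by
  have harg : |w.arg| ≤ Real.pi / 2 := Complex.abs_arg_le_pi_div_two_iff.2 hw
  have hpi := Real.pi_pos
  rw [Complex.cpow_ofReal_re, Complex.norm_cpow_real, mul_comm, ← Real.cos_abs (w.arg * α),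
    ← Real.cos_abs (Real.pi / 2 * α), abs_mul, abs_mul, abs_of_pos (half_pos hpi)]
  gcongr
  refine Real.cos_le_cos_of_nonneg_of_le_pi (by positivity) ?_ (by gcongr)
  calc Real.pi / 2 * |α| ≤ Real.pi / 2 * 2 := by gcongr
    _ = Real.pi := by ring

theorem re_mul_le_of_mem_negSector {z b : ℂ} {k κ : ℝ} (hk : 0 ≤ k) (hκk : κ ≤ k)
    (hz : z ∈ negSector k) (hb : κ * ‖b‖ ≤ b.re) :
    (z * b).re ≤ (k - κ) * ‖z * b‖ := by
  have hre : 0 < -z.re := neg_pos.2 (re_neg_of_mem_negSector hk hz)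
  calc (z * b).re = -z.re * -b.re + -(z.im * b.im) := by rw [Complex.mul_re]; ring
    _ ≤ -z.re * -(κ * ‖b‖) + |z.im| * |b.im| := by
        rw [← abs_mul]
        gcongr
        exact neg_le_abs _
    _ ≤ -z.re * -(κ * ‖b‖) + k * -z.re * ‖b‖ := by
        gcongr
        exacts [hz.le, Complex.abs_im_le_norm b]
    _ = (k - κ) * (-z.re * ‖b‖) := by ring
    _ ≤ (k - κ) * ‖z * b‖ := by
        rw [norm_mul]
        gcongr
        exact (neg_le_abs _).trans (Complex.abs_re_le_norm z)

theorem one_sub_sq_le_norm_one_sub_sq {v : ℂ} {c : ℝ} (hv : v.re ≤ c * ‖v‖) :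
    1 - c ^ 2 ≤ ‖1 - v‖ ^ 2 := by
  have h : ‖1 - v‖ ^ 2 = 1 - 2 * v.re + ‖v‖ ^ 2 := by
    simp only [Complex.sq_norm, Complex.normSq_apply, Complex.sub_re, Complex.sub_im,
      Complex.one_re, Complex.one_im]
    ring
  nlinarith [sq_nonneg (‖v‖ - c)]

theorem exists_le_norm_one_sub_mul_verticalLine_cpow {α : ℝ} (hα : α ∈ Ioo 0 2) :
    ∃ k > 0, ∃ δ > 0, ∀ z ∈ negSector k, ∀ ξ,
      δ ≤ ‖1 - z * verticalLine ξ ^ (-(α : ℂ))‖ := by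
  set κ := Real.cos (Real.pi / 2 * -α)
  have hκ : -1 < κ := by
    have hpi := Real.pi_pos
    rw [← Real.cos_pi]
    simp only [κ, mul_neg, Real.cos_neg]
    exact Real.cos_lt_cos_of_nonneg_of_le_pi (by nlinarith [hα.1]) le_rfl (by nlinarith [hα.2])
  have hκ₁ : κ ≤ 1 := Real.cos_le_one _
  set k := (1 + κ) / 2 with hk
  have hδ : 0 < 1 - (k - κ) ^ 2 := by nlinarith
  refine ⟨k, by linarith, √(1 - (k - κ) ^ 2), Real.sqrt_pos.2 hδ, fun z hz ξ ↦ ?_⟩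
  refine Real.sqrt_le_iff.2 ⟨norm_nonneg _, one_sub_sq_le_norm_one_sub_sq
    (re_mul_le_of_mem_negSector (by linarith) (by linarith) hz ?_)⟩
  rw [← Complex.ofReal_neg]
  exact cos_mul_norm_cpow_le_re_cpow (by simp) (by rw [abs_neg, abs_of_pos hα.1]; exact hα.2.le)

variable {α β k δ : ℝ}

theorem differentiableOn_integral_mittagLefflerKernel (hβ : 1 < β) (hδ : 0 < δ)
    (h : ∀ z ∈ negSector k, ∀ ξ, δ ≤ ‖1 - z * verticalLine ξ ^ (-(α : ℂ))‖) :
    DifferentiableOn ℂ (fun z ↦ ∫ ξ, mittagLefflerKernel α β z ξ) (negSector k) := by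
  refine differentiableOn_integral_of_norm_le (isOpen_negSector k)
    (fun z _ ↦ (measurable_mittagLefflerKernel α β z).aestronglyMeasurable)
    (.of_forall fun ξ z hz ↦ norm_mittagLefflerKernel_le hδ (h z hz ξ))
    (((integrable_verticalLine_cpow_neg (by simpa)).norm.const_mul _).div_const δ)
    (.of_forall fun ξ z hz ↦ ?_)
  have hne : 1 - z * verticalLine ξ ^ (-(α : ℂ)) ≠ 0 :=
    norm_pos_iff.1 (hδ.trans_le (h z hz ξ))
  unfold mittagLefflerKernel
  fun_prop (disch := assumption)

theorem complexMittagLeffler_eq_integral_of_mem_negSector (hα : 0 < α) (hβ : 1 < β) (hk : 0 < k)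
    (hδ : 0 < δ) (h : ∀ z ∈ negSector k, ∀ ξ, δ ≤ ‖1 - z * verticalLine ξ ^ (-(α : ℂ))‖) :
    EqOn (complexMittagLeffler α β) (fun z ↦ ∫ ξ, mittagLefflerKernel α β z ξ) (negSector k) := by
  set x : ℝ := -1 / 2
  have hball : (x : ℂ) ∈ Metric.ball 0 1 := by norm_num [x]
  refine ((differentiable_complexMittagLeffler hα β).differentiableOn.analyticOnNhd
    (isOpen_negSector k)).eqOn_of_preconnected_of_eventuallyEq
    ((differentiableOn_integral_mittagLefflerKernel hβ hδ h).analyticOnNhd (isOpen_negSector k))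
    (convex_negSector k).isPreconnected (ofReal_mem_negSector hk (x := x) (by norm_num [x])) ?_
  filter_upwards [Metric.isOpen_ball.mem_nhds hball] with z hz
  exact complexMittagLeffler_eq_integral_of_norm_lt_one hα hβ (mem_ball_zero_iff.1 hz)

theorem complexMittagLeffler_isBigO_of_one_lt (hα : α ∈ Ioo 0 2) (hβ : 1 < β) :
    complexMittagLeffler α β =O[negSectors] fun _ ↦ (1 : ℝ) := by
  obtain ⟨k, hk, δ, hδ, h⟩ := exists_le_norm_one_sub_mul_verticalLine_cpow hα
  refine .of_bound (∫ ξ, Real.exp 1 * ‖verticalLine ξ ^ (-(β : ℂ))‖ / δ)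
    (hasBasis_negSectors.eventually_iff.2 ⟨k, hk, fun z hz ↦ ?_⟩)
  rw [complexMittagLeffler_eq_integral_of_mem_negSector hα.1 hβ hk hδ h hz, norm_one, mul_one]
  exact norm_integral_le_of_norm_le
    (((integrable_verticalLine_cpow_neg (by simpa)).norm.const_mul _).div_const δ)
    (.of_forall fun ξ ↦ norm_mittagLefflerKernel_le hδ (h z hz ξ))

theorem complexMittagLeffler_isBigO_sub_one (hα : 0 < α)
    (h : complexMittagLeffler α β =O[negSectors] fun _ ↦ (1 : ℝ)) :
    complexMittagLeffler α (β - 1) =O[negSectors] fun _ ↦ (1 : ℝ) := by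
  have hEuler : complexMittagLeffler α (β - 1) = fun z ↦
      α * (z • deriv (complexMittagLeffler α β) z) + (β - 1) * complexMittagLeffler α β z := by
    funext z
    rw [smul_eq_mul, mul_deriv_complexMittagLeffler hα β z, sub_add_cancel]
  rw [hEuler]
  exact ((isBigO_smul_deriv_negSectors h (.of_forall
    (differentiable_complexMittagLeffler hα β))).const_mul_left _).add (h.const_mul_left _)

theorem complexMittagLeffler_isBigO (hα : α ∈ Ioo 0 2) (β : ℝ) :
    complexMittagLeffler α β =O[negSectors] fun _ ↦ (1 : ℝ) := by
  obtain ⟨n, hn⟩ := exists_nat_gt (1 - β)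
  induction n generalizing β with
  | zero => exact complexMittagLeffler_isBigO_of_one_lt hα (by simpa using hn)
  | succ n ih =>
    have hsucc := ih (β + 1) (by push_cast at hn; linarith)
    simpa using complexMittagLeffler_isBigO_sub_one hα.1 hsucc

theorem mittagLeffler_isBigO_one (hα : α ∈ Ioo 0 2) (β : ℝ) :
    mittagLeffler α β =O[atBot] fun _ ↦ (1 : ℝ) := by
  refine .of_norm_left (((complexMittagLeffler_isBigO hα β).comp_tendsto
    tendsto_ofReal_atBot_negSectors).norm_left.congr_left fun x ↦ ?_)
  rw [Function.comp_apply, ← ofReal_mittagLeffler, Complex.norm_real]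

end SectorBound

section RealLine

variable {α : ℝ}

theorem contDiff_mittagLeffler (hα : 0 < α) (β : ℝ) {n : WithTop ℕ∞} :
    ContDiff ℝ n (mittagLeffler α β) := by
  have h : mittagLeffler α β = fun x : ℝ ↦ (complexMittagLeffler α β x).re :=
    funext fun x ↦ by rw [← ofReal_mittagLeffler, Complex.ofReal_re]
  rw [h]
  exact (differentiable_complexMittagLeffler hα β).contDiff.real_of_complex

theorem ofReal_deriv_mittagLeffler (hα : 0 < α) (β x : ℝ) :
    ((deriv (mittagLeffler α β) x : ℝ) : ℂ) = deriv (complexMittagLeffler α β) x := by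
  have hreal := ((contDiff_mittagLeffler hα β).differentiable one_ne_zero x).hasDerivAt.ofReal_comp
  have hcomplex := (differentiable_complexMittagLeffler hα β x).hasDerivAt.comp_ofReal
  simp only [ofReal_mittagLeffler] at hreal
  exact hreal.unique hcomplex

theorem mul_deriv_mittagLeffler (hα : 0 < α) (β x : ℝ) :
    α * (x * deriv (mittagLeffler α β) x) =
      mittagLeffler α (β - 1) x - (β - 1) * mittagLeffler α β x := by
  have h := mul_deriv_complexMittagLeffler hα β x
  rw [← ofReal_deriv_mittagLeffler hα, ← ofReal_mittagLeffler, ← ofReal_mittagLeffler] at h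
  exact_mod_cast h

theorem sq_mul_deriv_deriv_mittagLeffler (hα : 0 < α) (β x : ℝ) :
    α * (x ^ 2 * deriv (deriv (mittagLeffler α β)) x) =
      x * deriv (mittagLeffler α (β - 1)) x -
        (β - 1 + α) * (x * deriv (mittagLeffler α β) x) := by
  have hd (β : ℝ) : HasDerivAt (mittagLeffler α β) (deriv (mittagLeffler α β) x) x :=
    ((contDiff_mittagLeffler hα β).differentiable one_ne_zero x).hasDerivAt
  have hdd : HasDerivAt (deriv (mittagLeffler α β)) (deriv (deriv (mittagLeffler α β)) x) x :=
    ((contDiff_mittagLeffler hα β).differentiable_deriv_two x).hasDerivAt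
  have hleft := ((hasDerivAt_id x).mul hdd).const_mul α
  have hright := (hd (β - 1)).sub ((hd β).const_mul (β - 1))
  have h := hleft.unique (hright.congr_of_eventuallyEq
    (.of_forall (mul_deriv_mittagLeffler hα β)))
  simp only [id_eq] at h
  linear_combination x * h

theorem tendsto_mittagLeffler_atBot (hα : α ∈ Ioo 0 2) (β : ℝ) :
    Tendsto (mittagLeffler α β) atBot (𝓝 0) := by
  have hshift (x : ℝ) : x * mittagLeffler α β x =
      mittagLeffler α (β - α) x - (Real.Gamma (β - α))⁻¹ := by
    rw [mittagLeffler_eq_sum_range_add hα.1 (β - α) x 1]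
    simp
  have hbounded : (fun x ↦ x * mittagLeffler α β x) =O[atBot] fun _ ↦ (1 : ℝ) := by
    simp_rw [hshift]
    exact (mittagLeffler_isBigO_one hα (β - α)).sub (Asymptotics.isBigO_const_const _ one_ne_zero _)
  have hO : (fun x ↦ x⁻¹ * (x * mittagLeffler α β x)) =O[atBot] fun x ↦ x⁻¹ := by
    simpa using (Asymptotics.isBigO_refl (fun x : ℝ ↦ x⁻¹) atBot).mul hbounded
  refine (hO.trans_tendsto tendsto_inv_atBot_zero).congr' ?_
  filter_upwards [eventually_ne_atBot 0] with x hx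
  exact inv_mul_cancel_left₀ hx _

theorem tendsto_mul_deriv_mittagLeffler_atBot (hα : α ∈ Ioo 0 2) (β : ℝ) :
    Tendsto (fun x ↦ x * deriv (mittagLeffler α β) x) atBot (𝓝 0) := by
  rw [← mul_zero α, ← tendsto_const_smul_iff₀ hα.1.ne']
  simp_rw [smul_eq_mul, mul_deriv_mittagLeffler hα.1]
  simpa using (tendsto_mittagLeffler_atBot hα (β - 1)).sub
    ((tendsto_mittagLeffler_atBot hα β).const_mul (β - 1))

theorem tendsto_sq_mul_deriv_deriv_mittagLeffler_atBot (hα : α ∈ Ioo 0 2) (β : ℝ) :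
    Tendsto (fun x ↦ x ^ 2 * deriv (deriv (mittagLeffler α β)) x) atBot (𝓝 0) := by
  rw [← mul_zero α, ← tendsto_const_smul_iff₀ hα.1.ne']
  simp_rw [smul_eq_mul, sq_mul_deriv_deriv_mittagLeffler hα.1]
  simpa using (tendsto_mul_deriv_mittagLeffler_atBot hα (β - 1)).sub
    ((tendsto_mul_deriv_mittagLeffler_atBot hα β).const_mul (β - 1 + α))

end RealLine

theorem tendsto_pow_six_mul_two_mul_sq_sub_mul {𝕜 : Type*} [NormedField 𝕜] {l : Filter 𝕜}
    (hl : l ≤ Bornology.cobounded 𝕜) {f₀ f₁ f₂ : 𝕜 → 𝕜} {a b c : 𝕜}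
    (h₀ : Tendsto (fun z ↦ z ^ 3 * f₀ z + (a * z ^ 2 + b * z + c)) l (𝓝 0))
    (h₁ : Tendsto (fun z ↦ z ^ 4 * f₁ z - (a * z ^ 2 + 2 * b * z + 3 * c)) l (𝓝 0))
    (h₂ : Tendsto (fun z ↦ z ^ 5 * f₂ z + (2 * a * z ^ 2 + 6 * b * z + 12 * c)) l (𝓝 0)) :
    Tendsto (fun z ↦ z ^ 6 * (2 * f₁ z ^ 2 - f₀ z * f₂ z)) l (𝓝 (2 * (b ^ 2 - a * c))) := by
  have hinv : Tendsto (fun z : 𝕜 ↦ z⁻¹) l (𝓝 0) := tendsto_inv₀_cobounded.mono_left hl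
  -- In terms of `u = z⁻¹` the terms of order `u⁻²` and `u⁻¹` cancel, leaving a polynomial.
  have hpoly : Continuous fun (u, t₀, t₁, t₂) ↦ 2 * u ^ 2 * t₁ ^ 2
      + 4 * t₁ * (a + 2 * b * u + 3 * c * u ^ 2) - u ^ 2 * t₀ * t₂
      + t₀ * (2 * a + 6 * b * u + 12 * c * u ^ 2) + (a + b * u + c * u ^ 2) * t₂
      + 2 * (b ^ 2 - a * c) + 6 * b * c * u + 6 * c ^ 2 * u ^ 2 := by
    fun_prop
  refine ((hpoly.tendsto' (0, 0, 0, 0) (2 * (b ^ 2 - a * c)) (by norm_num)).comp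
    (hinv.prodMk_nhds (h₀.prodMk_nhds (h₁.prodMk_nhds h₂)))).congr' ?_
  filter_upwards [hl (Bornology.eventually_ne_cobounded 0)] with z hz
  simp only [Function.comp_apply]
  field

theorem tendsto_pow_six_mul_two_mul_sq_deriv_sub_mul {𝕜 : Type*} [NontriviallyNormedField 𝕜]
    {l : Filter 𝕜} (hl : l ≤ Bornology.cobounded 𝕜) {e f : 𝕜 → 𝕜} {a b c : 𝕜}
    (hf : ContDiff 𝕜 2 f) (he : ∀ z, e z = c + b * z + a * z ^ 2 + z ^ 3 * f z)
    (he₀ : Tendsto e l (𝓝 0)) (he₁ : Tendsto (fun z ↦ z * deriv e z) l (𝓝 0))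
    (he₂ : Tendsto (fun z ↦ z ^ 2 * deriv (deriv e) z) l (𝓝 0)) :
    Tendsto (fun z ↦ z ^ 6 * (2 * deriv f z ^ 2 - f z * deriv (deriv f) z)) l
      (𝓝 (2 * (b ^ 2 - a * c))) := by
  have hf' (z : 𝕜) : HasDerivAt f (deriv f z) z := (hf.differentiable two_ne_zero z).hasDerivAt
  have hf'' (z : 𝕜) : HasDerivAt (deriv f) (deriv (deriv f) z) z :=
    (hf.differentiable_deriv_two z).hasDerivAt
  have he' : deriv e = fun z ↦ b + 2 * a * z + 3 * z ^ 2 * f z + z ^ 3 * deriv f z := by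
    rw [funext he]
    funext z
    refine HasDerivAt.deriv (.congr_deriv (((((hasDerivAt_id z).const_mul b).const_add c).add
      ((hasDerivAt_pow 2 z).const_mul a)).add ((hasDerivAt_pow 3 z).mul (hf' z))) ?_)
    push_cast
    ring
  have he'' : deriv (deriv e) = fun z ↦
      2 * a + 6 * z * f z + 6 * z ^ 2 * deriv f z + z ^ 3 * deriv (deriv f) z := by
    rw [he']
    funext z
    refine HasDerivAt.deriv (.congr_deriv (((((hasDerivAt_id z).const_mul (2 * a)).const_add b).add
      (((hasDerivAt_pow 2 z).const_mul 3).mul (hf' z))).add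
      ((hasDerivAt_pow 3 z).mul (hf'' z))) ?_)
    push_cast
    ring
  have h₁ : Tendsto (fun z ↦ z * deriv e z - 3 * e z) l (𝓝 0) := by
    simpa using he₁.sub (he₀.const_mul 3)
  have h₂ : Tendsto (fun z ↦ z ^ 2 * deriv (deriv e) z - 6 * (z * deriv e z) + 12 * e z) l
      (𝓝 0) := by
    simpa using (he₂.sub (he₁.const_mul 6)).add (he₀.const_mul 12)
  refine tendsto_pow_six_mul_two_mul_sq_sub_mul hl (he₀.congr fun z ↦ ?_) (h₁.congr fun z ↦ ?_)
    (h₂.congr fun z ↦ ?_)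
  · rw [he]
    ring
  · rw [he', he]
    ring
  · rw [he'', he', he]
    ring

theorem mittagLeffler_asymptotic_general (α : ℝ) (hα : α ∈ Set.Ioo (0 : ℝ) 2) :
    Filter.Tendsto
      (fun z : ℝ => z ^ 6 *
        (2 * (deriv (mittagLeffler α 1) z) ^ 2 -
          mittagLeffler α 1 z * deriv (deriv (mittagLeffler α 1)) z))
      Filter.atBot
      (nhds (2 * (1 / Real.Gamma (1 - 2 * α) ^ 2 -
        1 / (Real.Gamma (1 - α) * Real.Gamma (1 - 3 * α))))) := by
  have hexpansion (z : ℝ) : mittagLeffler α (1 - 3 * α) z =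
      1 / Real.Gamma (1 - 3 * α) + 1 / Real.Gamma (1 - 2 * α) * z
        + 1 / Real.Gamma (1 - α) * z ^ 2 + z ^ 3 * mittagLeffler α 1 z := by
    rw [mittagLeffler_eq_sum_range_add hα.1 (1 - 3 * α) z 3]
    simp only [Finset.sum_range_succ, Finset.sum_range_zero]
    push_cast
    ring_nf
  have hlim := tendsto_pow_six_mul_two_mul_sq_deriv_sub_mul
    IsOrderBornology.atBot_le_cobounded (contDiff_mittagLeffler hα.1 1) hexpansion
    (tendsto_mittagLeffler_atBot hα _) (tendsto_mul_deriv_mittagLeffler_atBot hα _)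
    (tendsto_sq_mul_deriv_deriv_mittagLeffler_atBot hα _)
  rwa [one_div_pow, one_div_mul_one_div] at hlim

/-- As `z → -∞`, `z⁶(2E_α'(z)² − E_α(z)E_α''(z))` tends to
`2(1/Γ(1-2α)² − 1/(Γ(1-α)Γ(1-3α)))` (reciprocals of `Γ` at poles read as `0`). -/
theorem mittagLeffler_asymptotic (α : ℝ) (hα : α ∈ Set.Ioo (0 : ℝ) 1) :
    Filter.Tendsto
      (fun z : ℝ => z ^ 6 *
        (2 * (deriv (mittagLeffler α 1) z) ^ 2 -
          mittagLeffler α 1 z * deriv (deriv (mittagLeffler α 1)) z))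
      Filter.atBot
      (nhds (2 * (1 / Real.Gamma (1 - 2 * α) ^ 2 -
        1 / (Real.Gamma (1 - α) * Real.Gamma (1 - 3 * α))))) :=
  mittagLeffler_asymptotic_general α ⟨hα.1, hα.2.trans one_lt_two⟩
end

section
/- For every α ∈ (0, 4/5], the function x ↦ φ(-α, 0, -x) is log-concave on [0,∞). -/
/-!
Write `a(u) = (sin αu)^{α/(1-α)} sin((1-α)u) / (sin u)^{1/(1-α)}` and `W = x^{1/(1-α)}`. By the
reflection formula, `φ(-α, 0, -x)` is, term by term, Hankel's integral
`(1/π) ∫₀^∞ e^{-r} e^{-x r^α cos απ} sin(x r^α sin απ) dr`. Moving the contour to the path of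
steepest descent, on which the exponent `ζ - x ζ^α` is real, turns it into
`α / ((1-α)π) · W ∫₀^π a(u) e^{-a(u) W} du`.

With `G_k(w) = ∫₀^π a^k e^{-aw} du`, two differentiations show that log-concavity of this
expression in `x` follows from `w² G₃ G₁ ≤ w² G₂² + α w G₁ G₂ + (1-α) G₁²`: under the probability
measure proportional to `a e^{-aw} du`, the variance of `aw` is at most `α E[aw] + 1 - α`. As a
variance is at most the second moment about any `κ`, it is enough to dominate
`a e^{-aw} ((aw-κ)² - α aw - (1-α))` by the derivative of a function vanishing at `0` and `π`. For
`α ≤ 1/2` that function is built from a primitive of `a`, taking `κ` to be the mean; for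
`1/2 ≤ α ≤ 4/5` it is built from `(1 - a(0⁺)/a) / H'` with `H = (1-α) log a`, and the domination is
a pointwise trigonometric inequality for `H'`, which is where `4/5` enters.
-/

/-- The Wright function `φ(ρ, β, x) = ∑ x^n / (n! Γ(β + ρ n))`. -/
noncomputable def wright (ρ β x : ℝ) : ℝ :=
  ∑' n : ℕ, x ^ n / ((n.factorial : ℝ) * Real.Gamma (β + ρ * n))

/-- `f` is log-concave on the set `S`. -/
def LogConcaveOn' (f : ℝ → ℝ) (S : Set ℝ) : Prop :=
  ∀ x ∈ S, ∀ y ∈ S, ∀ t ∈ Set.Icc (0 : ℝ) 1,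
    f ((1 - t) * x + t * y) ≥ f x ^ (1 - t) * f y ^ t

namespace WrightFunction

open Real Set Filter MeasureTheory Topology

section RealAnalysis

lemma monotoneOn_Ioo_of_hasDerivAt {f f' : ℝ → ℝ} {a b : ℝ}
    (hf : ∀ u ∈ Ioo a b, HasDerivAt f (f' u) u) (hf' : ∀ u ∈ Ioo a b, 0 ≤ f' u) :
    MonotoneOn f (Ioo a b) := by
  refine monotoneOn_of_hasDerivWithinAt_nonneg (f' := f') (convex_Ioo a b)
    (HasDerivAt.continuousOn hf) ?_ ?_ <;> rw [interior_Ioo]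
  exacts [fun u hu => (hf u hu).hasDerivWithinAt, hf']

lemma le_of_monotoneOn_of_tendsto {f : ℝ → ℝ} {a b l u : ℝ} (hf : MonotoneOn f (Ioo a b))
    (hl : Tendsto f (𝓝[>] a) (𝓝 l)) (hu : u ∈ Ioo a b) : l ≤ f u := by
  refine le_of_tendsto hl ?_
  filter_upwards [Ioo_mem_nhdsGT hu.1] with v hv
  exact hf ⟨hv.1, hv.2.trans hu.2⟩ hu hv.2.le

lemma le_of_hasDerivAt_nonneg_of_tendsto {f f' : ℝ → ℝ} {a b l u : ℝ}
    (hf : ∀ u ∈ Ioo a b, HasDerivAt f (f' u) u) (hf' : ∀ u ∈ Ioo a b, 0 ≤ f' u)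
    (hl : Tendsto f (𝓝[>] a) (𝓝 l)) (hu : u ∈ Ioo a b) : l ≤ f u :=
  le_of_monotoneOn_of_tendsto (monotoneOn_Ioo_of_hasDerivAt hf hf') hl hu

lemma le_of_hasDerivAt_nonpos_of_tendsto {f f' : ℝ → ℝ} {a b l u : ℝ}
    (hf : ∀ u ∈ Ioo a b, HasDerivAt f (f' u) u) (hf' : ∀ u ∈ Ioo a b, f' u ≤ 0)
    (hl : Tendsto f (𝓝[>] a) (𝓝 l)) (hu : u ∈ Ioo a b) : f u ≤ l :=
  neg_le_neg_iff.1 <| le_of_hasDerivAt_nonneg_of_tendsto (f := -f)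
    (fun u hu => (hf u hu).neg) (fun u hu => neg_nonneg.2 (hf' u hu)) hl.neg hu

lemma tendsto_sin_mul_div (k : ℝ) :
    Tendsto (fun u => sin (k * u) / u) (𝓝[>] 0) (𝓝 k) := by
  have h : HasDerivAt (fun u => sin (k * u)) k 0 := by
    simpa using ((hasDerivAt_id (0 : ℝ)).const_mul k).sin
  simpa [div_eq_inv_mul] using h.tendsto_slope_zero_right

lemma tendsto_id_nhdsGT_zero : Tendsto (fun u : ℝ => u) (𝓝[>] 0) (𝓝 0) :=
  tendsto_id.mono_left nhdsWithin_le_nhds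

lemma tendsto_log_sin_mul_sub_log {k : ℝ} (hk : 0 < k) :
    Tendsto (fun u => log (sin (k * u)) - log u) (𝓝[>] 0) (𝓝 (log k)) := by
  refine ((tendsto_sin_mul_div k).log hk.ne').congr' ?_
  filter_upwards [Ioo_mem_nhdsGT (div_pos pi_pos hk)] with u ⟨hu0, huk⟩
  have hsin : 0 < sin (k * u) :=
    sin_pos_of_mem_Ioo ⟨mul_pos hk hu0, by rwa [mul_comm, ← lt_div_iff₀ hk]⟩
  rw [log_div hsin.ne' hu0.ne']

lemma tendsto_log_sin_nhdsLT_pi : Tendsto (fun u => log (sin u)) (𝓝[<] π) atBot := by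
  refine tendsto_log_nhdsGT_zero.comp (tendsto_nhdsWithin_iff.2 ⟨?_, ?_⟩)
  · exact (continuous_sin.tendsto' π 0 sin_pi).mono_left nhdsWithin_le_nhds
  · filter_upwards [Ioo_mem_nhdsLT pi_pos] with u hu using sin_pos_of_mem_Ioo hu

lemma setIntegral_Ioo_le_sub_of_hasDerivAt_of_tendsto {a b la lb : ℝ} (hab : a < b)
    {f f' φ : ℝ → ℝ} (hf : ∀ u ∈ Ioo a b, HasDerivAt f (f' u) u) (hφ : IntegrableOn φ (Ioo a b))
    (hle : ∀ u ∈ Ioo a b, φ u ≤ f' u) (ha : Tendsto f (𝓝[>] a) (𝓝 la))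
    (hb : Tendsto f (𝓝[<] b) (𝓝 lb)) : ∫ u in Ioo a b, φ u ≤ lb - la := by
  have hcont := HasDerivAt.continuousOn hf
  have hderiv : ∀ u ∈ Ioo a b, HasDerivAt (extendFrom (Ioo a b) f) (f' u) u := fun u hu => by
    refine (hf u hu).congr_of_eventuallyEq ?_
    filter_upwards [Ioo_mem_nhds hu.1 hu.2] with v hv
    exact extendFrom_extends hcont v hv
  have h := intervalIntegral.integral_le_sub_of_hasDeriv_right_of_le hab.le
    (continuousOn_Icc_extendFrom_Ioo hcont ha hb)
    (fun u hu => (hderiv u hu).hasDerivWithinAt)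
    (by rwa [integrableOn_Icc_iff_integrableOn_Ioo]) hle
  rwa [intervalIntegral.integral_of_le hab.le, integral_Ioc_eq_integral_Ioo,
    eq_lim_at_left_extendFrom_Ioo hab ha, eq_lim_at_right_extendFrom_Ioo hab hb] at h

lemma integral_Ioi_eq_sub_of_hasDerivAt_of_tendsto {f f' : ℝ → ℝ} {a l m : ℝ}
    (hf : ∀ x ∈ Ioi a, HasDerivAt f (f' x) x) (hf' : IntegrableOn f' (Ioi a))
    (ha : Tendsto f (𝓝[>] a) (𝓝 l)) (hm : Tendsto f atTop (𝓝 m)) :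
    ∫ x in Ioi a, f' x = m - l := by
  have hcongr : ∀ x ∈ Ioi a, Function.update f a l x = f x := fun x hx =>
    Function.update_of_ne (ne_of_gt hx) l f
  have h := integral_Ioi_of_hasDerivAt_of_tendsto (f := Function.update f a l) (m := m)
    (by simpa [continuousWithinAt_update_same] using ha)
    (fun x hx => (hf x hx).congr_of_eventuallyEq
      (eventually_of_mem (Ioi_mem_nhds hx) hcongr)) hf'
    (hm.congr' (eventually_of_mem (Ioi_mem_atTop a) fun x hx => (hcongr x hx).symm))
  rwa [Function.update_self] at h

lemma tendsto_mul_exp_sub_div_atTop_nhds_zero {c : ℝ} (hc : 0 < c) (K : ℝ) :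
    Tendsto (fun y => y * exp (K - y / c)) atTop (𝓝 0) := by
  have h := ((tendsto_pow_mul_exp_neg_atTop_nhds_zero 1).comp
    (tendsto_id.atTop_div_const hc)).const_mul (c * exp K)
  rw [mul_zero] at h
  refine h.congr fun y => ?_
  simp only [Function.comp, id]
  rw [sub_eq_add_neg, exp_add, pow_one]
  field_simp

lemma concaveOn_comp_rpow_of_hasDerivAt {L ℓ m : ℝ → ℝ} {c : ℝ} (hc : 0 ≤ c)
    (hL : ∀ w ∈ Ioi 0, HasDerivAt L (ℓ w / w) w) (hℓ : ∀ w ∈ Ioi 0, HasDerivAt ℓ (m w / w) w)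
    (hm : ∀ w ∈ Ioi 0, c * m w ≤ ℓ w) : ConcaveOn ℝ (Ioi 0) (fun x => L (x ^ c)) := by
  have hpow : ∀ x ∈ Ioi (0 : ℝ), 0 < x ^ c := fun x hx => rpow_pos_of_pos hx c
  have comp {f f' : ℝ → ℝ} (hf : ∀ w ∈ Ioi 0, HasDerivAt f (f' w / w) w) :
      ∀ x ∈ Ioi (0 : ℝ), HasDerivAt (fun x => f (x ^ c)) (c * f' (x ^ c) / x) x := by
    intro x hx
    have hw := (hpow x hx).ne'
    refine (HasDerivAt.comp (h₂ := f) x (hf _ (hpow x hx))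
      (hasDerivAt_rpow_const (Or.inl (ne_of_gt hx)))).congr_deriv ?_
    rw [rpow_sub_one (ne_of_gt hx)]
    field_simp
  have hderiv := comp hL
  have hderiv2 : ∀ x ∈ Ioi (0 : ℝ), HasDerivAt (fun x => c * ℓ (x ^ c) / x)
      (c * (c * m (x ^ c) - ℓ (x ^ c)) / x ^ 2) x := by
    intro x hx
    have hx0 : x ≠ 0 := ne_of_gt hx
    refine (((comp hℓ x hx).const_mul c).div (hasDerivAt_id x) hx0).congr_deriv ?_
    simp only [id]
    field_simp
  refine concaveOn_of_hasDerivWithinAt2_nonpos (convex_Ioi 0) (HasDerivAt.continuousOn hderiv)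
    (f' := fun x => c * ℓ (x ^ c) / x) (f'' := fun x => c * (c * m (x ^ c) - ℓ (x ^ c)) / x ^ 2)
    ?_ ?_ ?_ <;> rw [interior_Ioi]
  · exact fun x hx => (hderiv x hx).hasDerivWithinAt
  · exact fun x hx => (hderiv2 x hx).hasDerivWithinAt
  · exact fun x hx => div_nonpos_of_nonpos_of_nonneg
      (mul_nonpos_of_nonneg_of_nonpos hc (sub_nonpos.2 (hm _ (hpow x hx)))) (sq_nonneg x)

lemma logConcaveOn'_of_concaveOn_log {f : ℝ → ℝ} {S : Set ℝ} (hS : Convex ℝ S)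
    (hf : ∀ x ∈ S, 0 ≤ f x) (hlog : ConcaveOn ℝ {x ∈ S | 0 < f x} (fun x => log (f x))) :
    LogConcaveOn' f S := by
  rintro x hx y hy t ⟨ht0, ht1⟩
  rcases ht0.eq_or_lt with rfl | ht0
  · simp
  rcases ht1.eq_or_lt with rfl | ht1
  · simp
  have ht1 := sub_pos.2 ht1
  have hz := hf _ (hS hx hy ht1.le ht0.le (by ring))
  rcases (hf x hx).eq_or_lt with hfx | hfx
  · simpa [← hfx, zero_rpow ht1.ne'] using hz
  rcases (hf y hy).eq_or_lt with hfy | hfy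
  · simpa [← hfy, zero_rpow ht0.ne'] using hz
  have hzpos := (hlog.1 ⟨hx, hfx⟩ ⟨hy, hfy⟩ ht1.le ht0.le (by ring)).2
  have key := hlog.2 ⟨hx, hfx⟩ ⟨hy, hfy⟩ ht1.le ht0.le (by ring)
  simp only [smul_eq_mul] at key hzpos
  rw [← log_rpow hfx, ← log_rpow hfy, ← log_mul (by positivity) (by positivity)] at key
  exact (log_le_log_iff (by positivity) hzpos).1 key

end RealAnalysis

section SignChange

lemma exists_mul_sub_nonpos_of_antitoneOn {f g : ℝ → ℝ} {S : Set ℝ} {B κ : ℝ}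
    (hf : AntitoneOn f S) (hg : MonotoneOn g S) (hfB : ∀ u ∈ S, f u ≤ B)
    (hκ : ∃ u ∈ S, κ < g u) : ∃ C, ∀ u ∈ S, (f u - C) * (g u - κ) ≤ 0 := by
  obtain ⟨u₀, hu₀, hκ⟩ := hκ
  have hbdd : BddAbove (f '' {u ∈ S | κ < g u}) :=
    ⟨B, forall_mem_image.2 fun u hu => hfB u hu.1⟩
  refine ⟨sSup (f '' {u ∈ S | κ < g u}), fun u hu => ?_⟩
  rcases lt_or_ge κ (g u) with h | h
  · exact mul_nonpos_of_nonpos_of_nonneg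
      (sub_nonpos.2 (le_csSup hbdd ⟨u, ⟨hu, h⟩, rfl⟩)) (sub_nonneg.2 h.le)
  · refine mul_nonpos_of_nonneg_of_nonpos (sub_nonneg.2 (csSup_le ⟨f u₀, u₀, ⟨hu₀, hκ⟩, rfl⟩ ?_))
      (sub_nonpos.2 h)
    rintro _ ⟨v, ⟨hv, hκv⟩, rfl⟩
    exact hf hu hv (hg.reflect_lt hu hv (h.trans_lt hκv)).le

end SignChange

lemma quadratic_nonpos_of_endpoints {a b c l u x : ℝ} (ha : 0 ≤ a) (hx : x ∈ Icc l u)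
    (hl : a * l ^ 2 + b * l + c ≤ 0) (hu : a * u ^ 2 + b * u + c ≤ 0) :
    a * x ^ 2 + b * x + c ≤ 0 := by
  rw [← segment_eq_Icc (hx.1.trans hx.2)] at hx
  obtain ⟨t, t', ht, ht', htt', rfl⟩ := hx
  obtain rfl : t' = 1 - t := by linarith
  calc a * (t • l + (1 - t) • u) ^ 2 + b * (t • l + (1 - t) • u) + c
      = t * (a * l ^ 2 + b * l + c) + (1 - t) * (a * u ^ 2 + b * u + c)
        - a * (t * (1 - t) * (u - l) ^ 2) := by simp only [smul_eq_mul]; ring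
    _ ≤ 0 := by
        have := mul_nonneg ha (mul_nonneg (mul_nonneg ht ht') (sq_nonneg (u - l)))
        linarith [mul_nonpos_of_nonneg_of_nonpos ht hl, mul_nonpos_of_nonneg_of_nonpos ht' hu]

lemma self_le_rpow_mul {s p : ℝ} (hs : 0 < s) (hp0 : 0 ≤ p) (hp1 : p ≤ 1) :
    s ≤ s ^ p * (s + p * (1 - s)) := by
  have bernoulli : (s⁻¹) ^ p ≤ 1 + p * (s⁻¹ - 1) := by
    simpa using rpow_one_add_le_one_add_mul_self (s := s⁻¹ - 1)
      (by linarith [inv_pos.2 hs]) hp0 hp1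
  have hsp : 0 < s ^ p := rpow_pos_of_pos hs p
  rw [inv_rpow hs.le, inv_le_iff_one_le_mul₀ hsp] at bernoulli
  calc s ≤ s * ((1 + p * (s⁻¹ - 1)) * s ^ p) := le_mul_of_one_le_right hs.le bernoulli
    _ = s ^ p * (s + p * (1 - s)) := by field_simp

lemma one_sub_rpow_one_add_mul_le {s p : ℝ} (hs : 0 < s) (hp0 : 0 ≤ p) (hp1 : p ≤ 1) :
    (1 - s ^ (1 + p)) * (s + p * (1 - s)) ≤ (1 - s) * (s + p) := by
  rw [rpow_add hs, rpow_one]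
  linear_combination s * self_le_rpow_mul hs hp0 hp1

lemma one_sub_rpow_two_add_mul_le {s p : ℝ} (hs : 0 < s) (hp0 : 0 ≤ p) (hp1 : p ≤ 1) :
    (1 - s ^ (2 + p)) * (s + p * (1 - s)) ≤ (1 - s) * (s + s ^ 2 + p) := by
  rw [rpow_add hs, rpow_two]
  linear_combination s ^ 2 * self_le_rpow_mul hs hp0 hp1

/-- `(b / q)² (X² + (2s + 2r(1 - s)) X + k (X - 1)) - (5 + 2r) (b / q) X + 4` with
`k = 3(1 - s)² / (2(1 + s))`, cleared of denominators. -/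
noncomputable def endpointPoly (r s b q X : ℝ) : ℝ :=
  b ^ 2 * ((1 + s) * (X ^ 2 + (2 * s + 2 * r * (1 - s)) * X) + 3 / 2 * (1 - s) ^ 2 * (X - 1))
    - (1 + s) * (5 + 2 * r) * b * q * X + 4 * (1 + s) * q ^ 2

section Endpoints

variable {s p : ℝ}

lemma endpointPoly_one_add_nonpos_left (hs0 : 0 ≤ s) (hs1 : s ≤ 1) (hp0 : 0 ≤ p) (hp1 : p ≤ 1) :
    endpointPoly (1 + p) s (s + p) (s + p * (1 - s)) 1 ≤ 0 := by
  have := sub_nonneg.2 hs1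
  have := sub_nonneg.2 hp1
  have : 0 ≤ (1 + s) * (p * (1 - p) * (s ^ 2 * (1 + 2 * s))
      + p ^ 2 * (s * (1 - s + 2 * s ^ 2))) := by positivity
  unfold endpointPoly
  linear_combination this

lemma endpointPoly_one_add_nonpos_right (hs0 : 0 ≤ s) (hs1 : s ≤ 1) (hp0 : 0 ≤ p)
    (hp1 : p ≤ 1) :
    endpointPoly (1 + p) s (s + p) (s + p * (1 - s)) (1 + 3 / 4 * (1 - s)) ≤ 0 := by
  have := sub_nonneg.2 hs1
  have := sub_nonneg.2 hp1
  have c₀ : 0 ≤ 9 + 72 * s - 9 * s ^ 2 := by nlinarith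
  have c₁ : 0 ≤ 18 + 76 * s + 36 * s ^ 2 - 28 * s ^ 3 - 6 * s ^ 4 := by
    nlinarith [pow_nonneg hs0 2, pow_nonneg hs0 3]
  have c₂ : 0 ≤ 9 + 13 * s - 6 * s ^ 2 + 34 * s ^ 3 + 29 * s ^ 4 - 15 * s ^ 5 := by
    nlinarith [pow_nonneg hs0 3, pow_nonneg hs0 4]
  have : 0 ≤ (1 - p) ^ 2 * (s ^ 2 * (1 - s) * (9 + 72 * s - 9 * s ^ 2))
      + p * (1 - p) * (s * (18 + 76 * s + 36 * s ^ 2 - 28 * s ^ 3 - 6 * s ^ 4))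
      + p ^ 2 * (9 + 13 * s - 6 * s ^ 2 + 34 * s ^ 3 + 29 * s ^ 4 - 15 * s ^ 5) := by positivity
  unfold endpointPoly
  linear_combination this / 16

lemma endpointPoly_two_add_nonpos_left (hs0 : 0 ≤ s) (hs1 : s ≤ 1) (hp0 : 0 ≤ p)
    (hp1 : p ≤ 1 / 2) : endpointPoly (2 + p) s (s + s ^ 2 + p) (s + p * (1 - s)) 1 ≤ 0 := by
  have := sub_nonneg.2 hs1
  have : 0 ≤ 1 - 2 * p := by linarith
  have c₁ : 0 ≤ 1 - s / 2 - s ^ 2 + 5 * s ^ 3 := by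
    nlinarith [mul_nonneg hs0 (sq_nonneg (s - 1 / 2))]
  have c₂ : 0 ≤ 1 / 4 - s ^ 2 + 3 * s ^ 4 := by nlinarith [sq_nonneg (s ^ 2 - 1 / 6)]
  have : 0 ≤ (1 + s) * ((1 - 2 * p) ^ 2 * (s ^ 3 * (1 - s + 2 * s ^ 2))
      + 2 * p * (1 - 2 * p) * (s ^ 2 * (1 - s / 2 - s ^ 2 + 5 * s ^ 3))
      + (2 * p) ^ 2 * (s * (1 / 4 - s ^ 2 + 3 * s ^ 4))) := by positivity
  unfold endpointPoly
  linear_combination this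

lemma endpointPoly_two_add_nonpos_right (hs0 : 0 ≤ s) (hs1 : s ≤ 1) (hp0 : 0 ≤ p)
    (hp1 : p ≤ 1 / 2) :
    endpointPoly (2 + p) s (s + s ^ 2 + p) (s + p * (1 - s)) (1 + 3 / 4 * (1 - s)) ≤ 0 := by
  have := sub_nonneg.2 hs1
  have : 0 ≤ 1 - 2 * p := by linarith
  have c₀ : 0 ≤ 9 + 13 * s - 6 * s ^ 2 + 34 * s ^ 3 + 29 * s ^ 4 - 15 * s ^ 5 := by
    nlinarith [pow_nonneg hs0 3, pow_nonneg hs0 4]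
  have c₁ : 0 ≤ 9 + 22 * s - 46 * s ^ 2 - 12 * s ^ 3 + 151 * s ^ 4 + 62 * s ^ 5 - 42 * s ^ 6 := by
    nlinarith [pow_nonneg hs0 5, mul_nonneg hs0 (sq_nonneg (s - 1 / 2)),
      sq_nonneg (s ^ 2 - 1 / 2), mul_nonneg (pow_nonneg hs0 5) (sub_nonneg.2 hs1)]
  have c₂ : 0 ≤ 9 + 31 * s - 77 * s ^ 2 - 151 * s ^ 3 + 8 * s ^ 4 + 444 * s ^ 5 + 132 * s ^ 6
      - 108 * s ^ 7 := by
    nlinarith [mul_nonneg (pow_nonneg hs0 6) (sub_nonneg.2 hs1),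
      mul_nonneg hs0 (sq_nonneg (s - 3 / 5)), sq_nonneg (s ^ 2 - 2 / 5),
      mul_nonneg hs0 (sq_nonneg (s ^ 2 - 2 / 5))]
  have : 0 ≤ (1 - 2 * p) ^ 2
        * (s ^ 2 * (9 + 13 * s - 6 * s ^ 2 + 34 * s ^ 3 + 29 * s ^ 4 - 15 * s ^ 5))
      + 2 * p * (1 - 2 * p) * (s * (9 + 22 * s - 46 * s ^ 2 - 12 * s ^ 3 + 151 * s ^ 4
        + 62 * s ^ 5 - 42 * s ^ 6))
      + p ^ 2 * (9 + 31 * s - 77 * s ^ 2 - 151 * s ^ 3 + 8 * s ^ 4 + 444 * s ^ 5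
        + 132 * s ^ 6 - 108 * s ^ 7) := by positivity
  unfold endpointPoly
  linear_combination this / 16

end Endpoints

lemma endpointPoly_nonpos_of_mem_Icc {r s b q X : ℝ} (hs0 : 0 ≤ s)
    (hX : X ∈ Icc 1 (1 + 3 / 4 * (1 - s))) (hleft : endpointPoly r s b q 1 ≤ 0)
    (hright : endpointPoly r s b q (1 + 3 / 4 * (1 - s)) ≤ 0) : endpointPoly r s b q X ≤ 0 := by
  have h := quadratic_nonpos_of_endpoints (a := b ^ 2 * (1 + s))
    (b := b ^ 2 * ((1 + s) * (2 * s + 2 * r * (1 - s)) + 3 / 2 * (1 - s) ^ 2)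
      - (1 + s) * (5 + 2 * r) * b * q)
    (c := 4 * (1 + s) * q ^ 2 - b ^ 2 * (3 / 2 * (1 - s) ^ 2)) (by positivity) hX
  unfold endpointPoly at *
  linear_combination h (by linear_combination hleft) (by linear_combination hright)

lemma exists_one_sub_rpow_le_and_endpointPoly_nonpos {r s X : ℝ} (hr1 : 1 ≤ r) (hr2 : r ≤ 5 / 2)
    (hs0 : 0 < s) (hs1 : s < 1) (hX : X ∈ Icc 1 (1 + 3 / 4 * (1 - s))) :
    ∃ b q : ℝ, 0 < q ∧ (1 - s ^ r) * q ≤ (1 - s) * b ∧ endpointPoly r s b q X ≤ 0 := by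
  have := sub_pos.2 hs1
  rcases le_total r 2 with hr | hr
  · obtain ⟨p, rfl⟩ : ∃ p, r = 1 + p := ⟨r - 1, by ring⟩
    have hp0 : 0 ≤ p := by linarith
    have hp1 : p ≤ 1 := by linarith
    exact ⟨s + p, s + p * (1 - s), by positivity, one_sub_rpow_one_add_mul_le hs0 hp0 hp1,
      endpointPoly_nonpos_of_mem_Icc hs0.le hX
        (endpointPoly_one_add_nonpos_left hs0.le hs1.le hp0 hp1)
        (endpointPoly_one_add_nonpos_right hs0.le hs1.le hp0 hp1)⟩
  · obtain ⟨p, rfl⟩ : ∃ p, r = 2 + p := ⟨r - 2, by ring⟩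
    have hp0 : 0 ≤ p := by linarith
    have hp1 : p ≤ 1 / 2 := by linarith
    exact ⟨s + s ^ 2 + p, s + p * (1 - s), by positivity,
      one_sub_rpow_two_add_mul_le hs0 hp0 (by linarith),
      endpointPoly_nonpos_of_mem_Icc hs0.le hX
        (endpointPoly_two_add_nonpos_left hs0.le hs1.le hp0 hp1)
        (endpointPoly_two_add_nonpos_right hs0.le hs1.le hp0 hp1)⟩

lemma tilt_quadratic_nonpos {r s X Θ B : ℝ} (hr1 : 1 ≤ r) (hr2 : r ≤ 5 / 2) (hs0 : 0 < s)
    (hs1 : s < 1) (hX : X ∈ Icc 1 (1 + 3 / 4 * (1 - s)))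
    (hΘ : (1 + s) * Θ ≤ 3 / 2 * (1 - s) ^ 2 * (X - 1))
    (hΘ' : 2 * s * X + Θ ≤ 2 * X * (X - (1 - s)))
    (hB : 1 ≤ B * X) (hB' : B * (1 - s) ≤ 1 - s ^ r) :
    (X ^ 2 + (2 * s + 2 * r * (1 - s)) * X + Θ) * B ^ 2 - (5 + 2 * r) * X * B + 4 ≤ 0 := by
  obtain ⟨b, q, hq, hbq, hpoly⟩ :=
    exists_one_sub_rpow_le_and_endpointPoly_nonpos hr1 hr2 hs0 hs1 hX
  have hX1 : 1 ≤ X := hX.1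
  have hX0 : 0 < X := by linarith
  have hBb : B ≤ b / q := by
    rw [le_div_iff₀ hq, ← mul_le_mul_iff_right₀ (sub_pos.2 hs1)]
    nlinarith
  set a := X ^ 2 + (2 * s + 2 * r * (1 - s)) * X + Θ
  rcases le_or_gt a 0 with hneg | hpos
  · nlinarith [mul_nonneg (neg_nonneg.2 hneg) (sq_nonneg B)]
  have hleft : a * X⁻¹ ^ 2 + -((5 + 2 * r) * X) * X⁻¹ + 4 ≤ 0 := by
    have : a ≤ (2 * r + 1) * X ^ 2 := by
      nlinarith [mul_nonneg (mul_nonneg (sub_nonneg.2 hr1) hX0.le) (by linarith : 0 ≤ X - (1 - s))]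
    have : a * X⁻¹ ^ 2 ≤ 2 * r + 1 := by
      rwa [inv_pow, mul_inv_le_iff₀ (by positivity)]
    rw [neg_mul, mul_inv_cancel_right₀ hX0.ne']
    linarith
  have hright : a * (b / q) ^ 2 + -((5 + 2 * r) * X) * (b / q) + 4 ≤ 0 := by
    have : (1 + s) * q ^ 2 * (a * (b / q) ^ 2 + -((5 + 2 * r) * X) * (b / q) + 4) ≤ 0 := by
      calc _ = (1 + s) * (b ^ 2 * a - (5 + 2 * r) * b * q * X + 4 * q ^ 2) := by field_simp; ring
        _ ≤ endpointPoly r s b q X := by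
          unfold endpointPoly
          nlinarith [mul_le_mul_of_nonneg_left hΘ (sq_nonneg b)]
        _ ≤ 0 := hpoly
    exact nonpos_of_mul_nonpos_right this (by positivity)
  have := quadratic_nonpos_of_endpoints hpos.le
    ⟨(inv_le_iff_one_le_mul₀ hX0).2 hB, hBb⟩ hleft hright
  linarith

lemma tilt_inequality {r s N N' q : ℝ} (hr1 : 1 ≤ r) (hr2 : r ≤ 5 / 2) (hs0 : 0 < s)
    (hs1 : s < 1) (hN : N * (1 - s) ∈ Icc 1 (1 + 3 / 4 * (1 - s)))
    (hN' : (1 + s) * (-N' * (1 - s) ^ 2 - 2 * s * (N * (1 - s)))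
      ≤ 3 / 2 * (1 - s) ^ 2 * (N * (1 - s) - 1))
    (hNN' : 0 ≤ N' + 2 * N * (N - 1)) (hq : 1 ≤ q * N) (hq' : q ≤ 1 - s ^ r) :
    (q * N - 2) ^ 2 ≤ q * N + q * (2 * r * (1 - q) * N + q * N') := by
  have hs : 0 < 1 - s := sub_pos.2 hs1
  have key := tilt_quadratic_nonpos (B := q / (1 - s)) hr1 hr2 hs0 hs1 hN hN'
    (by nlinarith [mul_nonneg hNN' (sq_nonneg (1 - s))])
    (by rwa [mul_comm N, ← mul_assoc, div_mul_cancel₀ _ hs.ne'])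
    (by rwa [div_mul_cancel₀ _ hs.ne'])
  refine sub_nonpos.1 (le_of_eq_of_le ?_ key)
  field_simp
  ring

section SlopeAndCurvature

/-- The gap `C = cos δu - cos u` between two cosines. -/
noncomputable def cosGap (δ u : ℝ) : ℝ := cos (δ * u) - cos u

/-- The ratio `D = (sin δu - δ sin u) / C`. -/
noncomputable def skewRatio (δ u : ℝ) : ℝ := (sin (δ * u) - δ * sin u) / cosGap δ u

/-- The ratio `W = (1 - δ²) sin u / C`. -/
noncomputable def sineRatio (δ u : ℝ) : ℝ := (1 - δ ^ 2) * sin u / cosGap δ u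

/-- `V = W / (1 + D²)`, a multiple of the reciprocal of `slope`. -/
noncomputable def invSlope (δ u : ℝ) : ℝ := sineRatio δ u / (1 + skewRatio δ u ^ 2)

/-- `p = V D`; `V` and `p` generate a differential field containing all higher derivatives of the
potential. -/
noncomputable def skew (δ u : ℝ) : ℝ := invSlope δ u * skewRatio δ u

/-- The derivative `H'` of the potential `H` of the Kanter function with parameter `(1 ± δ) / 2`,
see `hasDerivAt_potential`. -/
noncomputable def slope (δ u : ℝ) : ℝ := (1 - δ ^ 2) / (2 * invSlope δ u)

/-- `N = H'' / H'²`, the second derivative of the potential relative to its squared slope. -/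
noncomputable def curvature (δ u : ℝ) : ℝ :=
  1 + (invSlope δ u ^ 2 - 3 * skew δ u ^ 2 + 4 * δ * skew δ u) / (1 - δ ^ 2)

/-- The derivative `dp/dH` of `skew` along the potential. -/
noncomputable def skewDeriv (δ u : ℝ) : ℝ :=
  (1 / (1 - δ ^ 2)) * (-(1 - δ ^ 2) * skew δ u - 3 * skew δ u * invSlope δ u ^ 2
    + skew δ u ^ 3 - 2 * δ * skew δ u ^ 2 + 2 * δ * invSlope δ u ^ 2)

/-- The derivative `dN/dH` of `curvature` along the potential. -/
noncomputable def curvatureDeriv (δ u : ℝ) : ℝ :=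
  (1 / (1 - δ ^ 2)) * (-2 * invSlope δ u ^ 2 * curvature δ u - 6 * skew δ u * skewDeriv δ u
    + 4 * δ * skewDeriv δ u)

variable {δ u : ℝ}

lemma one_sub_sq_pos (h0 : 0 ≤ δ) (h1 : δ < 1) : 0 < 1 - δ ^ 2 := by nlinarith

lemma cosGap_pos (h0 : 0 ≤ δ) (h1 : δ < 1) (hu : u ∈ Ioo 0 π) : 0 < cosGap δ u := by
  have hu0 := hu.1
  exact sub_pos.2 (cos_lt_cos_of_nonneg_of_le_pi (by positivity) hu.2.le
    (mul_lt_of_lt_one_left hu0 h1))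

lemma cosGap_eq_two_mul_sin_mul_sin (δ u : ℝ) :
    cosGap δ u = 2 * sin ((1 + δ) / 2 * u) * sin ((1 - δ) / 2 * u) := by
  rw [cosGap, cos_sub_cos, show (δ * u - u) / 2 = -((1 - δ) / 2 * u) by ring, sin_neg,
    show (δ * u + u) / 2 = (1 + δ) / 2 * u by ring]
  ring

lemma sineRatio_pos (h0 : 0 ≤ δ) (h1 : δ < 1) (hu : u ∈ Ioo 0 π) : 0 < sineRatio δ u :=
  div_pos (mul_pos (one_sub_sq_pos h0 h1) (sin_pos_of_mem_Ioo hu)) (cosGap_pos h0 h1 hu)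

lemma mul_sin_le_sin_mul (h0 : 0 ≤ δ) (h1 : δ < 1) (hu : u ∈ Ioo 0 π) :
    δ * sin u ≤ sin (δ * u) := by
  simpa using strictConcaveOn_sin_Icc.concaveOn.2 (left_mem_Icc.2 pi_pos.le)
    (Ioo_subset_Icc_self hu) (sub_nonneg.2 h1.le) h0 (by ring)

lemma skewRatio_nonneg (h0 : 0 ≤ δ) (h1 : δ < 1) (hu : u ∈ Ioo 0 π) : 0 ≤ skewRatio δ u :=
  div_nonneg (sub_nonneg.2 (mul_sin_le_sin_mul h0 h1 hu)) (cosGap_pos h0 h1 hu).le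

lemma invSlope_pos (h0 : 0 ≤ δ) (h1 : δ < 1) (hu : u ∈ Ioo 0 π) : 0 < invSlope δ u :=
  div_pos (sineRatio_pos h0 h1 hu) (by positivity)

lemma slope_pos (h0 : 0 ≤ δ) (h1 : δ < 1) (hu : u ∈ Ioo 0 π) : 0 < slope δ u :=
  div_pos (one_sub_sq_pos h0 h1) (mul_pos two_pos (invSlope_pos h0 h1 hu))

lemma skew_nonneg (h0 : 0 ≤ δ) (h1 : δ < 1) (hu : u ∈ Ioo 0 π) : 0 ≤ skew δ u :=
  mul_nonneg (invSlope_pos h0 h1 hu).le (skewRatio_nonneg h0 h1 hu)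

lemma hasDerivAt_cosGap (h0 : 0 ≤ δ) (h1 : δ < 1) (hu : u ∈ Ioo 0 π) :
    HasDerivAt (cosGap δ) ((sineRatio δ u - δ * skewRatio δ u) * cosGap δ u) u := by
  have hC := cosGap_pos h0 h1 hu
  have h : HasDerivAt (fun u => cos (δ * u)) (-sin (δ * u) * (δ * 1)) u :=
    ((hasDerivAt_id u).const_mul δ).cos
  refine (h.sub (hasDerivAt_cos u)).congr_deriv ?_
  unfold sineRatio skewRatio
  field_simp
  ring

lemma hasDerivAt_skewRatio (h0 : 0 ≤ δ) (h1 : δ < 1) (hu : u ∈ Ioo 0 π) :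
    HasDerivAt (skewRatio δ)
      (δ * (1 + skewRatio δ u ^ 2) - skewRatio δ u * sineRatio δ u) u := by
  have hC := cosGap_pos h0 h1 hu
  have h : HasDerivAt (fun u => sin (δ * u)) (cos (δ * u) * (δ * 1)) u :=
    ((hasDerivAt_id u).const_mul δ).sin
  refine ((h.sub ((hasDerivAt_sin u).const_mul δ)).div
    (hasDerivAt_cosGap h0 h1 hu) hC.ne').congr_deriv ?_
  simp only [Pi.sub_apply]
  unfold skewRatio sineRatio
  field_simp
  unfold cosGap
  ring

lemma hasDerivAt_sineRatio (h0 : 0 ≤ δ) (h1 : δ < 1) (hu : u ∈ Ioo 0 π) :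
    HasDerivAt (sineRatio δ)
      (-(1 / 2) * ((1 - δ ^ 2) * (1 + skewRatio δ u ^ 2) + sineRatio δ u ^ 2)) u := by
  have hC := cosGap_pos h0 h1 hu
  refine (((hasDerivAt_sin u).const_mul (1 - δ ^ 2)).div
    (hasDerivAt_cosGap h0 h1 hu) hC.ne').congr_deriv ?_
  unfold skewRatio sineRatio
  field_simp
  have hsq : sin u ^ 2 - sin (δ * u) ^ 2 - cosGap δ u ^ 2 = 2 * cos u * cosGap δ u := by
    unfold cosGap
    linear_combination sin_sq_add_cos_sq u - sin_sq_add_cos_sq (δ * u)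
  linear_combination (-(1 - δ ^ 2)) * hsq

lemma hasDerivAt_invSlope (h0 : 0 ≤ δ) (h1 : δ < 1) (hu : u ∈ Ioo 0 π) :
    HasDerivAt (invSlope δ) (-(1 - δ ^ 2) / 2 * curvature δ u) u := by
  have hδ := one_sub_sq_pos h0 h1
  have hD : 0 < 1 + skewRatio δ u ^ 2 := by positivity
  refine ((hasDerivAt_sineRatio h0 h1 hu).div
    (((hasDerivAt_skewRatio h0 h1 hu).pow 2).const_add 1) hD.ne').congr_deriv ?_
  unfold curvature skew invSlope
  simp only [Pi.pow_apply]
  field_simp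
  push_cast
  ring

lemma hasDerivAt_skew (h0 : 0 ≤ δ) (h1 : δ < 1) (hu : u ∈ Ioo 0 π) :
    HasDerivAt (skew δ) (skewDeriv δ u * slope δ u) u := by
  have hδ := one_sub_sq_pos h0 h1
  have hV := invSlope_pos h0 h1 hu
  refine ((hasDerivAt_invSlope h0 h1 hu).mul (hasDerivAt_skewRatio h0 h1 hu)).congr_deriv ?_
  have hW : sineRatio δ u = invSlope δ u * (1 + skewRatio δ u ^ 2) := by
    unfold invSlope
    field_simp
  unfold skewDeriv slope curvature skew
  rw [hW]
  field_simp
  ring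

lemma hasDerivAt_slope (h0 : 0 ≤ δ) (h1 : δ < 1) (hu : u ∈ Ioo 0 π) :
    HasDerivAt (slope δ) (curvature δ u * slope δ u ^ 2) u := by
  have hV := invSlope_pos h0 h1 hu
  refine ((hasDerivAt_const u (1 - δ ^ 2)).div
    ((hasDerivAt_invSlope h0 h1 hu).const_mul 2) (by positivity)).congr_deriv ?_
  unfold slope
  field_simp
  ring

lemma hasDerivAt_curvature (h0 : 0 ≤ δ) (h1 : δ < 1) (hu : u ∈ Ioo 0 π) :
    HasDerivAt (curvature δ) (curvatureDeriv δ u * slope δ u) u := by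
  have hδ := one_sub_sq_pos h0 h1
  have hV := invSlope_pos h0 h1 hu
  have hp := hasDerivAt_skew h0 h1 hu
  refine ((((((hasDerivAt_invSlope h0 h1 hu).pow 2).sub ((hp.pow 2).const_mul 3)).add
    (hp.const_mul (4 * δ))).div_const (1 - δ ^ 2)).const_add 1).congr_deriv ?_
  unfold curvatureDeriv slope
  field_simp
  push_cast
  ring

lemma curvatureDeriv_add_nonneg (h0 : 0 ≤ δ) (h1 : δ < 1) (hu : u ∈ Ioo 0 π) :
    0 ≤ curvatureDeriv δ u + 2 * curvature δ u * (curvature δ u - 1) := by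
  have hδ := one_sub_sq_pos h0 h1
  have hp := skew_nonneg h0 h1 hu
  calc 0 ≤ 2 / (1 - δ ^ 2) ^ 2 * (2 * δ * (1 - δ ^ 2) * skew δ u
      + invSlope δ u ^ 2 * (4 * (δ - skew δ u) ^ 2 + 2 * skew δ u ^ 2)
      + skew δ u ^ 2 * (4 / 3 * δ ^ 2 + 2 / 3 * (4 * δ - 3 * skew δ u) ^ 2)) := by positivity
    _ = _ := by
      unfold curvatureDeriv curvature skewDeriv
      field_simp
      ring

lemma sin_mul_sub_mul_sin_le (h0 : 0 ≤ δ) (hu0 : 0 < u) :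
    sin (δ * u) - δ * sin u ≤ δ * u ^ 3 / 4 := by
  have h3 : u - u ^ 3 / 4 ≤ sin u := by
    linarith [sin_gt_sub_cube hu0, pow_pos hu0 3]
  calc sin (δ * u) - δ * sin u ≤ δ * u - δ * (u - u ^ 3 / 4) :=
        sub_le_sub (sin_le (mul_nonneg h0 hu0.le)) (mul_le_mul_of_nonneg_left h3 h0)
    _ = δ * u ^ 3 / 4 := by ring

lemma tendsto_cosGap_div_sq (δ : ℝ) :
    Tendsto (fun u => cosGap δ u / u ^ 2) (𝓝[>] 0) (𝓝 ((1 - δ ^ 2) / 2)) := by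
  have h := ((tendsto_sin_mul_div ((1 + δ) / 2)).mul
    (tendsto_sin_mul_div ((1 - δ) / 2))).const_mul 2
  convert h using 2
  · rw [cosGap_eq_two_mul_sin_mul_sin]
    ring
  · ring

lemma tendsto_skewRatio (h0 : 0 ≤ δ) (h1 : δ < 1) :
    Tendsto (skewRatio δ) (𝓝[>] 0) (𝓝 0) := by
  have hnum : Tendsto (fun u => (sin (δ * u) - δ * sin u) / u ^ 2) (𝓝[>] 0) (𝓝 0) := by
    have hlin : Tendsto (fun u => δ / 4 * u) (𝓝[>] 0) (𝓝 0) := by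
      simpa using tendsto_id_nhdsGT_zero.const_mul (δ / 4)
    refine tendsto_of_tendsto_of_tendsto_of_le_of_le' tendsto_const_nhds hlin ?_ ?_ <;>
      filter_upwards [Ioo_mem_nhdsGT pi_pos] with u hu
    · exact div_nonneg (sub_nonneg.2 (mul_sin_le_sin_mul h0 h1 hu)) (sq_nonneg u)
    · rw [div_le_iff₀ (pow_pos hu.1 2)]
      exact (sin_mul_sub_mul_sin_le h0 hu.1).trans_eq (by ring)
  have hδ := (one_sub_sq_pos h0 h1).ne'
  have h := hnum.div (tendsto_cosGap_div_sq δ) (by positivity)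
  rw [zero_div] at h
  refine h.congr' ?_
  filter_upwards [self_mem_nhdsWithin] with u hu
  exact div_div_div_cancel_right₀ (pow_pos hu 2).ne' _ _

lemma tendsto_sin_nhdsGT_zero : Tendsto sin (𝓝[>] 0) (𝓝 0) :=
  (continuous_sin.tendsto' 0 0 sin_zero).mono_left nhdsWithin_le_nhds

lemma tendsto_cosGap (δ : ℝ) : Tendsto (cosGap δ) (𝓝[>] 0) (𝓝 0) := by
  have : Continuous (cosGap δ) := by unfold cosGap; fun_prop
  exact (this.tendsto' 0 0 (by simp [cosGap])).mono_left nhdsWithin_le_nhds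

lemma tendsto_slope (h0 : 0 ≤ δ) (h1 : δ < 1) : Tendsto (slope δ) (𝓝[>] 0) (𝓝 0) := by
  have hgap : Tendsto (fun u => cosGap δ u / sin u) (𝓝[>] 0) (𝓝 0) := by
    have h := ((tendsto_cosGap_div_sq δ).mul tendsto_id_nhdsGT_zero).div (tendsto_sin_mul_div 1)
      one_ne_zero
    rw [mul_zero, zero_div] at h
    refine h.congr' ?_
    filter_upwards [self_mem_nhdsWithin] with u (hu : 0 < u)
    simp only [Pi.div_apply, one_mul]
    field_simp
  have h := ((((tendsto_skewRatio h0 h1).pow 2).const_add 1).const_mul (1 / 2)).mul hgap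
  rw [mul_zero] at h
  refine h.congr' ?_
  filter_upwards [Ioo_mem_nhdsGT pi_pos] with u hu
  have hC := cosGap_pos h0 h1 hu
  have hs := sin_pos_of_mem_Ioo hu
  have hδ := one_sub_sq_pos h0 h1
  unfold slope invSlope sineRatio
  field_simp

/-- `(2δ(1 + D²) - 3DW) C^{3/2}`, whose sign is that of `2δ/3 - p`. The factor `C^{3/2}` makes it
increasing. -/
noncomputable def skewGap (δ u : ℝ) : ℝ :=
  (2 * δ * (1 + skewRatio δ u ^ 2) - 3 * skewRatio δ u * sineRatio δ u)
    * (cosGap δ u * √(cosGap δ u))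

lemma hasDerivAt_skewGap (h0 : 0 ≤ δ) (h1 : δ < 1) (hu : u ∈ Ioo 0 π) :
    HasDerivAt (skewGap δ) (cosGap δ u * √(cosGap δ u) *
      (3 / 2 * (1 - δ ^ 2) * skewRatio δ u * (1 + skewRatio δ u ^ 2)
        + 1 / 2 * δ * skewRatio δ u ^ 2 * sineRatio δ u
        + δ ^ 2 * skewRatio δ u * (1 + skewRatio δ u ^ 2))) u := by
  have hC := cosGap_pos h0 h1 hu
  have hD := hasDerivAt_skewRatio h0 h1 hu
  have hW := hasDerivAt_sineRatio h0 h1 hu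
  have hC' := hasDerivAt_cosGap h0 h1 hu
  refine (((((hD.pow 2).const_add 1).const_mul (2 * δ)).sub ((hD.const_mul 3).mul hW)).mul
    (hC'.mul (hC'.sqrt hC.ne'))).congr_deriv ?_
  simp only [Pi.pow_apply, Pi.mul_apply, Pi.sub_apply]
  obtain ⟨c, hc, hcC⟩ : ∃ c, 0 < c ∧ cosGap δ u = c ^ 2 :=
    ⟨√(cosGap δ u), sqrt_pos.2 hC, (sq_sqrt hC.le).symm⟩
  rw [hcC, sqrt_sq hc.le]
  field_simp
  push_cast
  ring

lemma tendsto_skewGap (h0 : 0 ≤ δ) (h1 : δ < 1) : Tendsto (skewGap δ) (𝓝[>] 0) (𝓝 0) := by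
  have hD := tendsto_skewRatio h0 h1
  have hC := tendsto_cosGap δ
  have h := (((((hD.pow 2).const_add 1).const_mul (2 * δ)).mul hC).sub
    ((hD.mul tendsto_sin_nhdsGT_zero).const_mul (3 * (1 - δ ^ 2)))).mul hC.sqrt
  rw [sqrt_zero, mul_zero (_ - _)] at h
  refine h.congr' ?_
  filter_upwards [Ioo_mem_nhdsGT pi_pos] with u hu
  have hWC : sineRatio δ u * cosGap δ u = (1 - δ ^ 2) * sin u :=
    div_mul_cancel₀ _ (cosGap_pos h0 h1 hu).ne'
  unfold skewGap
  linear_combination (3 * skewRatio δ u * √(cosGap δ u)) * hWC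

lemma skew_le (h0 : 0 ≤ δ) (h1 : δ < 1) (hu : u ∈ Ioo 0 π) : skew δ u ≤ 2 * δ / 3 := by
  have hgap : 0 ≤ skewGap δ u := by
    refine le_of_hasDerivAt_nonneg_of_tendsto (fun u hu => hasDerivAt_skewGap h0 h1 hu) ?_
      (tendsto_skewGap h0 h1) hu
    intro u hu
    have := one_sub_sq_pos h0 h1
    have := cosGap_pos h0 h1 hu
    have := skewRatio_nonneg h0 h1 hu
    have := sineRatio_pos h0 h1 hu
    positivity
  have hC := cosGap_pos h0 h1 hu
  have hbracket := nonneg_of_mul_nonneg_left hgap (by positivity)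
  have hskew : skew δ u = skewRatio δ u * sineRatio δ u / (1 + skewRatio δ u ^ 2) := by
    unfold skew invSlope
    ring
  rw [hskew, div_le_iff₀ (by positivity)]
  linarith

end SlopeAndCurvature

section CurvatureBounds

/-- `s = (1 - δ²) / (1 - δ² + 4H'²)`, which compares with `exp (-2 (H - H(0⁺)))`. -/
noncomputable def decay (δ u : ℝ) : ℝ := (1 - δ ^ 2) / (1 - δ ^ 2 + 4 * slope δ u ^ 2)

/-- The part `(4δp - 3p²) / (1 - δ²)` of `curvature` due to `skew`. -/
noncomputable def skewExcess (δ u : ℝ) : ℝ :=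
  (4 * δ * skew δ u - 3 * skew δ u ^ 2) / (1 - δ ^ 2)

variable {δ u : ℝ}

lemma decay_pos (h0 : 0 ≤ δ) (h1 : δ < 1) : 0 < decay δ u := by
  have := one_sub_sq_pos h0 h1
  unfold decay
  positivity

lemma one_sub_decay (h0 : 0 ≤ δ) (h1 : δ < 1) :
    1 - decay δ u = 4 * slope δ u ^ 2 / (1 - δ ^ 2 + 4 * slope δ u ^ 2) := by
  have := one_sub_sq_pos h0 h1
  unfold decay
  field_simp
  ring

lemma decay_lt_one (h0 : 0 ≤ δ) (h1 : δ < 1) (hu : u ∈ Ioo 0 π) : decay δ u < 1 := by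
  have := one_sub_sq_pos h0 h1
  have := slope_pos h0 h1 hu
  rw [← sub_pos, one_sub_decay h0 h1]
  positivity

lemma tendsto_decay (h0 : 0 ≤ δ) (h1 : δ < 1) : Tendsto (decay δ) (𝓝[>] 0) (𝓝 1) := by
  have hδ := (one_sub_sq_pos h0 h1).ne'
  have h := (tendsto_const_nhds (x := 1 - δ ^ 2)).div
    ((((tendsto_slope h0 h1).pow 2).const_mul 4).const_add (1 - δ ^ 2)) (by simpa)
  rwa [zero_pow two_ne_zero, mul_zero, add_zero, div_self hδ] at h

lemma hasDerivAt_decay (h0 : 0 ≤ δ) (h1 : δ < 1) (hu : u ∈ Ioo 0 π) :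
    HasDerivAt (decay δ)
      (-2 * decay δ u * (curvature δ u * (1 - decay δ u)) * slope δ u) u := by
  have hδ := one_sub_sq_pos h0 h1
  have hden : 0 < 1 - δ ^ 2 + 4 * slope δ u ^ 2 := by positivity
  refine ((hasDerivAt_const u (1 - δ ^ 2)).div ((((hasDerivAt_slope h0 h1 hu).pow 2).const_mul
    4).const_add (1 - δ ^ 2)) hden.ne').congr_deriv ?_
  rw [one_sub_decay h0 h1]
  unfold decay
  simp only [Pi.pow_apply]
  field_simp
  push_cast
  ring

lemma invSlope_sq_eq (h0 : 0 ≤ δ) (h1 : δ < 1) (hu : u ∈ Ioo 0 π) :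
    invSlope δ u ^ 2 = (1 - δ ^ 2) * decay δ u / (1 - decay δ u) := by
  have := one_sub_sq_pos h0 h1
  have := invSlope_pos h0 h1 hu
  rw [one_sub_decay h0 h1]
  unfold decay slope
  field_simp
  ring

lemma curvature_mul_one_sub_decay (h0 : 0 ≤ δ) (h1 : δ < 1) (hu : u ∈ Ioo 0 π) :
    curvature δ u * (1 - decay δ u) = 1 + skewExcess δ u * (1 - decay δ u) := by
  have := (one_sub_sq_pos h0 h1).ne'
  have := (sub_pos.2 (decay_lt_one h0 h1 hu)).ne'
  unfold curvature skewExcess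
  rw [invSlope_sq_eq h0 h1 hu]
  field_simp
  ring

lemma skewExcess_nonneg (h0 : 0 ≤ δ) (h1 : δ < 1) (hu : u ∈ Ioo 0 π) : 0 ≤ skewExcess δ u := by
  refine div_nonneg ?_ (one_sub_sq_pos h0 h1).le
  nlinarith [skew_nonneg h0 h1 hu, skew_le h0 h1 hu]

lemma skewExcess_le (h0 : 0 ≤ δ) (h1 : δ ≤ 3 / 5) : skewExcess δ u ≤ 3 / 4 := by
  unfold skewExcess
  rw [div_le_iff₀ (one_sub_sq_pos h0 (by linarith))]
  nlinarith [sq_nonneg (2 * δ - 3 * skew δ u)]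

lemma one_le_curvature_mul (h0 : 0 ≤ δ) (h1 : δ < 1) (hu : u ∈ Ioo 0 π) :
    1 ≤ curvature δ u * (1 - decay δ u) := by
  rw [curvature_mul_one_sub_decay h0 h1 hu]
  linarith [mul_nonneg (skewExcess_nonneg h0 h1 hu) (sub_pos.2 (decay_lt_one h0 h1 hu)).le]

lemma curvature_mul_le (h0 : 0 ≤ δ) (h1 : δ ≤ 3 / 5) (hu : u ∈ Ioo 0 π) :
    curvature δ u * (1 - decay δ u) ≤ 1 + 3 / 4 * (1 - decay δ u) := by
  have h1' : δ < 1 := by linarith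
  rw [curvature_mul_one_sub_decay h0 h1' hu]
  linarith [mul_le_mul_of_nonneg_right (skewExcess_le (u := u) h0 h1)
    (sub_pos.2 (decay_lt_one h0 h1' hu)).le]

lemma one_lt_curvature (h0 : 0 ≤ δ) (h1 : δ < 1) (hu : u ∈ Ioo 0 π) : 1 < curvature δ u := by
  have hs0 : 0 < decay δ u := decay_pos h0 h1
  by_contra! h
  linarith [one_le_curvature_mul h0 h1 hu,
    mul_le_mul_of_nonneg_right h (sub_pos.2 (decay_lt_one h0 h1 hu)).le]

lemma curvatureDeriv_mul_one_sub_decay_sq (h0 : 0 ≤ δ) (h1 : δ < 1) (hu : u ∈ Ioo 0 π) :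
    -curvatureDeriv δ u * (1 - decay δ u) ^ 2
        - 2 * decay δ u * (curvature δ u * (1 - decay δ u))
      = 2 * (1 - decay δ u) / (1 - δ ^ 2) * (2 * δ - 3 * skew δ u)
        * (skew δ u * (1 + skew δ u * (2 * δ - skew δ u) / (1 - δ ^ 2)) * (1 - decay δ u)
          - (2 * δ - 3 * skew δ u) * decay δ u) := by
  have := (one_sub_sq_pos h0 h1).ne'
  have := (sub_pos.2 (decay_lt_one h0 h1 hu)).ne'
  unfold curvatureDeriv curvature skewDeriv
  rw [invSlope_sq_eq h0 h1 hu]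
  field_simp
  ring

lemma curvatureDeriv_lower_bound (h0 : 0 ≤ δ) (h1 : δ ≤ 3 / 5) (hu : u ∈ Ioo 0 π) :
    (1 + decay δ u) * (-curvatureDeriv δ u * (1 - decay δ u) ^ 2
        - 2 * decay δ u * (curvature δ u * (1 - decay δ u)))
      ≤ 3 / 2 * (1 - decay δ u) ^ 2 * (curvature δ u * (1 - decay δ u) - 1) := by
  have h1' : δ < 1 := by linarith
  have hδ := one_sub_sq_pos h0 h1'
  have hs : 0 < 1 - decay δ u := sub_pos.2 (decay_lt_one h0 h1' hu)
  have hs0 : 0 < decay δ u := decay_pos h0 h1'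
  have hp := skew_nonneg h0 h1' hu
  have hy : 0 ≤ 2 * δ - 3 * skew δ u := by linarith [skew_le h0 h1' hu]
  have hfactor : 1 + skew δ u * (2 * δ - skew δ u) / (1 - δ ^ 2) ≤ 3 / 2 := by
    rw [← le_sub_iff_add_le', div_le_iff₀ hδ]
    nlinarith
  rw [curvatureDeriv_mul_one_sub_decay_sq h0 h1' hu, curvature_mul_one_sub_decay h0 h1' hu]
  generalize decay δ u = s at *
  generalize hpy : 2 * δ - 3 * skew δ u = y at *
  calc _ ≤ (1 + s) * (2 * (1 - s) / (1 - δ ^ 2) * y * (skew δ u * (3 / 2) * (1 - s) - y * s)) := by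
        gcongr
    _ ≤ (1 + s) * (2 * (1 - s) / (1 - δ ^ 2) * y * (skew δ u * (3 / 2) * (1 - s) - y * s))
        + (1 - s) / (1 - δ ^ 2) * (1 / 2 * (2 * s * y - 3 * (1 - s) * skew δ u) ^ 2
          + 2 * s * y ^ 2) := le_add_of_nonneg_right (by positivity)
    _ = _ := by
        subst hpy
        unfold skewExcess
        field_simp
        ring

end CurvatureBounds

section Comparison

variable {δ u : ℝ} {Z : ℝ → ℝ}

lemma nonneg_of_hasDerivAt_slope (h0 : 0 ≤ δ) (h1 : δ < 1)
    (hZ : ∀ u ∈ Ioo 0 π, HasDerivAt Z (slope δ u) u) (hZ0 : Tendsto Z (𝓝[>] 0) (𝓝 0))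
    (hu : u ∈ Ioo 0 π) : 0 ≤ Z u :=
  le_of_hasDerivAt_nonneg_of_tendsto hZ (fun _ hu => (slope_pos h0 h1 hu).le) hZ0 hu

lemma le_mul_slope (h0 : 0 ≤ δ) (h1 : δ < 1)
    (hZ : ∀ u ∈ Ioo 0 π, HasDerivAt Z (slope δ u) u) (hZ0 : Tendsto Z (𝓝[>] 0) (𝓝 0))
    (hu : u ∈ Ioo 0 π) : Z u ≤ u * slope δ u := by
  have hderiv : ∀ u ∈ Ioo 0 π, HasDerivAt (fun u => u * slope δ u - Z u)
      (u * (curvature δ u * slope δ u ^ 2)) u := fun u hu =>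
    (((hasDerivAt_id u).mul (hasDerivAt_slope h0 h1 hu)).sub (hZ u hu)).congr_deriv (by simp)
  have hlim : Tendsto (fun u => u * slope δ u - Z u) (𝓝[>] 0) (𝓝 0) := by
    simpa using (tendsto_id_nhdsGT_zero.mul (tendsto_slope h0 h1)).sub hZ0
  have h := le_of_hasDerivAt_nonneg_of_tendsto hderiv (fun v hv => ?_) hlim hu
  · exact sub_nonneg.1 h
  · have := hv.1
    have := one_lt_curvature h0 h1 hv
    positivity

lemma decay_le_exp (h0 : 0 ≤ δ) (h1 : δ < 1)
    (hZ : ∀ u ∈ Ioo 0 π, HasDerivAt Z (slope δ u) u) (hZ0 : Tendsto Z (𝓝[>] 0) (𝓝 0))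
    (hu : u ∈ Ioo 0 π) : decay δ u ≤ exp (-(2 * Z u)) := by
  have hderiv : ∀ u ∈ Ioo 0 π, HasDerivAt (fun u => decay δ u * exp (2 * Z u))
      (-(2 * decay δ u * slope δ u * exp (2 * Z u) * (curvature δ u * (1 - decay δ u) - 1))) u :=
    fun u hu => ((hasDerivAt_decay h0 h1 hu).mul ((hZ u hu).const_mul 2).exp).congr_deriv (by ring)
  have hlim : Tendsto (fun u => decay δ u * exp (2 * Z u)) (𝓝[>] 0) (𝓝 1) := by
    simpa using (tendsto_decay h0 h1).mul (hZ0.const_mul 2).rexp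
  have h := le_of_hasDerivAt_nonpos_of_tendsto hderiv (fun v hv => ?_) hlim hu
  · rwa [exp_neg, ← one_div, le_div_iff₀ (exp_pos _)]
  · have := sub_nonneg.2 (one_le_curvature_mul h0 h1 hv)
    have := slope_pos h0 h1 hv
    have : 0 < decay δ v := decay_pos h0 h1
    exact neg_nonpos.2 (by positivity)

lemma tendsto_one_sub_inv_curvature (h0 : 0 ≤ δ) (h1 : δ < 1) :
    Tendsto (fun u => 1 - (curvature δ u)⁻¹) (𝓝[>] 0) (𝓝 1) := by
  refine tendsto_of_tendsto_of_tendsto_of_le_of_le' (tendsto_decay h0 h1) tendsto_const_nhds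
    ?_ ?_ <;> filter_upwards [Ioo_mem_nhdsGT pi_pos] with u hu
  · have hN : 0 < curvature δ u := one_pos.trans (one_lt_curvature h0 h1 hu)
    linarith [(inv_le_iff_one_le_mul₀' hN).2 (one_le_curvature_mul h0 h1 hu)]
  · linarith [inv_pos.2 (one_pos.trans (one_lt_curvature h0 h1 hu))]

lemma exp_le_one_sub_inv_curvature (h0 : 0 ≤ δ) (h1 : δ < 1)
    (hZ : ∀ u ∈ Ioo 0 π, HasDerivAt Z (slope δ u) u) (hZ0 : Tendsto Z (𝓝[>] 0) (𝓝 0))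
    (hu : u ∈ Ioo 0 π) : exp (-(2 * Z u)) ≤ 1 - (curvature δ u)⁻¹ := by
  have hderiv : ∀ u ∈ Ioo 0 π, HasDerivAt (fun u => (1 - (curvature δ u)⁻¹) * exp (2 * Z u))
      ((curvatureDeriv δ u + 2 * curvature δ u * (curvature δ u - 1)) / curvature δ u ^ 2
        * slope δ u * exp (2 * Z u)) u := by
    intro u hu
    have hN : curvature δ u ≠ 0 := (one_pos.trans (one_lt_curvature h0 h1 hu)).ne'
    refine ((((hasDerivAt_curvature h0 h1 hu).inv hN).const_sub 1).mul
      ((hZ u hu).const_mul 2).exp).congr_deriv ?_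
    simp only [Pi.inv_apply]
    field_simp
  have hlim : Tendsto (fun u => (1 - (curvature δ u)⁻¹) * exp (2 * Z u)) (𝓝[>] 0) (𝓝 1) := by
    simpa using (tendsto_one_sub_inv_curvature h0 h1).mul (hZ0.const_mul 2).rexp
  have h := le_of_hasDerivAt_nonneg_of_tendsto hderiv (fun v hv => ?_) hlim hu
  · rwa [exp_neg, ← one_div, div_le_iff₀ (exp_pos _)]
  · have := curvatureDeriv_add_nonneg h0 h1 hv
    have := slope_pos h0 h1 hv
    positivity

lemma one_sub_exp_le_one_sub_decay_rpow (h0 : 0 ≤ δ) (h1 : δ < 1)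
    (hZ : ∀ u ∈ Ioo 0 π, HasDerivAt Z (slope δ u) u) (hZ0 : Tendsto Z (𝓝[>] 0) (𝓝 0))
    (hu : u ∈ Ioo 0 π) {r : ℝ} (hr : 0 ≤ r) :
    1 - exp (-(2 * r * Z u)) ≤ 1 - decay δ u ^ r := by
  rw [show -(2 * r * Z u) = -(2 * Z u) * r by ring, exp_mul]
  exact sub_le_sub_left
    (rpow_le_rpow (decay_pos h0 h1).le (decay_le_exp h0 h1 hZ hZ0 hu) hr) 1

lemma one_le_one_sub_exp_mul_curvature (h0 : 0 ≤ δ) (h1 : δ < 1)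
    (hZ : ∀ u ∈ Ioo 0 π, HasDerivAt Z (slope δ u) u) (hZ0 : Tendsto Z (𝓝[>] 0) (𝓝 0))
    (hu : u ∈ Ioo 0 π) {r : ℝ} (hr : 1 ≤ r) :
    1 ≤ (1 - exp (-(2 * r * Z u))) * curvature δ u := by
  have hN : 0 < curvature δ u := one_pos.trans (one_lt_curvature h0 h1 hu)
  rw [← inv_le_iff_one_le_mul₀ hN]
  have hexp : exp (-(2 * r * Z u)) ≤ exp (-(2 * Z u)) :=
    exp_le_exp.2 (by nlinarith [nonneg_of_hasDerivAt_slope h0 h1 hZ hZ0 hu])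
  linarith [exp_le_one_sub_inv_curvature h0 h1 hZ hZ0 hu]

lemma one_sub_exp_mul_curvature_le (h0 : 0 ≤ δ) (h1 : δ ≤ 3 / 5)
    (hZ : ∀ u ∈ Ioo 0 π, HasDerivAt Z (slope δ u) u) (hZ0 : Tendsto Z (𝓝[>] 0) (𝓝 0))
    (hu : u ∈ Ioo 0 π) {r : ℝ} (hr : 1 ≤ r) :
    (1 - exp (-(2 * r * Z u))) * curvature δ u ≤ 2 * r := by
  have h1' : δ < 1 := by linarith
  have hN : 0 < curvature δ u := one_pos.trans (one_lt_curvature h0 h1' hu)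
  have hs : 0 < decay δ u := decay_pos h0 h1'
  have bernoulli : 1 - decay δ u ^ r ≤ r * (1 - decay δ u) := by
    have h := one_add_mul_self_le_rpow_one_add (s := decay δ u - 1) (by linarith) hr
    rw [add_sub_cancel] at h
    linarith
  calc (1 - exp (-(2 * r * Z u))) * curvature δ u
      ≤ r * (1 - decay δ u) * curvature δ u := by
        gcongr
        exact (one_sub_exp_le_one_sub_decay_rpow h0 h1' hZ hZ0 hu (by linarith)).trans bernoulli
    _ = r * (curvature δ u * (1 - decay δ u)) := by ring
    _ ≤ r * 2 := by
        gcongr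
        linarith [curvature_mul_le h0 h1 hu]
    _ = 2 * r := mul_comm _ _

lemma tilt_inequality_of_hasDerivAt_slope (h0 : 0 ≤ δ) (h1 : δ ≤ 3 / 5)
    (hZ : ∀ u ∈ Ioo 0 π, HasDerivAt Z (slope δ u) u) (hZ0 : Tendsto Z (𝓝[>] 0) (𝓝 0))
    (hu : u ∈ Ioo 0 π) {r : ℝ} (hr1 : 1 ≤ r) (hr2 : r ≤ 5 / 2) {q : ℝ}
    (hq : q = 1 - exp (-(2 * r * Z u))) :
    (q * curvature δ u - 2) ^ 2 ≤ q * curvature δ u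
      + q * (2 * r * (1 - q) * curvature δ u + q * curvatureDeriv δ u) := by
  have h1' : δ < 1 := by linarith
  subst hq
  exact tilt_inequality hr1 hr2 (decay_pos h0 h1') (decay_lt_one h0 h1' hu)
    ⟨one_le_curvature_mul h0 h1' hu, curvature_mul_le h0 h1 hu⟩
    (curvatureDeriv_lower_bound h0 h1 hu) (curvatureDeriv_add_nonneg h0 h1' hu)
    (one_le_one_sub_exp_mul_curvature h0 h1' hZ hZ0 hu hr1)
    (one_sub_exp_le_one_sub_decay_rpow h0 h1' hZ hZ0 hu (by linarith))

end Comparison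

section Kanter

/-- The potential `H` of the Kanter function: up to the factor `1 / (1 - α)` its logarithm. -/
noncomputable def potential (α u : ℝ) : ℝ :=
  α * log (sin (α * u)) + (1 - α) * log (sin ((1 - α) * u)) - log (sin u)

/-- The limit of the potential at `0`. -/
noncomputable def potentialLim (α : ℝ) : ℝ := α * log α + (1 - α) * log (1 - α)

/-- The Kanter (or Zolotarev) function
`a(u) = (sin (α u)) ^ (α / (1 - α)) sin ((1 - α) u) / (sin u) ^ (1 / (1 - α))`, in terms of which
positive `α`-stable densities are mixtures of exponentials. -/
noncomputable def kanter (α u : ℝ) : ℝ := exp (potential α u / (1 - α))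

/-- The limit of the Kanter function at `0`. -/
noncomputable def kanterLim (α : ℝ) : ℝ := exp (potentialLim α / (1 - α))

variable {α u : ℝ}

lemma abs_one_sub_two_mul_lt_one (h0 : 0 < α) (h1 : α < 1) : |1 - 2 * α| < 1 := by
  rw [abs_lt]; constructor <;> linarith

lemma sin_mul_pos (h0 : 0 < α) (h1 : α < 1) (hu : u ∈ Ioc 0 π) : 0 < sin (α * u) :=
  sin_pos_of_mem_Ioo ⟨mul_pos h0 hu.1, by nlinarith [hu.1, hu.2]⟩

lemma sin_one_sub_mul_pos (h0 : 0 < α) (h1 : α < 1) (hu : u ∈ Ioc 0 π) :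
    0 < sin ((1 - α) * u) :=
  sin_mul_pos (sub_pos.2 h1) (by linarith) hu

lemma slope_abs (δ u : ℝ) : slope |δ| u = slope δ u := by
  rcases abs_choice δ with h | h <;> rw [h]
  have hC : cosGap (-δ) u = cosGap δ u := by rw [cosGap, cosGap, neg_mul, cos_neg]
  have hD : skewRatio (-δ) u = -skewRatio δ u := by
    rw [skewRatio, skewRatio, hC, neg_mul, sin_neg]; ring
  simp only [slope, invSlope, sineRatio, hC, hD, neg_sq]

lemma cosGap_one_sub_two_mul (α u : ℝ) :
    cosGap (1 - 2 * α) u = 2 * sin (α * u) * sin ((1 - α) * u) := by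
  rw [cosGap_eq_two_mul_sin_mul_sin]
  ring_nf

lemma skewRatio_one_sub_two_mul (h0 : 0 < α) (h1 : α < 1) (hu : u ∈ Ioo 0 π) :
    skewRatio (1 - 2 * α) u = α * (cos (α * u) / sin (α * u))
      - (1 - α) * (cos ((1 - α) * u) / sin ((1 - α) * u)) := by
  have hA := sin_mul_pos h0 h1 (Ioo_subset_Ioc_self hu)
  have hB := sin_one_sub_mul_pos h0 h1 (Ioo_subset_Ioc_self hu)
  rw [skewRatio, cosGap_one_sub_two_mul, show sin u = sin (α * u + (1 - α) * u) by ring_nf,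
    show (1 - 2 * α) * u = (1 - α) * u - α * u by ring, sin_add, sin_sub]
  field_simp
  ring

lemma slope_one_sub_two_mul (h0 : 0 < α) (h1 : α < 1) (u : ℝ) :
    slope (1 - 2 * α) u = (1 + skewRatio (1 - 2 * α) u ^ 2)
      * (sin (α * u) * sin ((1 - α) * u)) / sin u := by
  have hδ : 1 - (1 - 2 * α) ^ 2 ≠ 0 := by nlinarith [mul_pos h0 (sub_pos.2 h1)]
  rw [slope, invSlope, sineRatio, cosGap_one_sub_two_mul]
  field_simp

lemma hasDerivAt_potential (h0 : 0 < α) (h1 : α < 1) (hu : u ∈ Ioo 0 π) :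
    HasDerivAt (potential α) (slope |1 - 2 * α| u) u := by
  have hA := sin_mul_pos h0 h1 (Ioo_subset_Ioc_self hu)
  have hB := sin_one_sub_mul_pos h0 h1 (Ioo_subset_Ioc_self hu)
  have hs := sin_pos_of_mem_Ioo hu
  have hlog (k : ℝ) (hk : sin (k * u) ≠ 0) :
      HasDerivAt (fun u => log (sin (k * u))) (cos (k * u) * (k * 1) / sin (k * u)) u :=
    ((hasDerivAt_id u).const_mul k).sin.log hk
  refine ((((hlog α hA.ne').const_mul α).add ((hlog _ hB.ne').const_mul (1 - α))).sub
    ((hasDerivAt_sin u).log hs.ne')).congr_deriv ?_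
  rw [slope_abs, slope_one_sub_two_mul h0 h1, skewRatio_one_sub_two_mul h0 h1 hu]
  have hsin : sin u = sin (α * u) * cos ((1 - α) * u) + cos (α * u) * sin ((1 - α) * u) := by
    rw [← sin_add]; ring_nf
  have hcos : cos u = cos (α * u) * cos ((1 - α) * u) - sin (α * u) * sin ((1 - α) * u) := by
    rw [← cos_add]; ring_nf
  rw [hsin] at hs
  rw [hcos, hsin]
  generalize sin (α * u) = A at *
  generalize sin ((1 - α) * u) = B at *
  generalize cos (α * u) = A' at *
  generalize cos ((1 - α) * u) = B' at *
  have := hs.ne'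
  field_simp
  ring

lemma tendsto_potential_nhdsGT_zero (h0 : 0 < α) (h1 : α < 1) :
    Tendsto (potential α) (𝓝[>] 0) (𝓝 (potentialLim α)) := by
  have h := (((tendsto_log_sin_mul_sub_log h0).const_mul α).add
    ((tendsto_log_sin_mul_sub_log (sub_pos.2 h1)).const_mul (1 - α))).sub
    (tendsto_log_sin_mul_sub_log one_pos)
  rw [log_one, sub_zero] at h
  refine h.congr fun u => ?_
  rw [potential, one_mul]
  ring

lemma tendsto_potential_nhdsLT_pi (h0 : 0 < α) (h1 : α < 1) :
    Tendsto (potential α) (𝓝[<] π) atTop := by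
  have hA := (sin_mul_pos h0 h1 ⟨pi_pos, le_rfl⟩).ne'
  have hB := (sin_one_sub_mul_pos h0 h1 ⟨pi_pos, le_rfl⟩).ne'
  have hcont : ContinuousAt
      (fun u => α * log (sin (α * u)) + (1 - α) * log (sin ((1 - α) * u))) π := by
    fun_prop (disch := assumption)
  exact (hcont.tendsto.mono_left nhdsWithin_le_nhds).add_atTop
    (tendsto_neg_atBot_atTop.comp tendsto_log_sin_nhdsLT_pi)

lemma kanter_pos (α u : ℝ) : 0 < kanter α u := exp_pos _

lemma kanterLim_pos (α : ℝ) : 0 < kanterLim α := exp_pos _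

lemma measurable_kanter (α : ℝ) : Measurable (kanter α) := by
  unfold kanter potential
  fun_prop

lemma hasDerivAt_kanter (h0 : 0 < α) (h1 : α < 1) (hu : u ∈ Ioo 0 π) :
    HasDerivAt (kanter α) (kanter α u * (slope |1 - 2 * α| u / (1 - α))) u :=
  ((hasDerivAt_potential h0 h1 hu).div_const _).exp

lemma tendsto_kanter_nhdsGT_zero (h0 : 0 < α) (h1 : α < 1) :
    Tendsto (kanter α) (𝓝[>] 0) (𝓝 (kanterLim α)) :=
  ((tendsto_potential_nhdsGT_zero h0 h1).div_const _).rexp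

lemma tendsto_kanter_nhdsLT_pi (h0 : 0 < α) (h1 : α < 1) :
    Tendsto (kanter α) (𝓝[<] π) atTop :=
  tendsto_exp_atTop.comp ((tendsto_potential_nhdsLT_pi h0 h1).atTop_div_const (sub_pos.2 h1))

lemma monotoneOn_kanter (h0 : 0 < α) (h1 : α < 1) : MonotoneOn (kanter α) (Ioo 0 π) :=
  monotoneOn_Ioo_of_hasDerivAt (fun _ hu => hasDerivAt_kanter h0 h1 hu) fun u hu => by
    have := slope_pos (abs_nonneg _) (abs_one_sub_two_mul_lt_one h0 h1) hu
    have := kanter_pos α u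
    have := sub_pos.2 h1
    positivity

lemma kanterLim_le_kanter (h0 : 0 < α) (h1 : α < 1) (hu : u ∈ Ioo 0 π) :
    kanterLim α ≤ kanter α u :=
  le_of_monotoneOn_of_tendsto (monotoneOn_kanter h0 h1) (tendsto_kanter_nhdsGT_zero h0 h1) hu

lemma tendsto_zero_of_abs_le_kanter (h0 : 0 < α) (h1 : α < 1) {w : ℝ} (hw : 0 < w) {f : ℝ → ℝ}
    {K : ℝ} (hf : ∀ u ∈ Ioo 0 π,
      |f u| ≤ u * (kanter α u * exp (-(kanter α u * w)) * (kanter α u * w + K))) :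
    Tendsto f (𝓝[>] 0) (𝓝 0) ∧ Tendsto f (𝓝[<] π) (𝓝 0) := by
  constructor
  · refine squeeze_zero_norm' (eventually_of_mem (Ioo_mem_nhdsGT pi_pos) hf) ?_
    have ha := tendsto_kanter_nhdsGT_zero h0 h1
    have haw := ha.mul_const w
    simpa using tendsto_id_nhdsGT_zero.mul ((ha.mul haw.neg.rexp).mul (haw.add_const K))
  · refine squeeze_zero_norm' (eventually_of_mem (Ioo_mem_nhdsLT pi_pos) hf) ?_
    have haw : Tendsto (fun u => kanter α u * w) (𝓝[<] π) atTop :=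
      (tendsto_kanter_nhdsLT_pi h0 h1).atTop_mul_const hw
    have hexp (n : ℕ) := (tendsto_pow_mul_exp_neg_atTop_nhds_zero n).comp haw
    have hid : Tendsto (fun u : ℝ => u) (𝓝[<] π) (𝓝 π) := tendsto_id.mono_left nhdsWithin_le_nhds
    have h := hid.mul (((hexp 2).add ((hexp 1).const_mul K)).const_mul w⁻¹)
    simp only [mul_zero, add_zero] at h
    refine h.congr fun u => ?_
    simp only [Function.comp]
    field_simp

end Kanter

section ExpMoment

lemma pow_mul_exp_neg_mul_le {w x : ℝ} (hw : 0 < w) (hx : 0 ≤ x) (k : ℕ) :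
    x ^ k * exp (-(x * w)) ≤ k.factorial / w ^ k := by
  have h := pow_div_factorial_le_exp (x * w) (by positivity) k
  rw [div_le_iff₀ (by positivity), mul_pow] at h
  rw [exp_neg, le_div_iff₀ (by positivity), ← div_eq_mul_inv, div_mul_eq_mul_div,
    div_le_iff₀ (exp_pos _)]
  linarith

variable {Ω : Type*} [MeasurableSpace Ω]

/-- The exponentially tilted moment `G_k(w) = ∫ a ^ k exp (-a w) dμ`. -/
noncomputable def expMoment (μ : Measure Ω) (a : Ω → ℝ) (k : ℕ) (w : ℝ) : ℝ :=
  ∫ u, a u ^ k * exp (-(a u * w)) ∂μ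

variable {μ : Measure Ω} [IsFiniteMeasure μ] {a : Ω → ℝ} {w : ℝ}

lemma integrable_pow_mul_exp (ha : Measurable a) (ha0 : ∀ u, 0 < a u) (hw : 0 < w) (k : ℕ) :
    Integrable (fun u => a u ^ k * exp (-(a u * w))) μ := by
  refine Integrable.of_bound (by fun_prop) (k.factorial / w ^ k) (Eventually.of_forall fun u => ?_)
  have := ha0 u
  rw [norm_of_nonneg (by positivity)]
  exact pow_mul_exp_neg_mul_le hw this.le k

lemma expMoment_pos [NeZero μ] (ha : Measurable a) (ha0 : ∀ u, 0 < a u) (hw : 0 < w) (k : ℕ) :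
    0 < expMoment μ a k w := by
  have hpos (u : Ω) : 0 < a u ^ k * exp (-(a u * w)) :=
    mul_pos (pow_pos (ha0 u) k) (exp_pos _)
  have hsupp : Function.support (fun u => a u ^ k * exp (-(a u * w))) = univ :=
    Function.support_eq_univ fun u => (hpos u).ne'
  rw [expMoment, integral_pos_iff_support_of_nonneg (fun u => (hpos u).le)
    (integrable_pow_mul_exp ha ha0 hw k), hsupp]
  exact Measure.measure_univ_pos.2 (NeZero.ne μ)

lemma hasDerivAt_expMoment (ha : Measurable a) (ha0 : ∀ u, 0 < a u) (hw : 0 < w) (k : ℕ) :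
    HasDerivAt (expMoment μ a k) (-expMoment μ a (k + 1) w) w := by
  have hbound (u : Ω) : ∀ x ∈ Ioi (w / 2),
      ‖-(a u ^ (k + 1) * exp (-(a u * x)))‖ ≤ (k + 1).factorial / (w / 2) ^ (k + 1) := by
    intro x hx
    have := ha0 u
    rw [norm_neg, norm_of_nonneg (by positivity)]
    refine le_trans ?_ (pow_mul_exp_neg_mul_le (half_pos hw) this.le (k + 1))
    gcongr
    exact le_of_lt hx
  have hderiv (u : Ω) : ∀ x ∈ Ioi (w / 2), HasDerivAt (fun x => a u ^ k * exp (-(a u * x)))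
      (-(a u ^ (k + 1) * exp (-(a u * x)))) x := fun x _ =>
    (((hasDerivAt_id x).const_mul (a u)).neg.exp.const_mul (a u ^ k)).congr_deriv
      (by simp only [id, Pi.neg_apply]; ring)
  rw [expMoment, ← integral_neg]
  exact (hasDerivAt_integral_of_dominated_loc_of_deriv_le (Ioi_mem_nhds (half_lt_self hw))
    (Eventually.of_forall fun x => by fun_prop) (integrable_pow_mul_exp ha ha0 hw k)
    (by fun_prop) (Eventually.of_forall hbound) (integrable_const _)
    (Eventually.of_forall hderiv)).2

lemma mul_exp_mul_quadratic_eq (x w κ m v : ℝ) :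
    x * exp (-(x * w)) * ((x * w - κ) ^ 2 - m * (x * w) - v)
      = w ^ 2 * (x ^ 3 * exp (-(x * w))) - (2 * κ + m) * w * (x ^ 2 * exp (-(x * w)))
        + (κ ^ 2 - v) * (x ^ 1 * exp (-(x * w))) := by
  ring

lemma integrable_mul_exp_mul_quadratic (ha : Measurable a) (ha0 : ∀ u, 0 < a u) (hw : 0 < w)
    (κ m v : ℝ) :
    Integrable (fun u => a u * exp (-(a u * w)) * ((a u * w - κ) ^ 2 - m * (a u * w) - v)) μ := by
  have hint := integrable_pow_mul_exp (μ := μ) ha ha0 hw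
  simp only [mul_exp_mul_quadratic_eq]
  exact (((hint 3).const_mul _).sub ((hint 2).const_mul _)).add ((hint 1).const_mul _)

/-- The reverse Cauchy–Schwarz inequality `w² G₃ G₁ ≤ w² G₂² + m w G₁ G₂ + v G₁²` says that `a w`
has variance at most `m E[a w] + v` under the probability measure proportional to `a e^{-aw} μ`. The
variance does not exceed the second moment about any `κ`. -/
lemma expMoment_variance_le [NeZero μ] (ha : Measurable a) (ha0 : ∀ u, 0 < a u) (hw : 0 < w)
    {κ m v : ℝ}
    (h : ∫ u, a u * exp (-(a u * w)) * ((a u * w - κ) ^ 2 - m * (a u * w) - v) ∂μ ≤ 0) :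
    w ^ 2 * expMoment μ a 3 w * expMoment μ a 1 w ≤ w ^ 2 * expMoment μ a 2 w ^ 2
      + m * (w * expMoment μ a 1 w * expMoment μ a 2 w) + v * expMoment μ a 1 w ^ 2 := by
  have hint := integrable_pow_mul_exp (μ := μ) ha ha0 hw
  simp only [mul_exp_mul_quadratic_eq] at h
  rw [integral_add (by exact ((hint 3).const_mul _).sub ((hint 2).const_mul _))
    ((hint 1).const_mul _), integral_sub ((hint 3).const_mul _) ((hint 2).const_mul _),
    integral_const_mul, integral_const_mul, integral_const_mul] at h
  rw [← expMoment, ← expMoment, ← expMoment] at h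
  have hG1 := expMoment_pos (μ := μ) ha ha0 hw 1
  nlinarith [sq_nonneg (w * expMoment μ a 2 w - κ * expMoment μ a 1 w),
    mul_nonpos_of_nonpos_of_nonneg h hG1.le]

lemma hasDerivAt_log_mul_expMoment [NeZero μ] (ha : Measurable a) (ha0 : ∀ u, 0 < a u)
    (hw : 0 < w) : HasDerivAt (fun w => log (w * expMoment μ a 1 w))
      ((1 - w * expMoment μ a 2 w / expMoment μ a 1 w) / w) w := by
  have hG1 := expMoment_pos (μ := μ) ha ha0 hw 1
  refine (((hasDerivAt_id w).mul (hasDerivAt_expMoment ha ha0 hw 1)).log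
    (by simpa using ⟨hw.ne', hG1.ne'⟩)).congr_deriv ?_
  simp only [Pi.mul_apply, id]
  field_simp
  ring

lemma hasDerivAt_mul_expMoment_div [NeZero μ] (ha : Measurable a) (ha0 : ∀ u, 0 < a u)
    (hw : 0 < w) : HasDerivAt (fun w => 1 - w * expMoment μ a 2 w / expMoment μ a 1 w)
      ((w ^ 2 * expMoment μ a 3 w * expMoment μ a 1 w - w ^ 2 * expMoment μ a 2 w ^ 2
        - w * expMoment μ a 1 w * expMoment μ a 2 w) / expMoment μ a 1 w ^ 2 / w) w := by
  have hG1 := expMoment_pos (μ := μ) ha ha0 hw 1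
  refine ((((hasDerivAt_id w).mul (hasDerivAt_expMoment ha ha0 hw 2)).div
    (hasDerivAt_expMoment ha ha0 hw 1) hG1.ne').const_sub 1).congr_deriv ?_
  simp only [Pi.mul_apply, id]
  field_simp
  ring

lemma concaveOn_log_rpow_mul_expMoment [NeZero μ] (ha : Measurable a) (ha0 : ∀ u, 0 < a u)
    {γ : ℝ} (hγ : 0 < γ)
    (hvar : ∀ w, 0 < w → w ^ 2 * expMoment μ a 3 w * expMoment μ a 1 w
      ≤ w ^ 2 * expMoment μ a 2 w ^ 2 + (1 - γ) * (w * expMoment μ a 1 w * expMoment μ a 2 w)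
        + γ * expMoment μ a 1 w ^ 2) :
    ConcaveOn ℝ (Ioi 0) (fun x => log (x ^ (1 / γ) * expMoment μ a 1 (x ^ (1 / γ)))) := by
  refine concaveOn_comp_rpow_of_hasDerivAt (L := fun w => log (w * expMoment μ a 1 w))
    (one_div_nonneg.2 hγ.le)
    (fun w hw => hasDerivAt_log_mul_expMoment ha ha0 hw)
    (fun w hw => hasDerivAt_mul_expMoment_div ha ha0 hw) fun w hw => ?_
  have hG1 := expMoment_pos (μ := μ) ha ha0 hw 1
  have h := hvar w hw
  rw [one_div_mul_eq_div, div_le_iff₀ hγ, div_le_iff₀ (by positivity)]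
  field_simp
  linarith

end ExpMoment

section KanterMoment

/-- The exponential moments `G_k(w) = ∫₀^π a(u) ^ k e^{-a(u) w} du` of the Kanter function `a`. -/
noncomputable abbrev kanterMoment (α : ℝ) (k : ℕ) (w : ℝ) : ℝ :=
  expMoment (volume.restrict (Ioo 0 π)) (kanter α) k w

instance : NeZero (volume.restrict (Ioo 0 π)) :=
  ⟨by simp [Measure.restrict_eq_zero, pi_pos]⟩

variable {α w : ℝ}

lemma kanterMoment_pos (α : ℝ) (hw : 0 < w) (k : ℕ) : 0 < kanterMoment α k w :=
  expMoment_pos (measurable_kanter α) (kanter_pos α) hw k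

lemma kanterMoment_variance_le_of_hasDerivAt (hw : 0 < w) {κ m v : ℝ} {f f' : ℝ → ℝ}
    (hf : ∀ u ∈ Ioo 0 π, HasDerivAt f (f' u) u)
    (hle : ∀ u ∈ Ioo 0 π, kanter α u * exp (-(kanter α u * w))
      * ((kanter α u * w - κ) ^ 2 - m * (kanter α u * w) - v) ≤ f' u)
    (hlim : Tendsto f (𝓝[>] 0) (𝓝 0) ∧ Tendsto f (𝓝[<] π) (𝓝 0)) :
    w ^ 2 * kanterMoment α 3 w * kanterMoment α 1 w ≤ w ^ 2 * kanterMoment α 2 w ^ 2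
      + m * (w * kanterMoment α 1 w * kanterMoment α 2 w) + v * kanterMoment α 1 w ^ 2 := by
  have ha := measurable_kanter α
  refine expMoment_variance_le ha (kanter_pos α) hw (κ := κ) ?_
  simpa using setIntegral_Ioo_le_sub_of_hasDerivAt_of_tendsto pi_pos hf
    (integrable_mul_exp_mul_quadratic ha (kanter_pos α) hw κ m v) hle hlim.1 hlim.2

end KanterMoment

section LargeIndex

/-- `q = 1 - a(0⁺) / a`, where `a` is the Kanter function. -/
noncomputable def tilt (α u : ℝ) : ℝ := 1 - kanterLim α / kanter α u

/-- The function whose boundary values vanish and whose derivative dominates the integrand of the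
variance inequality when `1 / 2 ≤ α ≤ 4 / 5`. -/
noncomputable def tiltPrimitive (α w u : ℝ) : ℝ :=
  (1 - α) * tilt α u / slope |1 - 2 * α| u * (kanter α u * exp (-(kanter α u * w)))
    * ((1 - α) * (tilt α u * curvature |1 - 2 * α| u) - tilt α u * (kanter α u * w) + (5 * α - 4))

variable {α u w : ℝ}

lemma tilt_mul_kanter (α u : ℝ) : tilt α u * kanter α u = kanter α u - kanterLim α := by
  have := (kanter_pos α u).ne'
  rw [tilt]
  field_simp

lemma tilt_eq (h1 : α < 1) (u : ℝ) :
    tilt α u = 1 - exp (-(2 * (1 / (2 * (1 - α))) * (potential α u - potentialLim α))) := by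
  have := (sub_pos.2 h1).ne'
  rw [tilt, kanter, kanterLim, ← exp_sub]
  congr 2
  field_simp
  ring

lemma tilt_nonneg (h0 : 0 < α) (h1 : α < 1) (hu : u ∈ Ioo 0 π) : 0 ≤ tilt α u :=
  sub_nonneg.2 ((div_le_one (kanter_pos α u)).2 (kanterLim_le_kanter h0 h1 hu))

lemma tilt_lt_one (α u : ℝ) : tilt α u < 1 :=
  sub_lt_self 1 (div_pos (kanterLim_pos α) (kanter_pos α u))

lemma hasDerivAt_tilt (h0 : 0 < α) (h1 : α < 1) (hu : u ∈ Ioo 0 π) :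
    HasDerivAt (tilt α) ((1 - tilt α u) * (slope |1 - 2 * α| u / (1 - α))) u := by
  have ha := (kanter_pos α u).ne'
  refine (((hasDerivAt_const u (kanterLim α)).div (hasDerivAt_kanter h0 h1 hu) ha).const_sub
    1).congr_deriv ?_
  rw [tilt]
  field_simp
  ring

lemma hasDerivAt_potential_sub (h0 : 0 < α) (h1 : α < 1) : ∀ u ∈ Ioo 0 π,
    HasDerivAt (fun u => potential α u - potentialLim α) (slope |1 - 2 * α| u) u :=
  fun _ hu => (hasDerivAt_potential h0 h1 hu).sub_const _

lemma tendsto_potential_sub (h0 : 0 < α) (h1 : α < 1) :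
    Tendsto (fun u => potential α u - potentialLim α) (𝓝[>] 0) (𝓝 0) := by
  simpa using (tendsto_potential_nhdsGT_zero h0 h1).sub_const (potentialLim α)

lemma mul_tilt_le_mul_slope (h0 : 0 < α) (h1 : α < 1) (hu : u ∈ Ioo 0 π) :
    (1 - α) * tilt α u ≤ u * slope |1 - 2 * α| u := by
  have := sub_pos.2 h1
  have hexp := add_one_le_exp (-(2 * (1 / (2 * (1 - α))) * (potential α u - potentialLim α)))
  calc (1 - α) * tilt α u
      ≤ (1 - α) * (2 * (1 / (2 * (1 - α))) * (potential α u - potentialLim α)) := by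
        gcongr
        linarith [tilt_eq h1 u]
    _ = potential α u - potentialLim α := by field_simp
    _ ≤ u * slope |1 - 2 * α| u := le_mul_slope (abs_nonneg _) (abs_one_sub_two_mul_lt_one h0 h1)
        (hasDerivAt_potential_sub h0 h1) (tendsto_potential_sub h0 h1) hu

lemma abs_one_sub_two_mul_le (hα : 1 / 2 ≤ α) (hα' : α ≤ 4 / 5) : |1 - 2 * α| ≤ 3 / 5 := by
  rw [abs_le]; constructor <;> linarith

lemma one_le_one_div_two_mul_one_sub (hα : 1 / 2 ≤ α) (h1 : α < 1) :
    1 ≤ 1 / (2 * (1 - α)) := by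
  rw [le_div_iff₀ (by linarith)]; linarith

lemma mul_tilt_mul_curvature_mem_Icc (hα : 1 / 2 ≤ α) (hα' : α ≤ 4 / 5) (hu : u ∈ Ioo 0 π) :
    (1 - α) * (tilt α u * curvature |1 - 2 * α| u) ∈ Icc 0 1 := by
  have h0 : 0 < α := by linarith
  have h1 : α < 1 := by linarith
  have hγ := sub_pos.2 h1
  have hN := one_lt_curvature (abs_nonneg _) (abs_one_sub_two_mul_lt_one h0 h1) hu
  have hq := tilt_nonneg h0 h1 hu
  have h := one_sub_exp_mul_curvature_le (abs_nonneg _) (abs_one_sub_two_mul_le hα hα')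
    (hasDerivAt_potential_sub h0 h1) (tendsto_potential_sub h0 h1) hu
    (one_le_one_div_two_mul_one_sub hα h1)
  rw [← tilt_eq h1] at h
  refine ⟨by positivity, ?_⟩
  calc (1 - α) * (tilt α u * curvature |1 - 2 * α| u) ≤ (1 - α) * (2 * (1 / (2 * (1 - α)))) := by
        gcongr
    _ = 1 := by field_simp

lemma abs_tiltPrimitive_le (hα : 1 / 2 ≤ α) (hα' : α ≤ 4 / 5) (hw : 0 < w) (hu : u ∈ Ioo 0 π) :
    |tiltPrimitive α w u|
      ≤ u * (kanter α u * exp (-(kanter α u * w)) * (kanter α u * w + 3 / 2)) := by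
  have h0 : 0 < α := by linarith
  have h1 : α < 1 := by linarith
  have := sub_pos.2 h1
  have hT := slope_pos (abs_nonneg _) (abs_one_sub_two_mul_lt_one h0 h1) hu
  have ha := kanter_pos α u
  have hq := tilt_nonneg h0 h1 hu
  have hweight : (1 - α) * tilt α u / slope |1 - 2 * α| u ≤ u :=
    (div_le_iff₀ hT).2 (mul_tilt_le_mul_slope h0 h1 hu)
  obtain ⟨hqN0, hqN1⟩ := mul_tilt_mul_curvature_mem_Icc hα hα' hu
  have hqa : tilt α u * (kanter α u * w) ≤ kanter α u * w :=
    mul_le_of_le_one_left (by positivity) (tilt_lt_one α u).le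
  have hfactor : |(1 - α) * (tilt α u * curvature |1 - 2 * α| u) - tilt α u * (kanter α u * w)
      + (5 * α - 4)| ≤ kanter α u * w + 3 / 2 := by
    have : 0 ≤ tilt α u * (kanter α u * w) := by positivity
    rw [abs_le]
    constructor <;> linarith
  have := hu.1
  rw [tiltPrimitive, abs_mul, abs_of_nonneg (by positivity), mul_assoc]
  gcongr

lemma hasDerivAt_tiltPrimitive (h0 : 0 < α) (h1 : α < 1) (hu : u ∈ Ioo 0 π) :
    HasDerivAt (tiltPrimitive α w) (kanter α u * exp (-(kanter α u * w))
      * ((1 - (1 - α) * (tilt α u * curvature |1 - 2 * α| u) - tilt α u * (kanter α u * w))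
          * ((1 - α) * (tilt α u * curvature |1 - 2 * α| u) - tilt α u * (kanter α u * w)
            + (5 * α - 4))
        + (1 - α) * tilt α u * ((1 - tilt α u) * curvature |1 - 2 * α| u
          + (1 - α) * tilt α u * curvatureDeriv |1 - 2 * α| u)
        - tilt α u * (kanter α u * w))) u := by
  have hδ1 := abs_one_sub_two_mul_lt_one h0 h1
  have hT := slope_pos (abs_nonneg _) hδ1 hu
  have hγ := sub_pos.2 h1
  have hq := hasDerivAt_tilt h0 h1 hu
  have ha := hasDerivAt_kanter h0 h1 hu
  have hN := hasDerivAt_curvature (abs_nonneg _) hδ1 hu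
  refine ((((hq.const_mul (1 - α)).div (hasDerivAt_slope (abs_nonneg _) hδ1 hu) hT.ne').mul
    (ha.mul (ha.mul_const w).neg.exp)).mul ((((hq.mul hN).const_mul (1 - α)).sub
      (hq.mul (ha.mul_const w))).add_const (5 * α - 4))).congr_deriv ?_
  simp only [Pi.mul_apply, Pi.div_apply, Pi.neg_apply, Pi.sub_apply]
  generalize slope |1 - 2 * α| u = T at *
  generalize curvature |1 - 2 * α| u = N at *
  generalize curvatureDeriv |1 - 2 * α| u = N' at *
  field_simp
  ring

lemma quadratic_le_deriv_tiltPrimitive (hα : 1 / 2 ≤ α) (hα' : α ≤ 4 / 5) (hw : 0 < w)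
    (hu : u ∈ Ioo 0 π) :
    (kanter α u * w - (kanterLim α * w + (2 * α - 1))) ^ 2 - α * (kanter α u * w) - (1 - α)
      ≤ (1 - (1 - α) * (tilt α u * curvature |1 - 2 * α| u) - tilt α u * (kanter α u * w))
          * ((1 - α) * (tilt α u * curvature |1 - 2 * α| u) - tilt α u * (kanter α u * w)
            + (5 * α - 4))
        + (1 - α) * tilt α u * ((1 - tilt α u) * curvature |1 - 2 * α| u
          + (1 - α) * tilt α u * curvatureDeriv |1 - 2 * α| u)
        - tilt α u * (kanter α u * w) := by
  have h0 : 0 < α := by linarith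
  have h1 : α < 1 := by linarith
  have hγ := sub_pos.2 h1
  have ha := kanter_pos α u
  have htilt := tilt_inequality_of_hasDerivAt_slope (abs_nonneg _) (abs_one_sub_two_mul_le hα hα')
    (hasDerivAt_potential_sub h0 h1) (tendsto_potential_sub h0 h1) hu
    (one_le_one_div_two_mul_one_sub hα h1)
    (by rw [div_le_iff₀ (by positivity)]; linarith) (tilt_eq h1 u)
  have hscaled := mul_le_mul_of_nonneg_left htilt (sq_nonneg (1 - α))
  have hγr : (1 - α) ^ 2 * (2 * (1 / (2 * (1 - α)))) = 1 - α := by field_simp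
  have hlim : kanterLim α * w = (1 - tilt α u) * (kanter α u * w) := by
    linear_combination w * tilt_mul_kanter α u
  have hm : 0 ≤ α * ((1 - tilt α u) * (kanter α u * w)) := by
    have := sub_pos.2 (tilt_lt_one α u)
    positivity
  rw [hlim]
  linear_combination hm + hscaled
    + tilt α u * (1 - tilt α u) * curvature |1 - 2 * α| u * hγr

lemma kanterMoment_variance_le_of_half_le (hα : 1 / 2 ≤ α) (hα' : α ≤ 4 / 5) (hw : 0 < w) :
    w ^ 2 * kanterMoment α 3 w * kanterMoment α 1 w ≤ w ^ 2 * kanterMoment α 2 w ^ 2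
      + α * (w * kanterMoment α 1 w * kanterMoment α 2 w)
        + (1 - α) * kanterMoment α 1 w ^ 2 := by
  have h0 : 0 < α := by linarith
  have h1 : α < 1 := by linarith
  refine kanterMoment_variance_le_of_hasDerivAt (κ := kanterLim α * w + (2 * α - 1)) hw
    (fun u hu => hasDerivAt_tiltPrimitive h0 h1 hu) (fun u hu => ?_)
    (tendsto_zero_of_abs_le_kanter h0 h1 hw fun u hu => abs_tiltPrimitive_le hα hα' hw hu)
  exact mul_le_mul_of_nonneg_left (quadratic_le_deriv_tiltPrimitive hα hα' hw hu)
    (mul_nonneg (kanter_pos α u).le (exp_pos _).le)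

end LargeIndex

section SmallIndex

/-- The primitive `A` of the Kanter function vanishing at `0`. -/
noncomputable def kanterPrim (α u : ℝ) : ℝ := ∫ t in 0..u, kanter α t

/-- The difference `a - A H'`; its monotonicity drives the variance inequality when
`α ≤ 1 / 2`. -/
noncomputable def kanterDefect (α u : ℝ) : ℝ :=
  kanter α u - kanterPrim α u * slope |1 - 2 * α| u

/-- The function whose boundary values vanish and whose derivative dominates the integrand of the
variance inequality when `α ≤ 1 / 2`. -/
noncomputable def primTest (α w κ u : ℝ) : ℝ :=
  (1 - α) * kanterPrim α u * exp (-(kanter α u * w)) * (κ - 1 - kanter α u * w)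

variable {α δ u w κ : ℝ}

lemma one_sub_sq_le_four_mul_slope_mul (h0 : 0 ≤ δ) (h1 : δ < 1) (hu : u ∈ Ioo 0 π) :
    1 - δ ^ 2 ≤ 4 * slope δ u * (curvature δ u * slope δ u) := by
  have h := one_le_curvature_mul h0 h1 hu
  have := one_sub_sq_pos h0 h1
  rw [one_sub_decay h0 h1, ← mul_div_assoc, le_div_iff₀ (by positivity)] at h
  linarith [sq_nonneg (slope δ u)]

lemma tendsto_inv_curvature_mul_slope (h0 : 0 ≤ δ) (h1 : δ < 1) :
    Tendsto (fun u => (curvature δ u * slope δ u)⁻¹) (𝓝[>] 0) (𝓝 0) := by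
  have hδ := one_sub_sq_pos h0 h1
  refine squeeze_zero_norm' (a := fun u => 4 * slope δ u / (1 - δ ^ 2)) ?_ ?_
  · filter_upwards [Ioo_mem_nhdsGT pi_pos] with u hu
    have := slope_pos h0 h1 hu
    have := one_pos.trans (one_lt_curvature h0 h1 hu)
    rw [norm_of_nonneg (by positivity), le_div_iff₀ hδ, inv_mul_le_iff₀ (by positivity), mul_comm]
    exact one_sub_sq_le_four_mul_slope_mul h0 h1 hu
  · simpa using ((tendsto_slope h0 h1).const_mul 4).div_const (1 - δ ^ 2)

lemma norm_kanter_le (h0 : 0 < α) (h1 : α < 1) (hu : u ∈ Ioo 0 π) :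
    ∀ t ∈ Ioc 0 u, ‖kanter α t‖ ≤ kanter α u := fun t ht => by
  rw [norm_of_nonneg (kanter_pos α t).le]
  exact monotoneOn_kanter h0 h1 ⟨ht.1, ht.2.trans_lt hu.2⟩ hu ht.2

lemma hasDerivAt_kanterPrim (h0 : 0 < α) (h1 : α < 1) (hu : u ∈ Ioo 0 π) :
    HasDerivAt (kanterPrim α) (kanter α u) u := by
  have hmeas := measurable_kanter α
  refine intervalIntegral.integral_hasDerivAt_right ?_
    hmeas.stronglyMeasurable.stronglyMeasurableAtFilter (hasDerivAt_kanter h0 h1 hu).continuousAt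
  rw [intervalIntegrable_iff_integrableOn_Ioc_of_le hu.1.le]
  exact Integrable.of_bound hmeas.aestronglyMeasurable _
    ((ae_restrict_iff' measurableSet_Ioc).2 (Eventually.of_forall (norm_kanter_le h0 h1 hu)))

lemma kanterPrim_nonneg (hu : u ∈ Ioo 0 π) : 0 ≤ kanterPrim α u :=
  intervalIntegral.integral_nonneg hu.1.le fun t _ => (kanter_pos α t).le

lemma kanterPrim_le_mul_kanter (h0 : 0 < α) (h1 : α < 1) (hu : u ∈ Ioo 0 π) :
    kanterPrim α u ≤ u * kanter α u := by
  have h := intervalIntegral.norm_integral_le_of_norm_le_const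
    (by rw [uIoc_of_le hu.1.le]; exact norm_kanter_le h0 h1 hu)
  rw [sub_zero, abs_of_pos hu.1, mul_comm] at h
  exact (le_abs_self _).trans h

lemma tendsto_kanterPrim_nhdsGT_zero (h0 : 0 < α) (h1 : α < 1) :
    Tendsto (kanterPrim α) (𝓝[>] 0) (𝓝 0) := by
  refine squeeze_zero' (g := fun u => u * kanter α u) ?_ ?_ ?_
  · filter_upwards [Ioo_mem_nhdsGT pi_pos] with u hu using kanterPrim_nonneg hu
  · filter_upwards [Ioo_mem_nhdsGT pi_pos] with u hu using kanterPrim_le_mul_kanter h0 h1 hu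
  · simpa using tendsto_id_nhdsGT_zero.mul (tendsto_kanter_nhdsGT_zero h0 h1)

lemma curvature_ratio_le_one (h0 : 0 ≤ δ) (h1 : δ < 1) (hu : u ∈ Ioo 0 π) {c : ℝ} (hc : c ≤ 2) :
    c / curvature δ u - curvatureDeriv δ u / curvature δ u ^ 2 - 1 ≤ 1 := by
  have hN := one_pos.trans (one_lt_curvature h0 h1 hu)
  have h := curvatureDeriv_add_nonneg h0 h1 hu
  have := mul_le_mul_of_nonneg_right hc hN.le
  rw [sub_le_iff_le_add, div_sub_div _ _ hN.ne' (by positivity), div_le_iff₀ (by positivity)]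
  nlinarith

lemma hasDerivAt_kanterPrim_sub_div (h0 : 0 < α) (h1 : α < 1) (hu : u ∈ Ioo 0 π) :
    HasDerivAt (fun u => kanterPrim α u
        - α / (1 - α) * kanter α u * (curvature |1 - 2 * α| u * slope |1 - 2 * α| u)⁻¹)
      (kanter α u * (1 - α / (1 - α) * (1 / (1 - α) / curvature |1 - 2 * α| u
        - curvatureDeriv |1 - 2 * α| u / curvature |1 - 2 * α| u ^ 2 - 1))) u := by
  have hγ := sub_pos.2 h1
  have hδ1 := abs_one_sub_two_mul_lt_one h0 h1
  have hT := (slope_pos (abs_nonneg _) hδ1 hu).ne'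
  have hN := (one_pos.trans (one_lt_curvature (abs_nonneg _) hδ1 hu)).ne'
  refine ((hasDerivAt_kanterPrim h0 h1 hu).sub (((hasDerivAt_kanter h0 h1 hu).const_mul
    (α / (1 - α))).mul (((hasDerivAt_curvature (abs_nonneg _) hδ1 hu).mul
      (hasDerivAt_slope (abs_nonneg _) hδ1 hu)).inv (mul_ne_zero hN hT)))).congr_deriv ?_
  simp only [Pi.mul_apply, Pi.inv_apply]
  generalize slope |1 - 2 * α| u = T at *
  generalize curvature |1 - 2 * α| u = N at *
  field_simp
  ring

lemma mul_kanter_le_kanterPrim_mul (h0 : 0 < α) (hα : α ≤ 1 / 2) (hu : u ∈ Ioo 0 π) :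
    α / (1 - α) * kanter α u
      ≤ kanterPrim α u * (curvature |1 - 2 * α| u * slope |1 - 2 * α| u) := by
  have h1 : α < 1 := by linarith
  have hγ := sub_pos.2 h1
  have hδ1 := abs_one_sub_two_mul_lt_one h0 h1
  have hNT : 0 < curvature |1 - 2 * α| u * slope |1 - 2 * α| u :=
    mul_pos (one_pos.trans (one_lt_curvature (abs_nonneg _) hδ1 hu))
      (slope_pos (abs_nonneg _) hδ1 hu)
  have hlim : Tendsto (fun u => kanterPrim α u
      - α / (1 - α) * kanter α u * (curvature |1 - 2 * α| u * slope |1 - 2 * α| u)⁻¹)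
      (𝓝[>] 0) (𝓝 0) := by
    simpa using (tendsto_kanterPrim_nhdsGT_zero h0 h1).sub
      (((tendsto_kanter_nhdsGT_zero h0 h1).const_mul (α / (1 - α))).mul
        (tendsto_inv_curvature_mul_slope (abs_nonneg _) hδ1))
  have key := le_of_hasDerivAt_nonneg_of_tendsto
    (fun u hu => hasDerivAt_kanterPrim_sub_div h0 h1 hu) (fun u hu => ?_) hlim hu
  · rwa [sub_nonneg, mul_inv_le_iff₀ hNT] at key
  · have hratio := curvature_ratio_le_one (abs_nonneg _) hδ1 hu (c := 1 / (1 - α))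
      (by rw [div_le_iff₀ hγ]; linarith)
    have hcoeff : α / (1 - α) ≤ 1 := by rw [div_le_one hγ]; linarith
    have := mul_le_mul_of_nonneg_left hratio (div_pos h0 hγ).le
    exact mul_nonneg (kanter_pos α u).le (by linarith)

lemma hasDerivAt_kanterDefect (h0 : 0 < α) (h1 : α < 1) (hu : u ∈ Ioo 0 π) :
    HasDerivAt (kanterDefect α) (slope |1 - 2 * α| u * (α / (1 - α) * kanter α u
      - kanterPrim α u * (curvature |1 - 2 * α| u * slope |1 - 2 * α| u))) u := by
  refine ((hasDerivAt_kanter h0 h1 hu).sub ((hasDerivAt_kanterPrim h0 h1 hu).mul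
    (hasDerivAt_slope (abs_nonneg _) (abs_one_sub_two_mul_lt_one h0 h1) hu))).congr_deriv ?_
  have := (sub_pos.2 h1).ne'
  generalize slope |1 - 2 * α| u = T
  generalize curvature |1 - 2 * α| u = N
  field_simp
  ring

lemma deriv_kanterDefect_nonpos (h0 : 0 < α) (hα : α ≤ 1 / 2) : ∀ u ∈ Ioo 0 π,
    slope |1 - 2 * α| u * (α / (1 - α) * kanter α u
      - kanterPrim α u * (curvature |1 - 2 * α| u * slope |1 - 2 * α| u)) ≤ 0 := fun _ hu =>
  mul_nonpos_of_nonneg_of_nonpos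
    (slope_pos (abs_nonneg _) (abs_one_sub_two_mul_lt_one h0 (by linarith)) hu).le
    (sub_nonpos.2 (mul_kanter_le_kanterPrim_mul h0 hα hu))

lemma antitoneOn_kanterDefect (h0 : 0 < α) (hα : α ≤ 1 / 2) :
    AntitoneOn (kanterDefect α) (Ioo 0 π) := by
  have h := monotoneOn_Ioo_of_hasDerivAt
    (fun u hu => (hasDerivAt_kanterDefect h0 (by linarith) hu).neg)
    fun u hu => neg_nonneg.2 (deriv_kanterDefect_nonpos h0 hα u hu)
  exact fun u hu v hv huv => neg_le_neg_iff.1 (h hu hv huv)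

lemma kanterDefect_le (h0 : 0 < α) (hα : α ≤ 1 / 2) (hu : u ∈ Ioo 0 π) :
    kanterDefect α u ≤ kanterLim α := by
  have h1 : α < 1 := by linarith
  refine le_of_hasDerivAt_nonpos_of_tendsto (fun u hu => hasDerivAt_kanterDefect h0 h1 hu)
    (deriv_kanterDefect_nonpos h0 hα) ?_ hu
  have := (tendsto_kanter_nhdsGT_zero h0 h1).sub ((tendsto_kanterPrim_nhdsGT_zero h0 h1).mul
    (tendsto_slope (abs_nonneg (1 - 2 * α)) (abs_one_sub_two_mul_lt_one h0 h1)))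
  rwa [zero_mul, sub_zero] at this

lemma hasDerivAt_primTest (h0 : 0 < α) (h1 : α < 1) (hu : u ∈ Ioo 0 π) :
    HasDerivAt (primTest α w κ) (kanter α u * exp (-(kanter α u * w))
      * ((kanter α u - kanterDefect α u) * w * (kanter α u * w - κ)
        - (1 - α) * (kanter α u * w - κ + 1))) u := by
  have ha := hasDerivAt_kanter h0 h1 hu
  refine ((((hasDerivAt_kanterPrim h0 h1 hu).const_mul (1 - α)).mul (ha.mul_const w).neg.exp).mul
    ((ha.mul_const w).const_sub (κ - 1))).congr_deriv ?_
  have := (sub_pos.2 h1).ne'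
  simp only [Pi.mul_apply, Pi.neg_apply, kanterDefect]
  generalize slope |1 - 2 * α| u = T
  field_simp
  ring

lemma abs_primTest_le (h0 : 0 < α) (h1 : α < 1) (hw : 0 < w) (hu : u ∈ Ioo 0 π) :
    |primTest α w κ u|
      ≤ u * (kanter α u * exp (-(kanter α u * w)) * (kanter α u * w + (|κ| + 1))) := by
  have hA := kanterPrim_nonneg (α := α) hu
  have := sub_pos.2 h1
  have haw := mul_pos (kanter_pos α u) hw
  have hprim : (1 - α) * kanterPrim α u ≤ u * kanter α u :=
    (mul_le_of_le_one_left hA (by linarith)).trans (kanterPrim_le_mul_kanter h0 h1 hu)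
  have hfactor : |κ - 1 - kanter α u * w| ≤ kanter α u * w + (|κ| + 1) := by
    rw [abs_le]
    constructor <;> linarith [neg_abs_le κ, le_abs_self κ]
  rw [primTest, abs_mul, abs_of_nonneg (by positivity), ← mul_assoc, ← mul_assoc]
  gcongr
  exact mul_nonneg (mul_pos hu.1 (kanter_pos α u)).le (exp_pos _).le

/-- With `κ = w G₂ / G₁`, the mean of `a w` under `a e^{-a w} du / G₁`, the terms linear in
`a w - κ` integrate to zero. -/
lemma kanterMoment_variance_le_of_le_half (h0 : 0 < α) (hα : α ≤ 1 / 2) (hw : 0 < w) :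
    w ^ 2 * kanterMoment α 3 w * kanterMoment α 1 w ≤ w ^ 2 * kanterMoment α 2 w ^ 2
      + (1 - α) * kanterMoment α 1 w ^ 2 := by
  have h1 : α < 1 := by linarith
  have hG := kanterMoment_pos α hw 1
  obtain ⟨κ, hκ⟩ : ∃ κ, κ * kanterMoment α 1 w = w * kanterMoment α 2 w :=
    ⟨_, div_mul_cancel₀ _ hG.ne'⟩
  have hκlt : ∃ u ∈ Ioo 0 π, κ < kanter α u * w := by
    have h := ((tendsto_kanter_nhdsLT_pi h0 h1).atTop_mul_const hw).eventually_gt_atTop κ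
    exact ((eventually_mem_set.2 (Ioo_mem_nhdsLT pi_pos)).and h).exists
  obtain ⟨C, hC⟩ := exists_mul_sub_nonpos_of_antitoneOn (antitoneOn_kanterDefect h0 hα)
    (fun u hu v hv huv => mul_le_mul_of_nonneg_right (monotoneOn_kanter h0 h1 hu hv huv) hw.le)
    (fun u hu => kanterDefect_le h0 hα hu) hκlt
  have h := kanterMoment_variance_le_of_hasDerivAt (α := α) (κ := κ) (m := w * C - κ + (1 - α))
    (v := 1 - α - (w * C - κ + (1 - α)) * κ) hw
    (fun u hu => hasDerivAt_primTest (κ := κ) h0 h1 hu) (fun u hu => ?_)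
    (tendsto_zero_of_abs_le_kanter h0 h1 hw fun u hu => abs_primTest_le h0 h1 hw hu)
  · linear_combination h - (w * C - κ + (1 - α)) * kanterMoment α 1 w * hκ
  · refine mul_le_mul_of_nonneg_left ?_ (mul_nonneg (kanter_pos α u).le (exp_pos _).le)
    linear_combination w * hC u hu

end SmallIndex

section Concavity

variable {α : ℝ}

lemma kanterMoment_variance_le (h0 : 0 < α) (hα : α ≤ 4 / 5) {w : ℝ} (hw : 0 < w) :
    w ^ 2 * kanterMoment α 3 w * kanterMoment α 1 w ≤ w ^ 2 * kanterMoment α 2 w ^ 2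
      + α * (w * kanterMoment α 1 w * kanterMoment α 2 w)
        + (1 - α) * kanterMoment α 1 w ^ 2 := by
  rcases le_total (1 / 2) α with h | h
  · exact kanterMoment_variance_le_of_half_le h hα hw
  · have : 0 ≤ α * (w * kanterMoment α 1 w * kanterMoment α 2 w) := by
      have := kanterMoment_pos α hw 1
      have := kanterMoment_pos α hw 2
      positivity
    linarith [kanterMoment_variance_le_of_le_half h0 h hw]

lemma concaveOn_log_rpow_mul_kanterMoment (h0 : 0 < α) (hα : α ≤ 4 / 5) :
    ConcaveOn ℝ (Ioi 0) fun x =>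
      log (x ^ (1 / (1 - α)) * kanterMoment α 1 (x ^ (1 / (1 - α)))) := by
  refine concaveOn_log_rpow_mul_expMoment (measurable_kanter α) (kanter_pos α) (by linarith)
    fun w hw => ?_
  rw [sub_sub_cancel]
  exact kanterMoment_variance_le h0 hα hw

lemma logConcaveOn'_of_eq_kanterMoment (h0 : 0 < α) (hα : α ≤ 4 / 5) {f : ℝ → ℝ} {k : ℝ}
    (hk : 0 < k) (hf0 : f 0 = 0) (hf : ∀ x ∈ Ioi 0,
      f x = k * (x ^ (1 / (1 - α)) * kanterMoment α 1 (x ^ (1 / (1 - α))))) :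
    LogConcaveOn' f (Ici 0) := by
  have hG : ∀ x ∈ Ioi (0 : ℝ), 0 < x ^ (1 / (1 - α)) * kanterMoment α 1 (x ^ (1 / (1 - α))) :=
    fun x hx => mul_pos (rpow_pos_of_pos hx _) (kanterMoment_pos α (rpow_pos_of_pos hx _) 1)
  have hpos : ∀ x ∈ Ioi (0 : ℝ), 0 < f x := fun x hx => hf x hx ▸ mul_pos hk (hG x hx)
  have hS : {x ∈ Ici (0 : ℝ) | 0 < f x} = Ioi 0 := by
    ext x
    refine ⟨fun ⟨hx, hfx⟩ => lt_of_le_of_ne (mem_Ici.1 hx) ?_,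
      fun hx => ⟨mem_Ici.2 (le_of_lt hx), hpos x hx⟩⟩
    rintro rfl
    exact hfx.ne' hf0
  refine logConcaveOn'_of_concaveOn_log (convex_Ici 0) (fun x hx => ?_) ?_
  · rcases (show (0 : ℝ) ≤ x from hx).eq_or_lt with rfl | hx
    exacts [hf0.ge, (hpos x hx).le]
  · rw [hS]
    refine ((concaveOn_log_rpow_mul_kanterMoment h0 hα).add_const (log k)).congr fun x hx => ?_
    simp only [Pi.add_apply]
    rw [hf x hx, log_mul hk.ne' (hG x hx).ne', add_comm]

end Concavity

section IntegralRepresentation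

/-- The integrand of Hankel's integral for `φ(-α, 0, -x)` along the two sides of the negative real
axis, at distance `r` from the origin. -/
noncomputable def cutIntegrand (α x r : ℝ) : ℝ :=
  exp (-r) * (exp (-(x * r ^ α) * cos (α * π)) * sin (x * r ^ α * sin (α * π)))

variable {α x : ℝ}

lemma exists_mul_rpow_le_half_add (h0 : 0 < α) (h1 : α < 1) (hx : 0 ≤ x) :
    ∃ K, ∀ r, 0 ≤ r → x * r ^ α ≤ r / 2 + K := by
  refine ⟨(1 - α) * (x * (2 * α) ^ α) ^ (1 / (1 - α)), fun r hr => ?_⟩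
  have hγ := sub_pos.2 h1
  have h := geom_mean_le_arith_mean2_weighted (w₁ := α) (w₂ := 1 - α) (p₁ := r / (2 * α))
    (p₂ := (x * (2 * α) ^ α) ^ (1 / (1 - α))) h0.le hγ.le (by positivity) (by positivity) (by ring)
  rw [← rpow_mul (by positivity), one_div_mul_cancel hγ.ne', rpow_one,
    div_rpow hr (by positivity), div_mul_eq_mul_div, mul_left_comm, ← mul_assoc,
    mul_div_cancel_right₀ _ (by positivity)] at h
  convert h using 2
  field_simp

lemma integrableOn_exp_neg_mul_exp_mul_rpow (h0 : 0 < α) (h1 : α < 1) (hx : 0 ≤ x) :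
    IntegrableOn (fun r => exp (-r) * exp (x * r ^ α)) (Ioi 0) := by
  obtain ⟨K, hK⟩ := exists_mul_rpow_le_half_add h0 h1 hx
  refine Integrable.mono' ((exp_neg_integrableOn_Ioi 0 one_half_pos).const_mul (exp K))
    (by fun_prop) ((ae_restrict_iff' measurableSet_Ioi).2 (Eventually.of_forall fun r hr => ?_))
  rw [norm_of_nonneg (by positivity), ← exp_add, ← exp_add, exp_le_exp]
  linarith [hK r (le_of_lt hr)]

lemma integrableOn_cutIntegrand (h0 : 0 < α) (h1 : α < 1) (hx : 0 ≤ x) :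
    IntegrableOn (cutIntegrand α x) (Ioi 0) := by
  refine Integrable.mono' (integrableOn_exp_neg_mul_exp_mul_rpow h0 h1 hx)
    (by unfold cutIntegrand; fun_prop)
    ((ae_restrict_iff' measurableSet_Ioi).2 (Eventually.of_forall fun r hr => ?_))
  have hy : 0 ≤ x * r ^ α := mul_nonneg hx (rpow_nonneg (le_of_lt hr) α)
  have hexp : -(x * r ^ α) * cos (α * π) ≤ x * r ^ α := by nlinarith [neg_one_le_cos (α * π)]
  rw [cutIntegrand, norm_mul, norm_mul, norm_of_nonneg (exp_pos _).le,
    norm_of_nonneg (exp_pos _).le]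
  gcongr
  exact (mul_le_of_le_one_right (exp_pos _).le (abs_sin_le_one _)).trans (exp_le_exp.2 hexp)

lemma hasSum_pow_div_factorial_mul_sin (y θ : ℝ) :
    HasSum (fun n : ℕ => y ^ n / n.factorial * sin (n * θ))
      (exp (y * cos θ) * sin (y * sin θ)) := by
  have h := Complex.hasSum_im
    (NormedSpace.expSeries_div_hasSum_exp (𝔸 := ℂ) (y * Complex.exp (θ * Complex.I)))
  rw [← Complex.exp_eq_exp_ℂ, Complex.exp_im, Complex.re_ofReal_mul, Complex.im_ofReal_mul,
    Complex.exp_ofReal_mul_I_re, Complex.exp_ofReal_mul_I_im] at h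
  refine h.congr_fun fun n => ?_
  have hterm : (y * Complex.exp (θ * Complex.I)) ^ n / (n.factorial : ℂ)
      = ((y ^ n / n.factorial : ℝ) : ℂ) * Complex.exp (((n * θ : ℝ) : ℂ) * Complex.I) := by
    rw [mul_pow, ← Complex.exp_nat_mul, ← mul_assoc]
    push_cast
    ring
  rw [hterm, Complex.im_ofReal_mul, Complex.exp_ofReal_mul_I_im]

lemma inv_Gamma_neg {s : ℝ} (hs : 0 ≤ s) :
    (Gamma (-s))⁻¹ = -(sin (π * s) * Gamma (s + 1) / π) := by
  have h := Gamma_mul_Gamma_one_sub (-s)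
  rw [sub_neg_eq_add, add_comm, mul_neg, sin_neg] at h
  rw [eq_div_of_mul_eq (Gamma_pos_of_pos (by positivity)).ne' h, inv_div, div_div_eq_mul_div]
  ring

lemma integral_exp_neg_mul_pow_mul_rpow (h0 : 0 ≤ α) (y : ℝ) (n : ℕ) :
    ∫ r in Ioi 0, exp (-r) * (y * r ^ α) ^ n = y ^ n * Gamma (n * α + 1) := by
  rw [Gamma_eq_integral (by positivity), ← integral_const_mul]
  refine setIntegral_congr_fun measurableSet_Ioi fun r hr => ?_
  rw [add_sub_cancel_right, mul_comm (n : ℝ) α, rpow_mul (le_of_lt hr), rpow_natCast, mul_pow]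
  ring

lemma hasSum_integral_cutIntegrand (h0 : 0 < α) (h1 : α < 1) (hx : 0 ≤ x) :
    HasSum (fun n : ℕ => ∫ r in Ioi 0,
      exp (-r) * ((-(x * r ^ α)) ^ n / n.factorial * sin (n * (α * π))))
      (∫ r in Ioi 0, -cutIntegrand α x r) := by
  refine hasSum_integral_of_dominated_convergence
    (fun n r => exp (-r) * ((x * r ^ α) ^ n / n.factorial)) (fun n => by fun_prop) (fun n => ?_)
    (Eventually.of_forall fun r => (summable_pow_div_factorial _).mul_left _) ?_
    (Eventually.of_forall fun r => ?_)
  · refine (ae_restrict_iff' measurableSet_Ioi).2 (Eventually.of_forall fun r hr => ?_)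
    have hy : 0 ≤ x * r ^ α := mul_nonneg hx (rpow_nonneg (le_of_lt hr) α)
    rw [norm_mul, norm_of_nonneg (exp_pos _).le, norm_mul, norm_div, norm_pow, norm_neg,
      norm_of_nonneg hy, RCLike.norm_natCast]
    gcongr
    exact mul_le_of_le_one_right (by positivity) (abs_sin_le_one _)
  · refine (integrableOn_exp_neg_mul_exp_mul_rpow h0 h1 hx).congr
      (Eventually.of_forall fun r => ?_)
    simp only
    rw [tsum_mul_left, exp_eq_exp_ℝ, NormedSpace.exp_eq_tsum_div]
  · have h := (hasSum_pow_div_factorial_mul_sin (-(x * r ^ α)) (α * π)).mul_left (exp (-r))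
    rwa [neg_mul (x * r ^ α) (sin (α * π)), sin_neg, mul_neg, mul_neg] at h

lemma wright_term_eq_integral (h0 : 0 ≤ α) (x : ℝ) (n : ℕ) :
    -π * ((-x) ^ n / (n.factorial * Gamma (0 + -α * n)))
      = ∫ r in Ioi 0, exp (-r) * ((-(x * r ^ α)) ^ n / n.factorial * sin (n * (α * π))) := by
  have hint := integral_exp_neg_mul_pow_mul_rpow h0 (-x) n
  have hterm (r : ℝ) : exp (-r) * ((-(x * r ^ α)) ^ n / n.factorial * sin (n * (α * π)))
      = sin (n * (α * π)) / n.factorial * (exp (-r) * (-x * r ^ α) ^ n) := by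
    rw [neg_mul]
    ring
  simp only [hterm]
  rw [integral_const_mul, hint, zero_add, div_mul_eq_div_div, div_eq_mul_inv _ (Gamma _),
    show -α * n = -(n * α) by ring, inv_Gamma_neg (by positivity),
    show π * (n * α) = n * (α * π) by ring]
  have := pi_pos.ne'
  field_simp

lemma wright_neg_eq_integral (h0 : 0 < α) (h1 : α < 1) (hx : 0 ≤ x) :
    wright (-α) 0 (-x) = (∫ r in Ioi 0, cutIntegrand α x r) / π := by
  have h := (hasSum_integral_cutIntegrand h0 h1 hx).tsum_eq
  simp only [← wright_term_eq_integral h0.le] at h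
  rw [tsum_mul_left, integral_neg, ← wright] at h
  rw [eq_div_iff pi_pos.ne']
  linarith

lemma wright_neg_zero_zero (α : ℝ) : wright (-α) 0 (-0) = 0 := by
  have hterm (n : ℕ) : (-0 : ℝ) ^ n / (n.factorial * Gamma (0 + -α * n)) = 0 := by
    rcases n.eq_zero_or_pos with rfl | hn
    · simp
    · rw [neg_zero, zero_pow hn.ne', zero_div]
  simp only [wright, hterm, tsum_zero]

end IntegralRepresentation

section SteepestDescent

/-- The integrand of Hankel's integral for `φ(-α, 0, -x)` in the coordinate `z = log ζ`, in which it
is entire: the cut along the negative `ζ`-axis becomes the pair of lines `Im z = ± π`. -/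
noncomputable def hankelIntegrand (α x : ℝ) (z : ℂ) : ℂ :=
  Complex.exp (z + Complex.exp z - x * Complex.exp (α * z))

/-- The real part of the exponent `e ^ z - x e ^ (α z)` at `z = s + v i`. -/
noncomputable def phaseRe (α x s v : ℝ) : ℝ := exp s * cos v - x * exp (α * s) * cos (α * v)

/-- The imaginary part of the exponent `e ^ z - x e ^ (α z)` at `z = s + v i`. -/
noncomputable def phaseIm (α x s v : ℝ) : ℝ := exp s * sin v - x * exp (α * s) * sin (α * v)

/-- The steepest-descent path: `e ^ z - x e ^ (α z)` is real at `z = s + u i` for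
`s = saddlePath α x u`. -/
noncomputable def saddlePath (α x u : ℝ) : ℝ :=
  1 / (1 - α) * (log x + log (sin (α * u)) - log (sin u))

variable {α x u : ℝ} {P : ℂ → ℂ}

lemma hankelIntegrand_add_mul_I (α x s v : ℝ) : hankelIntegrand α x (s + v * Complex.I) =
    Complex.exp ((s + phaseRe α x s v : ℝ) + (v + phaseIm α x s v : ℝ) * Complex.I) := by
  have hexp (s v : ℝ) :
      Complex.exp (s + v * Complex.I) = exp s * (cos v + sin v * Complex.I) := by
    rw [Complex.exp_add, Complex.exp_mul_I]
    push_cast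
    ring
  have hα : (α * (s + v * Complex.I) : ℂ) = (α * s : ℝ) + (α * v : ℝ) * Complex.I := by
    push_cast
    ring
  rw [hankelIntegrand, hα, hexp, hexp, phaseRe, phaseIm]
  congr 1
  push_cast
  ring

lemma exists_primitive_hankelIntegrand (α x : ℝ) :
    ∃ P : ℂ → ℂ, P 0 = 0 ∧ ∀ z, HasDerivAt P (hankelIntegrand α x z) z := by
  have hdiff : Differentiable ℂ (hankelIntegrand α x) := by
    unfold hankelIntegrand
    fun_prop
  obtain ⟨P, hP0, hP⟩ := hdiff.isExactOn_univ.with_val_at 0 0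
  exact ⟨P, hP0, fun z => hP z (mem_univ z)⟩

lemma hasDerivAt_im_primitive (hP : ∀ z, HasDerivAt P (hankelIntegrand α x z) z) {s v : ℝ → ℝ}
    {s' v' t : ℝ} (hs : HasDerivAt s s' t) (hv : HasDerivAt v v' t) :
    HasDerivAt (fun t => (P (s t + v t * Complex.I)).im)
      (exp (s t + phaseRe α x (s t) (v t)) * (s' * sin (v t + phaseIm α x (s t) (v t))
        + v' * cos (v t + phaseIm α x (s t) (v t)))) t := by
  have hpath : HasDerivAt (fun t => (s t + v t * Complex.I : ℂ)) (s' + v' * Complex.I) t :=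
    hs.ofReal_comp.add (hv.ofReal_comp.mul_const _)
  refine (Complex.imCLM.hasFDerivAt.comp_hasDerivAt t
    (HasDerivAt.scomp t (hP _) hpath)).congr_deriv ?_
  rw [hankelIntegrand_add_mul_I, smul_eq_mul, Complex.imCLM_apply, Complex.mul_im,
    Complex.exp_re, Complex.exp_im]
  simp only [Complex.add_re, Complex.ofReal_re, Complex.mul_re, Complex.I_re, mul_zero,
    Complex.ofReal_im, Complex.I_im, mul_one, sub_self, add_zero, Complex.ofReal_add,
    Complex.add_im, Complex.mul_im, zero_add]
  ring

lemma im_primitive_ofReal (hP0 : P 0 = 0) (hP : ∀ z, HasDerivAt P (hankelIntegrand α x z) z)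
    (s : ℝ) : (P s).im = 0 := by
  have hderiv (t : ℝ) : HasDerivAt (fun t : ℝ => (P (t + (0 : ℝ) * Complex.I)).im) 0 t :=
    (hasDerivAt_im_primitive hP (hasDerivAt_id t) (hasDerivAt_const t 0)).congr_deriv
      (by simp [phaseIm])
  have h := is_const_of_deriv_eq_zero (fun t => (hderiv t).differentiableAt)
    (fun t => (hderiv t).deriv) s 0
  simpa [hP0] using h

lemma abs_im_primitive_sub_le (hP : ∀ z, HasDerivAt P (hankelIntegrand α x z) z) {s v B : ℝ}
    (hv : v ∈ Icc 0 π) (hB : ∀ t ∈ Icc v π, exp (s + phaseRe α x s t) ≤ B) :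
    |(P (s + π * Complex.I)).im - (P (s + v * Complex.I)).im| ≤ B * π := by
  have hvπ : v ∈ Icc v π := ⟨le_rfl, hv.2⟩
  have hB0 : 0 ≤ B := (exp_pos _).le.trans (hB v hvπ)
  have hderiv : ∀ t ∈ Icc v π, HasDerivWithinAt (fun t : ℝ => (P (s + t * Complex.I)).im)
      (exp (s + phaseRe α x s t) * cos (t + phaseIm α x s t)) (Icc v π) t := fun t _ =>
    ((hasDerivAt_im_primitive hP (hasDerivAt_const t s) (hasDerivAt_id t)).congr_deriv
      (by simp)).hasDerivWithinAt
  have hle := (convex_Icc v π).norm_image_sub_le_of_norm_hasDerivWithin_le hderiv (C := B)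
    (fun t ht => ?_) hvπ ⟨hv.2, le_rfl⟩
  · refine hle.trans (mul_le_mul_of_nonneg_left ?_ hB0)
    rw [norm_of_nonneg (sub_nonneg.2 hv.2)]
    exact sub_le_self π hv.1
  · rw [norm_mul, norm_of_nonneg (exp_pos _).le]
    exact (mul_le_of_le_one_right (exp_pos _).le (abs_cos_le_one _)).trans (hB t ht)

lemma phaseRe_le (hx : 0 ≤ x) (α s t : ℝ) :
    phaseRe α x s t ≤ exp s * cos t + x * exp s ^ α := by
  have : 0 ≤ x * exp (s * α) := by positivity
  rw [phaseRe, ← exp_mul, mul_comm α s]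
  nlinarith [neg_one_le_cos (α * t)]

lemma hasDerivAt_im_primitive_log (hP : ∀ z, HasDerivAt P (hankelIntegrand α x z) z) {r : ℝ}
    (hr : 0 < r) :
    HasDerivAt (fun r : ℝ => (P (log r + π * Complex.I)).im) (cutIntegrand α x r) r := by
  have hpow : exp (α * log r) = r ^ α := by rw [rpow_def_of_pos hr, mul_comm]
  refine (hasDerivAt_im_primitive hP (hasDerivAt_log hr.ne') (hasDerivAt_const r π)).congr_deriv ?_
  rw [phaseRe, phaseIm, cutIntegrand, exp_add, exp_log hr, hpow, sin_pi, cos_pi, zero_mul,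
    add_zero, add_comm π, sin_add_pi, mul_zero, zero_sub, sin_neg, neg_neg, mul_neg_one,
    sub_eq_add_neg, exp_add, ← neg_mul]
  field_simp

lemma tendsto_im_primitive_log_nhdsGT_zero (h0 : 0 < α) (hx : 0 ≤ x) (hP0 : P 0 = 0)
    (hP : ∀ z, HasDerivAt P (hankelIntegrand α x z) z) :
    Tendsto (fun r : ℝ => (P (log r + π * Complex.I)).im) (𝓝[>] 0) (𝓝 0) := by
  refine squeeze_zero_norm' (a := fun r => r * exp (r + x * r ^ α) * π) ?_ ?_
  · filter_upwards [self_mem_nhdsWithin] with r hr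
    have hr : 0 < r := hr
    have h := abs_im_primitive_sub_le hP (s := log r) (B := r * exp (r + x * r ^ α))
      ⟨le_rfl, pi_pos.le⟩ fun t _ => ?_
    · simpa [im_primitive_ofReal hP0 hP] using h
    · have hphase := phaseRe_le hx α (log r) t
      rw [exp_log hr] at hphase
      rw [exp_add, exp_log hr]
      gcongr
      exact hphase.trans (by nlinarith [cos_le_one t])
  · have hpow : Tendsto (fun r : ℝ => r ^ α) (𝓝[>] 0) (𝓝 0) :=
      ((continuous_rpow_const h0.le).tendsto' 0 0 (zero_rpow h0.ne')).mono_left nhdsWithin_le_nhds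
    simpa using (tendsto_id_nhdsGT_zero.mul
      (tendsto_id_nhdsGT_zero.add (hpow.const_mul x)).rexp).mul_const π

lemma tendsto_saddlePath_nhdsGT_zero (h0 : 0 < α) (x : ℝ) :
    Tendsto (saddlePath α x) (𝓝[>] 0) (𝓝 (1 / (1 - α) * (log x + log α))) := by
  have h := (((tendsto_log_sin_mul_sub_log h0).const_add (log x)).sub
    (tendsto_log_sin_mul_sub_log one_pos)).const_mul (1 / (1 - α))
  rw [log_one, sub_zero] at h
  refine h.congr fun u => ?_
  rw [saddlePath, one_mul]
  ring

lemma tendsto_saddlePath_nhdsLT_pi (h0 : 0 < α) (h1 : α < 1) (x : ℝ) :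
    Tendsto (saddlePath α x) (𝓝[<] π) atTop := by
  have hA := (sin_mul_pos h0 h1 ⟨pi_pos, le_rfl⟩).ne'
  have hcont : ContinuousAt (fun u => log x + log (sin (α * u))) π := by
    fun_prop (disch := assumption)
  exact ((hcont.tendsto.mono_left nhdsWithin_le_nhds).add_atTop
    (tendsto_neg_atBot_atTop.comp tendsto_log_sin_nhdsLT_pi)).const_mul_atTop
    (one_div_pos.2 (sub_pos.2 h1))

lemma hasDerivAt_saddlePath (h0 : 0 < α) (h1 : α < 1) (x : ℝ) (hu : u ∈ Ioo 0 π) :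
    HasDerivAt (saddlePath α x)
      (1 / (1 - α) * (α * (cos (α * u) / sin (α * u)) - cos u / sin u)) u := by
  have hA := sin_mul_pos h0 h1 (Ioo_subset_Ioc_self hu)
  have hsin := (((hasDerivAt_id u).const_mul α).sin.log hA.ne').const_add (log x)
  refine ((hsin.sub ((hasDerivAt_sin u).log (sin_pos_of_mem_Ioo hu).ne')).const_mul
    (1 / (1 - α))).congr_deriv ?_
  simp only [id]
  ring

lemma exp_saddlePath_mul_sin (h0 : 0 < α) (h1 : α < 1) (hx : 0 < x) (hu : u ∈ Ioo 0 π) :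
    exp (saddlePath α x u) * sin u = x * exp (α * saddlePath α x u) * sin (α * u) := by
  have hA := sin_mul_pos h0 h1 (Ioo_subset_Ioc_self hu)
  have hs := sin_pos_of_mem_Ioo hu
  have := (sub_pos.2 h1).ne'
  rw [← exp_log hx, ← exp_log hA, ← exp_log hs, ← exp_add, ← exp_add, ← exp_add]
  congr 1
  rw [saddlePath, log_exp]
  field_simp
  ring

lemma kanter_mul_rpow_mul_sin (h0 : 0 < α) (h1 : α < 1) (hx : 0 < x) (hu : u ∈ Ioo 0 π) :
    kanter α u * x ^ (1 / (1 - α)) * sin u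
      = x * exp (α * saddlePath α x u) * sin ((1 - α) * u) := by
  have hB := sin_one_sub_mul_pos h0 h1 (Ioo_subset_Ioc_self hu)
  have hs := sin_pos_of_mem_Ioo hu
  have := (sub_pos.2 h1).ne'
  rw [rpow_def_of_pos hx, kanter]
  nth_rw 2 [← exp_log hx]
  rw [← exp_log hB, ← exp_log hs, ← exp_add, ← exp_add, ← exp_add, ← exp_add]
  congr 1
  rw [saddlePath, potential]
  field_simp
  ring

lemma phaseIm_saddlePath (h0 : 0 < α) (h1 : α < 1) (hx : 0 < x) (hu : u ∈ Ioo 0 π) :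
    phaseIm α x (saddlePath α x u) u = 0 :=
  sub_eq_zero.2 (exp_saddlePath_mul_sin h0 h1 hx hu)

lemma sin_one_sub_mul (α u : ℝ) :
    sin ((1 - α) * u) = sin u * cos (α * u) - cos u * sin (α * u) := by
  rw [← sin_sub]
  ring_nf

lemma phaseRe_saddlePath (h0 : 0 < α) (h1 : α < 1) (hx : 0 < x) (hu : u ∈ Ioo 0 π) :
    phaseRe α x (saddlePath α x u) u = -(kanter α u * x ^ (1 / (1 - α))) := by
  have hexp := exp_saddlePath_mul_sin h0 h1 hx hu
  have hkanter := kanter_mul_rpow_mul_sin h0 h1 hx hu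
  rw [sin_one_sub_mul] at hkanter
  refine mul_right_cancel₀ (sin_pos_of_mem_Ioo hu).ne' ?_
  rw [phaseRe]
  linear_combination cos u * hexp + hkanter

lemma hasDerivAt_im_primitive_saddlePath (h0 : 0 < α) (h1 : α < 1) (hx : 0 < x)
    (hP : ∀ z, HasDerivAt P (hankelIntegrand α x z) z) (hu : u ∈ Ioo 0 π) :
    HasDerivAt (fun u : ℝ => (P (saddlePath α x u + u * Complex.I)).im)
      (α / (1 - α) * (kanter α u * x ^ (1 / (1 - α))
        * exp (-(kanter α u * x ^ (1 / (1 - α)))))) u := by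
  have hA := sin_mul_pos h0 h1 (Ioo_subset_Ioc_self hu)
  have hs := sin_pos_of_mem_Ioo hu
  have := (sub_pos.2 h1).ne'
  refine (hasDerivAt_im_primitive hP (hasDerivAt_saddlePath h0 h1 x hu)
    (hasDerivAt_id u)).congr_deriv ?_
  have hexp := (eq_div_iff hs.ne').2 (exp_saddlePath_mul_sin h0 h1 hx hu)
  have hkanter := (eq_div_iff hs.ne').2 (kanter_mul_rpow_mul_sin h0 h1 hx hu)
  simp only [id]
  rw [phaseIm_saddlePath h0 h1 hx hu, phaseRe_saddlePath h0 h1 hx hu, exp_add, hexp, add_zero]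
  generalize exp (-(kanter α u * x ^ (1 / (1 - α)))) = E
  rw [hkanter, sin_one_sub_mul]
  generalize exp (α * saddlePath α x u) = q
  generalize sin u = S at *
  generalize sin (α * u) = T at *
  field_simp
  ring

lemma tendsto_im_primitive_saddlePath_nhdsGT_zero (h0 : 0 < α) (hP0 : P 0 = 0)
    (hP : ∀ z, HasDerivAt P (hankelIntegrand α x z) z) :
    Tendsto (fun u : ℝ => (P (saddlePath α x u + u * Complex.I)).im) (𝓝[>] 0) (𝓝 0) := by
  have hpath : Tendsto (fun u : ℝ => (saddlePath α x u + u * Complex.I : ℂ)) (𝓝[>] 0)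
      (𝓝 ((1 / (1 - α) * (log x + log α) : ℝ) + (0 : ℝ) * Complex.I)) :=
    (tendsto_saddlePath_nhdsGT_zero h0 x).ofReal.add (tendsto_id_nhdsGT_zero.ofReal.mul_const _)
  rw [Complex.ofReal_zero, zero_mul, add_zero] at hpath
  have h := (Complex.continuous_im.tendsto _).comp ((hP _).continuousAt.tendsto.comp hpath)
  rwa [im_primitive_ofReal hP0 hP] at h

lemma abs_im_primitive_sub_le_of_cos_le (hx : 0 ≤ x)
    (hP : ∀ z, HasDerivAt P (hankelIntegrand α x z) z) {s v K : ℝ} (hv : v ∈ Icc 0 π)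
    (hcos : cos v ≤ -(3 / 4)) (hK : x * exp s ^ α ≤ exp s / 2 + K) :
    |(P (s + π * Complex.I)).im - (P (s + v * Complex.I)).im|
      ≤ exp s * exp (K - exp s / 4) * π := by
  refine abs_im_primitive_sub_le hP hv fun t ht => ?_
  have hcost : cos t ≤ -(3 / 4) := (cos_le_cos_of_nonneg_of_le_pi hv.1 ht.2 ht.1).trans hcos
  rw [exp_add]
  gcongr
  nlinarith [phaseRe_le hx α s t, exp_pos s]

lemma tendsto_im_primitive_saddlePath_nhdsLT_pi (h0 : 0 < α) (h1 : α < 1) (hx : 0 ≤ x)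
    (hP : ∀ z, HasDerivAt P (hankelIntegrand α x z) z) {m : ℝ}
    (hm : Tendsto (fun r : ℝ => (P (log r + π * Complex.I)).im) atTop (𝓝 m)) :
    Tendsto (fun u : ℝ => (P (saddlePath α x u + u * Complex.I)).im) (𝓝[<] π) (𝓝 m) := by
  obtain ⟨K, hK⟩ := exists_mul_rpow_le_half_add h0 h1 hx
  have hexp : Tendsto (fun u => exp (saddlePath α x u)) (𝓝[<] π) atTop :=
    tendsto_exp_atTop.comp (tendsto_saddlePath_nhdsLT_pi h0 h1 x)
  have hgap : Tendsto (fun u : ℝ => (P (saddlePath α x u + π * Complex.I)).im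
      - (P (saddlePath α x u + u * Complex.I)).im) (𝓝[<] π) (𝓝 0) := by
    refine squeeze_zero_norm' (a := fun u => exp (saddlePath α x u)
      * exp (K - exp (saddlePath α x u) / 4) * π) ?_ ?_
    · have hcos : ∀ᶠ u in 𝓝[<] π, cos u < -(3 / 4) :=
        ((continuous_cos.tendsto' π (-1) cos_pi).mono_left nhdsWithin_le_nhds).eventually_lt_const
          (by norm_num)
      filter_upwards [hcos, Ioo_mem_nhdsLT pi_pos] with u hu hmem
      exact abs_im_primitive_sub_le_of_cos_le hx hP (Ioo_subset_Icc_self hmem) hu.le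
        (hK _ (exp_pos _).le)
    · simpa using ((tendsto_mul_exp_sub_div_atTop_nhds_zero four_pos K).comp hexp).mul_const π
  have h := (hm.comp hexp).sub hgap
  rw [sub_zero] at h
  refine h.congr fun u => ?_
  simp only [Function.comp, log_exp, sub_sub_cancel]

lemma integral_cutIntegrand_eq (h0 : 0 < α) (h1 : α < 1) (hx : 0 < x) :
    ∫ r in Ioi 0, cutIntegrand α x r
      = α / (1 - α) * (x ^ (1 / (1 - α)) * kanterMoment α 1 (x ^ (1 / (1 - α)))) := by
  obtain ⟨P, hP0, hP⟩ := exists_primitive_hankelIntegrand α x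
  have hcut : ∀ r ∈ Ioi (0 : ℝ), HasDerivAt (fun r : ℝ => (P (log r + π * Complex.I)).im)
      (cutIntegrand α x r) r := fun r hr => hasDerivAt_im_primitive_log hP hr
  have hint := integrableOn_cutIntegrand h0 h1 hx.le
  have hlim := tendsto_limUnder_of_hasDerivAt_of_integrableOn_Ioi hcut hint
  have hpath := fun u hu => hasDerivAt_im_primitive_saddlePath (u := u) h0 h1 hx hP hu
  have hG := integrable_pow_mul_exp (μ := volume.restrict (Ioo 0 π)) (measurable_kanter α)
    (kanter_pos α) (rpow_pos_of_pos hx (1 / (1 - α))) 1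
  generalize x ^ (1 / (1 - α)) = W at *
  have hterm (u : ℝ) : α / (1 - α) * (kanter α u * W * exp (-(kanter α u * W)))
      = α / (1 - α) * (W * (kanter α u ^ 1 * exp (-(kanter α u * W)))) := by ring
  simp only [hterm] at hpath
  have hW : IntegrableOn (fun u => α / (1 - α) * (W * (kanter α u ^ 1 * exp (-(kanter α u * W)))))
      (Ioo 0 π) := (hG.const_mul W).const_mul (α / (1 - α))
  have key := intervalIntegral.integral_eq_sub_of_hasDerivAt_of_tendsto pi_pos hpath
    (by rwa [intervalIntegrable_iff_integrableOn_Ioo_of_le pi_pos.le])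
    (tendsto_im_primitive_saddlePath_nhdsGT_zero h0 hP0 hP)
    (tendsto_im_primitive_saddlePath_nhdsLT_pi h0 h1 hx.le hP hlim)
  rw [integral_Ioi_eq_sub_of_hasDerivAt_of_tendsto hcut hint
    (tendsto_im_primitive_log_nhdsGT_zero h0 hx.le hP0 hP) hlim, ← key,
    intervalIntegral.integral_of_le pi_pos.le, integral_Ioc_eq_integral_Ioo, integral_const_mul,
    integral_const_mul, ← expMoment]

end SteepestDescent

end WrightFunction

/-- Theorem D (b)(i): for every `α ∈ (0, 4/5]`, the function `x ↦ φ(-α, 0, -x)`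
is log-concave on `[0,∞)`. -/
theorem wright_beta_zero_logConcave (α : ℝ) (hα : α ∈ Set.Ioc (0 : ℝ) (4/5 : ℝ)) :
    LogConcaveOn' (fun x => wright (-α) 0 (-x)) (Set.Ici 0) := by
  obtain ⟨h0, h45⟩ := hα
  have h1 : α < 1 := by linarith
  have : 0 < 1 - α := sub_pos.2 h1
  refine WrightFunction.logConcaveOn'_of_eq_kanterMoment h0 h45 (k := α / (1 - α) / Real.pi)
    (by positivity) (WrightFunction.wright_neg_zero_zero α) fun x hx => ?_
  rw [WrightFunction.wright_neg_eq_integral h0 h1 (le_of_lt hx),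
    WrightFunction.integral_cutIntegrand_eq h0 h1 hx]
  ring
end
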